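/- For every fixed integer δ ≥ 2 there exists a constant C = C(δ) > 0 such that for every graph G of minimum degree δ and maximum degree Δ ≥ 2, the inclusion chromatic index of G satisfies χ'_⊂(G) ≤ (1 + 4/δ)·Δ + C·Δ^{2/3}·(log Δ)^4, where log denotes the natural logarithm. -/

import Mathlib

/-!
Fix a threshold `L`, about `Δ ^ (1/3) * log Δ`, and call a vertex light if its degree is below `L`
and heavy otherwise. In a proper colouring it is enough to exclude `S(u) ⊆ S(v)` for edges `uv`
with `u` before `v` in an order refining the degree (`inclusionChromaticIndex_le`), so if one end is
light and the other heavy, `u` is the light one. The edges are split into three kinds, coloured with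
disjoint sets of colours.

*Light edges.* The edges between two light vertices receive a strong colouring with
`2 * L ^ 2 + 1` colours. A light vertex with a light neighbour is thereby separated from all its
heavy neighbours, and also from its light neighbours if it has at least two of them.

*Extra edges.* Every vertex gets a label, a polynomial `g v` of degree less than `k` over the field
with `Q` elements, different vertices at distance at most two getting different
polynomials (`exists_labels`). Extra classes are pairs `(b, a)`, and a heavy `v` keeps the classes on
the graph of `g v` off its edges. A small proportion of the edges is assigned to extra classes such
that every heavy vertex `u` has, for each heavy neighbour `v`, an edge in a class avoided by `v`
(`exists_extra_classes`). Each class is coloured separately and greedily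
(`exists_target_coloring`). This separates heavy vertices from heavy vertices and costs only
lower-order many colours.

*Main edges.* It remains to separate a light vertex `w` all of whose neighbours are heavy from its
neighbours `v`, and a light vertex from its only light neighbour. For `δ = 2` a greedy colouring
with about `3 * Δ` colours suffices (`exists_main_coloring_of_targets`). For `δ = s + 1 ≥ 3`, the
neighbourhood of `w` is partitioned into groups of size between `δ` and `2 * δ`. Main classes are
pairs `(b, f)` with `f` a function to `ZMod s`, and `v` promises to avoid the classes with
`f (g v b) = 0`, a proportion `1 / s` of all. Since a group has at least `s + 1` members, the
classes of its edges can be chosen such that every member avoids the classes it promised to avoid,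
while for every member `v` some other edge of the group lies in a class promised by `v`
(`exists_groupClass_mem_promise`). Each class is then coloured with its own colours by Vizing's
theorem. The edges at a heavy vertex are spread almost evenly over the classes it does not avoid,
so a class has maximum degree about `s / (s - 1) * Δ / m`, where `m` is the number of classes, and
`s / (s - 1) < 1 + 4 / (s + 1)` leaves room for the errors.

Both assignments to classes are obtained by rounding a uniform distribution: a linear-algebraic
argument in the style of Beck and Fiala replaces fractional choices by integral ones and changes
the load of every class at every vertex by a bounded amount only (`exists_rounding`).
-/


/-- The palette of a vertex `v` under an edge colouring `c` of `G`:
the set of colours appearing on edges incident with `v`. -/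
def palette {V : Type*} (G : SimpleGraph V) (c : Sym2 V → ℕ) (v : V) : Set ℕ :=
  {n : ℕ | ∃ u : V, G.Adj v u ∧ c s(v, u) = n}

/-- `c` is a proper edge colouring of `G`: adjacent edges receive distinct colours. -/
def IsProperEdgeColoring {V : Type*} (G : SimpleGraph V) (c : Sym2 V → ℕ) : Prop :=
  ∀ u v w : V, G.Adj u v → G.Adj u w → v ≠ w → c s(u, v) ≠ c s(u, w)

/-- `c` is an inclusion-free colouring of `G`: a proper edge colouring such that
for every edge `uv`, the palette of `u` is not contained in the palette of `v`. -/
def IsInclusionFree {V : Type*} (G : SimpleGraph V) (c : Sym2 V → ℕ) : Prop :=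
  IsProperEdgeColoring G c ∧ ∀ u v : V, G.Adj u v → ¬ palette G c u ⊆ palette G c v

/-- The inclusion chromatic index: the least number of colours admitting an
inclusion-free colouring of `G`. -/
noncomputable def inclusionChromaticIndex {V : Type*} (G : SimpleGraph V) : ℕ :=
  sInf {k : ℕ | ∃ c : Sym2 V → ℕ, IsInclusionFree G c ∧ ∀ e ∈ G.edgeSet, c e < k}

/-! ### Rounding of uniform fractional choices -/

namespace IncFree

open Finset

/-- One step of the rounding: `x` is a fractional choice of an option for every unit, `F` its set of
fractional entries. There is a nonzero direction supported on `F` preserving the unit sums and the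
loads of all requirements `r` that meet more than `2 * t` entries of `F`. At most `F.card / 2` units
are fractional and fewer than `F.card / 2` requirements are that large, so there are fewer linear
conditions than unknowns. -/
theorem exists_rounding_step {U O R : Type*} [Fintype U] [Fintype O] [Fintype R] [DecidableEq U]
    [DecidableEq O] [DecidableEq R] (t : ℕ) (inc : U → O → Finset R)
    (hinc : ∀ u o, (inc u o).card ≤ t) (x : U → O → ℝ)
    (hx0 : ∀ u o, 0 ≤ x u o) (hx1 : ∀ u, ∑ o, x u o = 1)
    (F : Finset (U × O)) (hF : ∀ p, p ∈ F ↔ x p.1 p.2 ≠ 0 ∧ x p.1 p.2 ≠ 1) (hne : F.Nonempty) :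
    ∃ y : U → O → ℝ, (∃ u o, y u o ≠ 0) ∧ (∀ u o, (u, o) ∉ F → y u o = 0) ∧
      (∀ u, ∑ o, y u o = 0) ∧
      ∀ r, 2 * t < (F.filter (fun p => r ∈ inc p.1 p.2)).card →
        ∑ u, ∑ o, (if r ∈ inc u o then y u o else 0) = 0 := by
  classical
  set A : Finset R := univ.filter
    (fun r => 2 * t < (F.filter (fun p => r ∈ inc p.1 p.2)).card) with hA
  set W : Finset U := F.image Prod.fst with hW
  have hWF : 2 * W.card ≤ F.card := by
    rw [card_eq_sum_card_image Prod.fst F, mul_comm, ← smul_eq_mul, ← sum_const]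
    apply sum_le_sum
    intro u hu
    obtain ⟨⟨u', o⟩, hp, rfl⟩ := mem_image.1 hu
    have h1 := (hF _).1 hp
    simp only at h1
    have : ∃ o', o' ≠ o ∧ x u' o' ≠ 0 := by
      by_contra! h
      have h2 := hx1 u'
      rw [sum_eq_single o (fun o' _ ho => h o' ho) (by simp)] at h2
      exact h1.2 h2
    obtain ⟨o', ho', hxo'⟩ := this
    have h2 : x u' o' ≠ 1 := by
      intro h
      have h3 : x u' o + x u' o' ≤ 1 := by
        rw [← hx1 u', ← sum_pair ho'.symm]
        exact sum_le_sum_of_subset_of_nonneg (subset_univ _) (fun i _ _ => hx0 _ _)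
      have := hx0 u' o
      exact h1.1 (by linarith)
    have h3 : ({(u', o), (u', o')} : Finset (U × O)).card = 2 :=
      card_pair (by simp [ho'.symm])
    rw [← h3]
    apply card_le_card
    intro p hp'
    simp only [mem_insert, mem_singleton] at hp'
    rcases hp' with rfl | rfl
    · simpa using hp
    · simp [hF, hxo', h2]
  have hAF : A.card * (2 * t + 1) ≤ t * F.card := by
    calc A.card * (2 * t + 1) ≤ ∑ r ∈ A, (F.filter (fun p => r ∈ inc p.1 p.2)).card := by
          rw [← smul_eq_mul, ← sum_const]
          apply sum_le_sum
          intro r hr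
          simpa [hA] using hr
      _ ≤ ∑ r, (F.filter (fun p => r ∈ inc p.1 p.2)).card :=
          sum_le_sum_of_subset (subset_univ _)
      _ = ∑ p ∈ F, (univ.filter (fun r => r ∈ inc p.1 p.2)).card :=
          sum_card_bipartiteAbove_eq_sum_card_bipartiteBelow _
      _ ≤ ∑ p ∈ F, t := by
          apply sum_le_sum
          intro p _
          simpa using hinc p.1 p.2
      _ = t * F.card := by rw [sum_const, smul_eq_mul, mul_comm]
  have hcard : W.card + A.card < F.card := by
    have hFpos := hne.card_pos
    by_cases hA0 : A.card = 0
    · omega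
    · have : 2 * A.card < F.card := by
        by_contra! h
        have : t * F.card ≤ t * (2 * A.card) := Nat.mul_le_mul_left _ h
        nlinarith [Nat.pos_of_ne_zero hA0]
      omega
  let φ : (F → ℝ) →ₗ[ℝ] (W ⊕ A → ℝ) :=
    LinearMap.pi (Sum.elim
      (fun u => ∑ p : F, (if p.1.1 = u.1 then (1 : ℝ) else 0) • LinearMap.proj p)
      (fun r => ∑ p : F, (if r.1 ∈ inc p.1.1 p.1.2 then (1 : ℝ) else 0) • LinearMap.proj p))
  have hker : LinearMap.ker φ ≠ ⊥ := by
    apply LinearMap.ker_ne_bot_of_finrank_lt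
    simpa using hcard
  obtain ⟨z, hz, hz0⟩ := (Submodule.ne_bot_iff _).1 hker
  have hz' : φ z = 0 := hz
  let y : U → O → ℝ := fun u o => if h : (u, o) ∈ F then z ⟨(u, o), h⟩ else 0
  have hysum : ∀ (P : U × O → Prop) [DecidablePred P],
      ∑ u, ∑ o, (if P (u, o) then y u o else 0) =
        ∑ p : F, (if P p.1 then (1 : ℝ) else 0) * z p := by
    intro P _
    rw [← Fintype.sum_prod_type' (f := fun u o => if P (u, o) then y u o else 0)]
    rw [← sum_subset (subset_univ F)]
    · rw [← sum_coe_sort F]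
      apply sum_congr rfl
      rintro ⟨⟨u, o⟩, h⟩ _
      simp [y, h]
    · rintro ⟨u, o⟩ _ h
      simp [y, h]
  refine ⟨y, ?_, ?_, ?_, ?_⟩
  · obtain ⟨⟨⟨u, o⟩, h⟩, hp⟩ := Function.ne_iff.1 hz0
    exact ⟨u, o, by simpa [y, h] using hp⟩
  · intro u o h
    simp [y, h]
  · intro u
    by_cases hu : u ∈ W
    · have h1 := congrFun hz' (Sum.inl ⟨u, hu⟩)
      have h2 := hysum (fun p => p.1 = u)
      simp only [φ, LinearMap.pi_apply, Sum.elim_inl, LinearMap.sum_apply, LinearMap.smul_apply,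
        LinearMap.proj_apply, smul_eq_mul, Pi.zero_apply] at h1
      rw [h1] at h2
      rw [← h2, sum_eq_single u]
      · simp
      · intro b _ hb; simp [hb]
      · simp
    · apply sum_eq_zero
      intro o _
      have : (u, o) ∉ F := fun h => hu (mem_image.2 ⟨_, h, rfl⟩)
      simp [y, this]
  · intro r hr
    have hrA : r ∈ A := by simp [hA, hr]
    have h1 := congrFun hz' (Sum.inr ⟨r, hrA⟩)
    have h2 := hysum (fun p => r ∈ inc p.1 p.2)
    simp only [φ, LinearMap.pi_apply, Sum.elim_inr, LinearMap.sum_apply, LinearMap.smul_apply,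
      LinearMap.proj_apply, smul_eq_mul, Pi.zero_apply] at h1
    rw [h2, h1]

/-- Every fractional choice `x` can be rounded to an integral one `f` with an error of at most
`2 * t` in the load of every requirement, if each option contributes to at most `t` requirements.
Moving along the direction of `exists_rounding_step` until an entry vanishes lowers the number of
fractional entries; a requirement changes only once it meets at most `2 * t` of them. -/
theorem exists_rounding {U O R : Type*} [Fintype U] [Fintype O] [Fintype R] [DecidableEq U]
    [DecidableEq O] [DecidableEq R] (t : ℕ) (inc : U → O → Finset R)
    (hinc : ∀ u o, (inc u o).card ≤ t) (x : U → O → ℝ)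
    (hx0 : ∀ u o, 0 ≤ x u o) (hx1 : ∀ u, ∑ o, x u o = 1) :
    ∃ f : U → O, (∀ u, 0 < x u (f u)) ∧ ∀ r,
      |((univ.filter (fun u => r ∈ inc u (f u))).card : ℝ) -
        ∑ u, ∑ o, (if r ∈ inc u o then x u o else 0)| ≤ 2 * t := by
  classical
  induction hn : (univ.filter (fun p : U × O => x p.1 p.2 ≠ 0 ∧ x p.1 p.2 ≠ 1)).card
    using Nat.strong_induction_on generalizing x with
  | _ n ih =>
  set F := univ.filter (fun p : U × O => x p.1 p.2 ≠ 0 ∧ x p.1 p.2 ≠ 1) with hFdef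
  have hF : ∀ p, p ∈ F ↔ x p.1 p.2 ≠ 0 ∧ x p.1 p.2 ≠ 1 := by simp [hFdef]
  have hle1 : ∀ u o, x u o ≤ 1 := fun u o => by
    rw [← hx1 u]; exact single_le_sum (fun o _ => hx0 u o) (mem_univ o)
  -- a unit with a coordinate equal to one has no other support
  have hone : ∀ u o o', x u o = 1 → 0 < x u o' → o' = o := by
    intro u o o' h h'
    by_contra hne
    have h3 : x u o + x u o' ≤ 1 := by
      rw [← hx1 u, ← sum_pair (Ne.symm hne)]
      exact sum_le_sum_of_subset_of_nonneg (subset_univ _) (fun i _ _ => hx0 _ _)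
    linarith
  -- rows with few floating entries are automatically fine
  have hfew : ∀ f : U → O, (∀ u, 0 < x u (f u)) → ∀ r,
      (F.filter (fun p => r ∈ inc p.1 p.2)).card ≤ 2 * t →
      |((univ.filter (fun u => r ∈ inc u (f u))).card : ℝ) -
        ∑ u, ∑ o, (if r ∈ inc u o then x u o else 0)| ≤ 2 * t := by
    intro f hf r hr
    have h1 : ((univ.filter (fun u => r ∈ inc u (f u))).card : ℝ) =
        ∑ u, ∑ o, (if r ∈ inc u o then (if f u = o then (1 : ℝ) else 0) else 0) := by
      rw [card_filter]
      push_cast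
      apply sum_congr rfl
      intro u _
      rw [sum_eq_single (f u)]
      · simp
      · intro b _ hb; simp [hb.symm]
      · simp
    rw [h1, ← sum_sub_distrib]
    simp_rw [← sum_sub_distrib]
    rw [← Fintype.sum_prod_type' (f := fun u o =>
      (if r ∈ inc u o then (if f u = o then (1 : ℝ) else 0) else 0) -
        (if r ∈ inc u o then x u o else 0))]
    calc _ ≤ ∑ p : U × O, |(if r ∈ inc p.1 p.2 then (if f p.1 = p.2 then (1 : ℝ) else 0) else 0) -
        (if r ∈ inc p.1 p.2 then x p.1 p.2 else 0)| := abs_sum_le_sum_abs _ _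
      _ ≤ ∑ p : U × O, (if p ∈ F ∧ r ∈ inc p.1 p.2 then (1 : ℝ) else 0) := by
        apply sum_le_sum
        rintro ⟨u, o⟩ _
        simp only
        by_cases hri : r ∈ inc u o
        · simp only [hri, if_true, and_true, hF]
          by_cases h0 : x u o = 0
          · have : f u ≠ o := by rintro rfl; exact (hf u).ne' h0
            simp [h0, this]
          · by_cases h11 : x u o = 1
            · have := hone u o _ h11 (hf u)
              simp [h11, this]
            · simp only [h0, h11, ne_eq, not_false_eq_true, and_self, if_true]
              have := hx0 u o
              have := hle1 u o
              rw [abs_le]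
              split_ifs <;> constructor <;> linarith
        · simp [hri]
      _ = ((F.filter (fun p => r ∈ inc p.1 p.2)).card : ℝ) := by
        rw [← natCast_card_filter]
        congr 2
        ext p; simp
      _ ≤ 2 * t := by exact_mod_cast hr
  rcases F.eq_empty_or_nonempty with hemp | hne
  · have : ∀ u, ∃ o, 0 < x u o := by
      intro u
      by_contra! h
      have := hx1 u
      rw [sum_eq_zero (fun o _ => le_antisymm (h o) (hx0 u o))] at this
      norm_num at this
    choose f hf using this
    refine ⟨f, hf, fun r => hfew f hf r ?_⟩
    simp [hemp]
  · obtain ⟨y, ⟨u1, o1, hy1⟩, hyF, hyu, hyr⟩ :=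
      exists_rounding_step t inc hinc x hx0 hx1 F hF hne
    -- entries with negative direction
    set N := univ.filter (fun p : U × O => y p.1 p.2 < 0) with hN
    have hNne : N.Nonempty := by
      by_contra hN0
      have hpos : ∀ o, 0 ≤ y u1 o := by
        intro o
        by_contra! h
        exact hN0 ⟨(u1, o), by simp [hN, h]⟩
      have := (sum_eq_zero_iff_of_nonneg (fun o _ => hpos o)).1 (hyu u1) o1 (mem_univ _)
      exact hy1 this
    obtain ⟨p0, hp0, hmin⟩ := exists_min_image N (fun p => x p.1 p.2 / (-y p.1 p.2)) hNne
    have hp0' : y p0.1 p0.2 < 0 := by simpa [hN] using hp0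
    set θ := x p0.1 p0.2 / (-y p0.1 p0.2) with hθ
    have hθ0 : 0 ≤ θ := div_nonneg (hx0 _ _) (by linarith)
    set x' : U → O → ℝ := fun u o => x u o + θ * y u o with hx'
    have hx'0 : ∀ u o, 0 ≤ x' u o := by
      intro u o
      simp only [hx']
      by_cases h : y u o < 0
      · have h1 := hmin (u, o) (by simp [hN, h])
        simp only at h1
        rw [le_div_iff₀ (by linarith)] at h1
        linarith
      · push Not at h
        have := hx0 u o
        positivity
    have hx'1 : ∀ u, ∑ o, x' u o = 1 := by
      intro u
      simp only [hx', sum_add_distrib, ← mul_sum, hyu, hx1]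
      ring
    have hp0F : p0 ∈ F := by
      by_contra h
      have := hyF p0.1 p0.2 h
      linarith
    have hx'p0 : x' p0.1 p0.2 = 0 := by
      simp only [hx', hθ]
      have : y p0.1 p0.2 ≠ 0 := hp0'.ne
      field_simp
      ring
    have hunch : ∀ p, p ∉ F → x' p.1 p.2 = x p.1 p.2 := by
      intro p hp
      simp [hx', hyF p.1 p.2 hp]
    have hlt : (univ.filter (fun p : U × O => x' p.1 p.2 ≠ 0 ∧ x' p.1 p.2 ≠ 1)).card < n := by
      rw [← hn]
      apply card_lt_card
      rw [ssubset_iff_of_subset]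
      · exact ⟨p0, hp0F, by simp [hx'p0]⟩
      · intro p hp
        by_contra h
        simp only [mem_filter, mem_univ, true_and, hunch p h] at hp
        exact h ((hF p).2 hp)
    obtain ⟨f, hf, hfr⟩ := ih _ hlt x' hx'0 hx'1 rfl
    have hfx : ∀ u, 0 < x u (f u) := by
      intro u
      by_contra! h
      have h0 : x u (f u) = 0 := le_antisymm h (hx0 _ _)
      have h1 : (u, f u) ∉ F := by simp [hF, h0]
      have h2 := hunch _ h1
      have := hf u
      simp only [h0] at h2
      linarith
    refine ⟨f, hfx, fun r => ?_⟩
    by_cases hr : 2 * t < (F.filter (fun p => r ∈ inc p.1 p.2)).card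
    · have h1 := hfr r
      have h2 : ∑ u, ∑ o, (if r ∈ inc u o then x' u o else 0) =
          ∑ u, ∑ o, (if r ∈ inc u o then x u o else 0) := by
        have h3 : ∀ u o, (if r ∈ inc u o then x' u o else 0) =
            (if r ∈ inc u o then x u o else 0) + θ * (if r ∈ inc u o then y u o else 0) := by
          intro u o
          split_ifs <;> simp [hx']
        simp_rw [h3, sum_add_distrib, ← mul_sum]
        rw [hyr r hr]
        ring
      rw [h2] at h1
      exact h1
    · exact hfew f hfx r (by omega)

/-- Rounding of the uniform distribution on the sets `opt u`. -/
theorem exists_uniform_rounding {U O R : Type*} [Fintype U] [Fintype O] [Fintype R]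
    [DecidableEq U] [DecidableEq O] [DecidableEq R] (t : ℕ) (inc : U → O → Finset R)
    (hinc : ∀ u o, (inc u o).card ≤ t) (opt : U → Finset O) (hopt : ∀ u, (opt u).Nonempty) :
    ∃ f : U → O, (∀ u, f u ∈ opt u) ∧ ∀ r,
      |((univ.filter (fun u => r ∈ inc u (f u))).card : ℝ) -
        ∑ u, (((opt u).filter (fun o => r ∈ inc u o)).card : ℝ) / (opt u).card| ≤ 2 * t := by
  obtain ⟨f, hf, hr⟩ := exists_rounding t inc hinc
    (fun u o => if o ∈ opt u then ((opt u).card : ℝ)⁻¹ else 0)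
    (fun u o => by split_ifs <;> positivity)
    (fun u => by
      have : ((opt u).card : ℝ) ≠ 0 := by exact_mod_cast (hopt u).card_pos.ne'
      simp [this])
  refine ⟨f, fun u => ?_, fun r => ?_⟩
  · by_contra h
    have := hf u
    simp [h] at this
  · convert hr r using 5 with u
    rw [div_eq_mul_inv, ← nsmul_eq_mul, ← sum_const, sum_filter,
      ← sum_subset (subset_univ (opt u))]
    · exact sum_congr rfl fun o ho => by simp [ho]
    · intro o _ ho; simp [ho]
end IncFree

/-! ### Vizing's theorem -/

namespace IncFree

open Finset

section Vizing

variable {V K : Type*}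

/-- A partial proper edge colouring of `H`; the value `none` marks uncoloured edges, and all non-edges
are uncoloured. -/
structure IsPartialColoring (H : SimpleGraph V) (c : Sym2 V → Option K) : Prop where
  adj : ∀ v u a, c s(v, u) = some a → H.Adj v u
  inj : ∀ v u w a, c s(v, u) = some a → c s(v, w) = some a → u = w

/-- The colour `a` is missing at `v`. -/
def FreeAt (c : Sym2 V → Option K) (v : V) (a : K) : Prop := ∀ u, c s(v, u) ≠ some a

/-- Consecutive vertices `y`, `z` of a fan with centre `x`: the colour of `xz` is missing at `y`. -/
def FanStep (c : Sym2 V → Option K) (x y z : V) : Prop :=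
  ∃ a, c s(x, z) = some a ∧ FreeAt c y a

/-- Shifting colours along a fan at `x` whose first edge `xy` is uncoloured and whose last vertex
misses a colour `d` that is missing at `x` as well gives a colouring in which `xy` is coloured too. -/
theorem IsPartialColoring.rotate [DecidableEq V] {H : SimpleGraph V} (x : V) (d : K) (ys : List V) :
    ∀ (y : V) (c : Sym2 V → Option K), IsPartialColoring H c → H.Adj x y → c s(x, y) = none →
    (y :: ys).Nodup → (y :: ys).IsChain (FanStep c x) → FreeAt c x d →
    FreeAt c ((y :: ys).getLast (by simp)) d →
    ∃ c' : Sym2 V → Option K, IsPartialColoring H c' ∧ (∀ e, c e ≠ none → c' e ≠ none) ∧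
      c' s(x, y) ≠ none := by
  induction ys with
  | nil =>
    intro y c hc hxy hn _ _ hx hy
    simp only [List.getLast_singleton] at hy
    refine ⟨Function.update c s(x, y) (some d), ⟨?_, ?_⟩, ?_, by simp⟩
    · intro v u a h
      by_cases he : s(v, u) = s(x, y)
      · rwa [← SimpleGraph.mem_edgeSet, he, SimpleGraph.mem_edgeSet]
      · rw [Function.update_of_ne he] at h
        exact hc.adj _ _ _ h
    · intro v u w a h1 h2
      by_cases he1 : s(v, u) = s(x, y) <;> by_cases he2 : s(v, w) = s(x, y)
      · exact Sym2.congr_right.1 (he1.trans he2.symm)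
      · rw [he1, Function.update_self] at h1
        rw [Function.update_of_ne he2] at h2
        cases h1
        rcases Sym2.eq_iff.1 he1 with ⟨rfl, rfl⟩ | ⟨rfl, rfl⟩
        · exact absurd h2 (hx _)
        · exact absurd h2 (hy _)
      · rw [he2, Function.update_self] at h2
        rw [Function.update_of_ne he1] at h1
        cases h2
        rcases Sym2.eq_iff.1 he2 with ⟨rfl, rfl⟩ | ⟨rfl, rfl⟩
        · exact absurd h1 (hx _)
        · exact absurd h1 (hy _)
      · rw [Function.update_of_ne he1] at h1
        rw [Function.update_of_ne he2] at h2
        exact hc.inj _ _ _ _ h1 h2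
    · intro e he
      by_cases h : e = s(x, y)
      · simp [h]
      · rwa [Function.update_of_ne h]
  | cons z zs ih =>
    intro y c hc hxy hn hnd hch hx hl
    rw [List.isChain_cons_cons] at hch
    obtain ⟨⟨a, hza, hya⟩, hch⟩ := hch
    have hxz := hc.adj _ _ _ hza
    have hyz : y ≠ z := by rintro rfl; simp at hnd
    have hexz : s(x, y) ≠ s(x, z) := fun h => hyz (Sym2.congr_right.1 h)
    set c1 : Sym2 V → Option K :=
      Function.update (Function.update c s(x, y) (some a)) s(x, z) none with hc1
    have hc1z : c1 s(x, z) = none := by simp [hc1]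
    have hc1y : c1 s(x, y) = some a := by simp [hc1, hexz]
    have hc1o : ∀ e, e ≠ s(x, y) → e ≠ s(x, z) → c1 e = c e := by
      intro e h1 h2
      simp [hc1, h1, h2]
    -- every colour of `c1` off `xy` is inherited
    have hinh : ∀ e b, c1 e = some b → e ≠ s(x, y) → c e = some b ∧ e ≠ s(x, z) := by
      intro e b h h1
      have h2 : e ≠ s(x, z) := by rintro rfl; rw [hc1z] at h; cases h
      exact ⟨by rw [← hc1o e h1 h2, h], h2⟩
    have hfree : ∀ v b, v ≠ y → v ≠ x → FreeAt c v b → FreeAt c1 v b := by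
      intro v b h1 h2 hf u hu
      have hne : s(v, u) ≠ s(x, y) := by
        intro h
        rcases Sym2.eq_iff.1 h with ⟨rfl, _⟩ | ⟨rfl, _⟩ <;> contradiction
      exact hf u (hinh _ _ hu hne).1
    have hp : IsPartialColoring H c1 := by
      refine ⟨?_, ?_⟩
      · intro v u b h
        by_cases he : s(v, u) = s(x, y)
        · rwa [← SimpleGraph.mem_edgeSet, he, SimpleGraph.mem_edgeSet]
        · exact hc.adj _ _ _ (hinh _ _ h he).1
      · have key : ∀ v u w b, s(v, u) = s(x, y) → s(v, w) ≠ s(x, y) → c1 s(v, u) = some b →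
            c1 s(v, w) = some b → False := by
          intro v u w b he1 he2 h1 h2
          obtain ⟨h2', h3⟩ := hinh _ _ h2 he2
          rw [he1, hc1y] at h1
          cases h1
          rcases Sym2.eq_iff.1 he1 with ⟨rfl, rfl⟩ | ⟨rfl, rfl⟩
          · exact h3 (by rw [hc.inj _ _ _ _ h2' hza])
          · exact hya _ h2'
        intro v u w b h1 h2
        by_cases he1 : s(v, u) = s(x, y) <;> by_cases he2 : s(v, w) = s(x, y)
        · exact Sym2.congr_right.1 (he1.trans he2.symm)
        · exact (key _ _ _ _ he1 he2 h1 h2).elim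
        · exact (key _ _ _ _ he2 he1 h2 h1).elim
        · exact hc.inj _ _ _ _ (hinh _ _ h1 he1).1 (hinh _ _ h2 he2).1
    have hynot : y ∉ z :: zs := (List.nodup_cons.1 hnd).1
    have hnd' := (List.nodup_cons.1 hnd).2
    -- fan vertices differ from the centre
    have hxnot : ∀ v ∈ z :: zs, v ≠ x := by
      intro v hv
      have : ∀ (l : List V) (u : V), (u :: l).IsChain (FanStep c x) → u ≠ x →
          ∀ v ∈ u :: l, v ≠ x := by
        intro l
        induction l with
        | nil => intro u _ hu v hv; simp at hv; exact hv ▸ hu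
        | cons w l ihl =>
          intro u h hu v hv
          rw [List.isChain_cons_cons] at h
          rcases List.mem_cons.1 hv with rfl | hv
          · exact hu
          · obtain ⟨b, hb, _⟩ := h.1
            exact ihl w h.2 (hc.adj _ _ _ hb).ne' v hv
      exact this zs z hch hxz.ne' v hv
    have hch' : (z :: zs).IsChain (FanStep c1 x) := by
      have : ∀ l : List V, (∀ v ∈ l, v ≠ y) → (∀ v ∈ l, v ≠ x) → (z ∉ l.tail) →
          l.IsChain (FanStep c x) → l.IsChain (FanStep c1 x) := by
        intro l
        induction l with
        | nil => intros; simp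
        | cons u l ihl =>
          intro h1 h2 h3 h4
          cases l with
          | nil => simp
          | cons w l =>
            rw [List.isChain_cons_cons] at h4 ⊢
            refine ⟨?_, ihl (fun v hv => h1 v (List.mem_cons_of_mem _ hv))
              (fun v hv => h2 v (List.mem_cons_of_mem _ hv))
              (fun h => h3 (by simp at h ⊢; exact Or.inr h)) h4.2⟩
            obtain ⟨b, hb, hfb⟩ := h4.1
            refine ⟨b, ?_, hfree u b (h1 u (by simp)) (h2 u (by simp)) hfb⟩
            rw [hc1o, hb]
            · intro h
              exact h1 w (by simp) (Sym2.congr_right.1 h)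
            · intro h
              apply h3
              simp [Sym2.congr_right.1 h]
      exact this _ (fun v hv h => hynot (h ▸ hv)) hxnot (by simpa using (List.nodup_cons.1 hnd').1)
        hch
    have hfx : FreeAt c1 x d := by
      intro u hu
      by_cases he : s(x, u) = s(x, y)
      · rw [he, hc1y] at hu
        cases hu
        exact hx _ hza
      · exact hx _ (hinh _ _ hu he).1
    have hlast : FreeAt c1 ((z :: zs).getLast (by simp)) d := by
      apply hfree
      · intro h
        exact hynot (h ▸ List.getLast_mem _)
      · exact hxnot _ (List.getLast_mem _)
      · rwa [List.getLast_cons (by simp)] at hl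
    obtain ⟨c', h1, h2, h3⟩ := ih z c1 hp hxz hc1z hnd' hch' hfx hlast
    refine ⟨c', h1, ?_, h2 _ (by simp [hc1y])⟩
    intro e he
    by_cases h : e = s(x, z)
    · rw [h]; exact h3
    · apply h2
      by_cases h' : e = s(x, y)
      · rw [h', hc1y]; simp
      · rwa [hc1o e h' h]

/-- Exchanges the colours `α` and `β` on all edges with both ends in `S`. -/
noncomputable def kempeSwap (c : Sym2 V → Option K) (α β : K) (S : Set V) :
    Sym2 V → Option K := by
  classical
  exact fun e => if ∀ v ∈ e, v ∈ S then (c e).map (Equiv.swap α β) else c e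

theorem kempeSwap_of_mem [DecidableEq K] {c : Sym2 V → Option K} {α β : K} {S : Set V}
    (hS : ∀ u v, (c s(u, v) = some α ∨ c s(u, v) = some β) → u ∈ S → v ∈ S) {v : V} (hv : v ∈ S)
    (u : V) : kempeSwap c α β S s(v, u) = (c s(v, u)).map (Equiv.swap α β) := by
  classical
  unfold kempeSwap
  split_ifs with h
  · congr!
  · have hu : u ∉ S := by
      intro hu
      apply h
      intro w hw
      rcases Sym2.mem_iff.1 hw with rfl | rfl <;> assumption
    have h1 : ¬ (c s(v, u) = some α ∨ c s(v, u) = some β) := fun h => hu (hS v u h hv)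
    push Not at h1
    cases hcu : c s(v, u) with
    | none => rfl
    | some b =>
      rw [hcu] at h1
      simp only [Option.map_some]
      rw [Equiv.swap_apply_of_ne_of_ne]
      · rintro rfl; exact h1.1 rfl
      · rintro rfl; exact h1.2 rfl

theorem kempeSwap_of_notMem {c : Sym2 V → Option K} {α β : K} {S : Set V} {v : V} (hv : v ∉ S)
    (u : V) : kempeSwap c α β S s(v, u) = c s(v, u) := by
  classical
  unfold kempeSwap
  rw [if_neg]
  intro h
  exact hv (h v (Sym2.mem_mk_left _ _))

theorem IsPartialColoring.kempe [DecidableEq K] {H : SimpleGraph V} {c : Sym2 V → Option K}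
    (hc : IsPartialColoring H c)
    {α β : K} {S : Set V}
    (hS : ∀ u v, (c s(u, v) = some α ∨ c s(u, v) = some β) → u ∈ S → v ∈ S) :
    IsPartialColoring H (kempeSwap c α β S) := by
  refine ⟨?_, ?_⟩
  · intro v u a h
    by_cases hv : v ∈ S
    · rw [kempeSwap_of_mem hS hv] at h
      obtain ⟨b, hb, _⟩ := Option.map_eq_some_iff.1 h
      exact hc.adj _ _ _ hb
    · rw [kempeSwap_of_notMem hv] at h
      exact hc.adj _ _ _ h
  · intro v u w a h1 h2
    by_cases hv : v ∈ S
    · rw [kempeSwap_of_mem hS hv] at h1 h2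
      obtain ⟨b, hb, hb'⟩ := Option.map_eq_some_iff.1 h1
      obtain ⟨b2, hb2, hb2'⟩ := Option.map_eq_some_iff.1 h2
      have : b = b2 := (Equiv.swap α β).injective (hb'.trans hb2'.symm)
      subst this
      exact hc.inj _ _ _ _ hb hb2
    · rw [kempeSwap_of_notMem hv] at h1 h2
      exact hc.inj _ _ _ _ h1 h2

theorem freeAt_kempeSwap_of_mem [DecidableEq K] {c : Sym2 V → Option K} {α β : K} {S : Set V}
    (hS : ∀ u v, (c s(u, v) = some α ∨ c s(u, v) = some β) → u ∈ S → v ∈ S) {v : V} (hv : v ∈ S)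
    {a : K} (h : FreeAt c v (Equiv.swap α β a)) : FreeAt (kempeSwap c α β S) v a := by
  intro u hu
  rw [kempeSwap_of_mem hS hv] at hu
  obtain ⟨b, hb, rfl⟩ := Option.map_eq_some_iff.1 hu
  rw [Equiv.swap_apply_self] at h
  exact h u hb

theorem freeAt_kempeSwap_of_notMem {c : Sym2 V → Option K} {α β : K} {S : Set V}
    {v : V} (hv : v ∉ S) {a : K} (h : FreeAt c v a) : FreeAt (kempeSwap c α β S) v a := by
  intro u hu
  rw [kempeSwap_of_notMem hv] at hu
  exact h u hu

/-- A chain containing an element of `P` can be cut at the first such element; a relation that holds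
along the chain before elements of `P` then holds along the whole prefix. -/
theorem exists_prefix_chain {R R' : V → V → Prop} {P : V → Prop}
    (hR : ∀ a b, R a b → ¬ P a → R' a b) (l : List V) :
    ∀ a, (a :: l).IsChain R → (∃ y ∈ a :: l, P y) →
    ∃ l', (a :: l') <+: (a :: l) ∧ (a :: l').IsChain R' ∧ P ((a :: l').getLast (by simp)) := by
  induction l with
  | nil =>
    intro a _ hy
    simp at hy
    exact ⟨[], by simp, by simp, by simpa⟩
  | cons b l ih =>
    intro a hch hy
    by_cases ha : P a
    · exact ⟨[], by simp, by simp, by simpa⟩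
    · rw [List.isChain_cons_cons] at hch
      obtain ⟨y, hy, hPy⟩ := hy
      have hy' : y ∈ b :: l := by
        rcases List.mem_cons.1 hy with rfl | h
        · contradiction
        · exact h
      obtain ⟨l', h1, h2, h3⟩ := ih b hch.2 ⟨y, hy', hPy⟩
      refine ⟨b :: l', ?_, ?_, ?_⟩
      · rwa [List.cons_prefix_cons, and_iff_right rfl]
      · rw [List.isChain_cons_cons]
        exact ⟨hR _ _ hch.1 ha, h2⟩
      · rwa [List.getLast_cons (by simp)]

/-- In a graph of maximum degree two, a connected component is a path or a cycle, so it does not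
contain three vertices of degree at most one. -/
theorem not_reachable_three [Fintype V] (P : SimpleGraph V)
    (h2 : ∀ v, (P.neighborSet v).ncard ≤ 2) {p q r : V} (hpq : p ≠ q) (hpr : p ≠ r) (hqr : q ≠ r)
    (hp : (P.neighborSet p).ncard ≤ 1) (hq : (P.neighborSet q).ncard ≤ 1)
    (hr : (P.neighborSet r).ncard ≤ 1) (h1 : P.Reachable p q) (h3 : P.Reachable p r) : False := by
  classical
  set C := P.connectedComponentMk p with hC
  have hconn := C.connected_toSimpleGraph
  have hcard := hconn.card_vert_le_card_edgeSet_add_one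
  have hsum := C.toSimpleGraph.sum_degrees_eq_twice_card_edges
  have hdeg : ∀ v : C, C.toSimpleGraph.degree v ≤ (P.neighborSet v).ncard := by
    intro v
    rw [← SimpleGraph.card_neighborSet_eq_degree, ← Nat.card_eq_fintype_card,
      ← Nat.card_coe_set_eq]
    apply Nat.card_le_card_of_injective
      (fun u : C.toSimpleGraph.neighborSet v => (⟨u.1.1, u.2⟩ : P.neighborSet v.1))
    intro a b hab
    have h := congrArg (fun z : P.neighborSet v.1 => z.1) hab
    exact Subtype.ext (Subtype.ext h)
  have hqC : q ∈ C.supp := by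
    simp [hC, SimpleGraph.ConnectedComponent.mem_supp_iff, h1.symm]
  have hrC : r ∈ C.supp := by
    simp [hC, SimpleGraph.ConnectedComponent.mem_supp_iff, h3.symm]
  have hpC : p ∈ C.supp := by
    simp [hC, SimpleGraph.ConnectedComponent.mem_supp_iff]
  have hbound : ∑ v : C, (C.toSimpleGraph.degree v +
      (if v ∈ ({⟨p, hpC⟩, ⟨q, hqC⟩, ⟨r, hrC⟩} : Finset C) then 1 else 0)) ≤ ∑ v : C, 2 := by
    apply sum_le_sum
    intro v _
    split_ifs with h
    · simp only [mem_insert, mem_singleton] at h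
      rcases h with rfl | rfl | rfl
      · have := hdeg ⟨p, hpC⟩; simp only at this; omega
      · have := hdeg ⟨q, hqC⟩; simp only at this; omega
      · have := hdeg ⟨r, hrC⟩; simp only at this; omega
    · have := hdeg v
      have := h2 v
      omega
  rw [sum_add_distrib, hsum, sum_boole, Finset.filter_mem_eq_inter, univ_inter,
    card_eq_three.2 ⟨_, _, _, by simpa using hpq, by simpa using hpr, by simpa using hqr, rfl⟩] at hbound
  simp only [sum_const, card_univ, smul_eq_mul] at hbound
  rw [Nat.card_eq_fintype_card, Nat.card_eq_fintype_card, SimpleGraph.card_edgeSet] at hcard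
  push_cast at hbound
  omega

/-- An uncoloured edge `xy` can be coloured, possibly after recolouring, if every vertex misses a
colour. Let `β` be missing at the last vertex of a longest fan and `α` at `x`. If `β` is present at
`x`, then by maximality two fan vertices miss `β`, and one of them is not joined to `x` by edges
coloured `α` or `β`. Exchanging these colours on its component makes a fan rotatable. -/
theorem IsPartialColoring.augment [Fintype V] [DecidableEq V] [DecidableEq K] {H : SimpleGraph V}
    {c : Sym2 V → Option K} (hc : IsPartialColoring H c) (hfree : ∀ v, ∃ a, FreeAt c v a)
    {x y : V} (hxy : H.Adj x y) (hn : c s(x, y) = none) :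
    ∃ c' : Sym2 V → Option K, IsPartialColoring H c' ∧ (∀ e, c e ≠ none → c' e ≠ none) ∧
      c' s(x, y) ≠ none := by
  classical
  -- a longest fan
  obtain ⟨ys, ⟨hnd, hch⟩, hmax⟩ : ∃ ys : List V,
      ((y :: ys).Nodup ∧ (y :: ys).IsChain (FanStep c x)) ∧
      ∀ zs : List V, ((y :: zs).Nodup ∧ (y :: zs).IsChain (FanStep c x)) →
        zs.length ≤ ys.length := by
    have hb : ∀ n, (∃ ys : List V, ys.length = n ∧
        ((y :: ys).Nodup ∧ (y :: ys).IsChain (FanStep c x))) → n ≤ Fintype.card V := by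
      rintro n ⟨ys, rfl, h, _⟩
      exact (List.nodup_cons.1 h).2.length_le_card
    have h0 : ∃ ys : List V, ys.length = 0 ∧
        ((y :: ys).Nodup ∧ (y :: ys).IsChain (FanStep c x)) := ⟨[], by simp⟩
    obtain ⟨ys, h1, h2⟩ := Nat.findGreatest_spec (P := fun n => ∃ ys : List V, ys.length = n ∧
        ((y :: ys).Nodup ∧ (y :: ys).IsChain (FanStep c x))) (Nat.zero_le (Fintype.card V)) h0
    refine ⟨ys, h2, fun zs hzs => ?_⟩
    rw [h1]
    exact Nat.le_findGreatest (hb _ ⟨zs, rfl, hzs⟩) ⟨zs, rfl, hzs⟩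
  obtain ⟨α, hα⟩ := hfree x
  set yl := (y :: ys).getLast (by simp) with hyl
  obtain ⟨β, hβ⟩ := hfree yl
  by_cases hxβ : FreeAt c x β
  · exact hc.rotate x β ys y c hxy hn hnd hch hxβ hβ
  unfold FreeAt at hxβ
  push Not at hxβ
  obtain ⟨z, hz⟩ := hxβ
  have hzy : z ≠ y := by rintro rfl; rw [hn] at hz; cases hz
  have hzmem : z ∈ ys := by
    by_contra hzn
    have := hmax (ys ++ [z]) ⟨?_, ?_⟩
    · simp at this
    · rw [← List.cons_append, List.nodup_append]
      refine ⟨hnd, by simp, ?_⟩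
      intro a ha b hb
      simp only [List.mem_singleton] at hb
      subst hb
      rintro rfl
      rcases List.mem_cons.1 ha with h | h <;> contradiction
    · rw [← List.cons_append, List.isChain_append]
      refine ⟨hch, by simp, ?_⟩
      intro a ha b hb
      simp only [List.head?_cons, Option.mem_def, Option.some.injEq] at hb
      subst hb
      rw [List.getLast?_eq_some_getLast (by simp), Option.mem_def, Option.some.injEq] at ha
      subst ha
      exact ⟨β, hz, hβ⟩
  obtain ⟨l1, l2, hl⟩ := List.append_of_mem hzmem
  obtain ⟨yj, hyj1, hyj2, hyj3⟩ : ∃ yj ∈ y :: ys, FreeAt c yj β ∧ yj ≠ yl := by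
    have hdec : y :: ys = (y :: l1) ++ z :: l2 := by rw [hl]; rfl
    have hne : y :: l1 ≠ [] := by simp
    refine ⟨(y :: l1).getLast hne, ?_, ?_, ?_⟩
    · rw [hdec]
      exact List.mem_append_left _ (List.getLast_mem _)
    · rw [hdec, List.isChain_append] at hch
      obtain ⟨a, ha, hfa⟩ := hch.2.2 ((y :: l1).getLast hne)
        (by rw [List.getLast?_eq_some_getLast hne]; rfl) z (by simp)
      rw [hz] at ha
      cases ha
      exact hfa
    · intro h
      have h1 : yl ∈ z :: l2 := by
        have : yl = (z :: l2).getLast (by simp) := by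
          rw [hyl]
          simp only [hdec]
          rw [List.getLast_append_of_ne_nil]
        rw [this]
        exact List.getLast_mem _
      have h2 : yl ∈ y :: l1 := h ▸ List.getLast_mem _
      rw [hdec, List.nodup_append] at hnd
      exact hnd.2.2 _ h2 _ h1 rfl
  have hylmem : yl ∈ y :: ys := List.getLast_mem _
  -- fan vertices are neighbours of the centre
  have hfanx : ∀ v ∈ y :: ys, v ≠ x := by
    have : ∀ (l : List V) (u : V), (u :: l).IsChain (FanStep c x) → u ≠ x →
        ∀ v ∈ u :: l, v ≠ x := by
      intro l
      induction l with
      | nil => intro u _ hu v hv; simp at hv; exact hv ▸ hu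
      | cons w l ihl =>
        intro u h hu v hv
        rw [List.isChain_cons_cons] at h
        rcases List.mem_cons.1 hv with rfl | hv
        · exact hu
        · obtain ⟨b, hb, _⟩ := h.1
          exact ihl w h.2 (hc.adj _ _ _ hb).ne' v hv
    exact this ys y hch hxy.ne'
  let P : SimpleGraph V :=
    { Adj := fun u v => c s(u, v) = some α ∨ c s(u, v) = some β
      symm := ⟨fun u v h => by rwa [Sym2.eq_swap]⟩
      loopless := ⟨fun u h => by rcases h with h | h <;> exact (hc.adj _ _ _ h).ne rfl⟩ }
  have hPdeg : ∀ v (T : Set (Option K)), T.Finite → (∀ u, P.Adj v u → c s(v, u) ∈ T) →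
      (P.neighborSet v).ncard ≤ T.ncard := by
    intro v T hT h
    apply Set.ncard_le_ncard_of_injOn (fun u => c s(v, u)) h ?_ hT
    intro u hu w hw huw
    simp only at huw
    rcases hu with hu | hu
    · exact hc.inj _ _ _ _ hu (huw ▸ hu)
    · exact hc.inj _ _ _ _ hu (huw ▸ hu)
  have hP2 : ∀ v, (P.neighborSet v).ncard ≤ 2 := by
    intro v
    refine (hPdeg v {some α, some β} (by simp) (fun u hu => hu)).trans ?_
    simpa using Set.ncard_insert_le (some α) {some β}
  have hP1 : ∀ v, FreeAt c v α ∨ FreeAt c v β → (P.neighborSet v).ncard ≤ 1 := by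
    rintro v (h | h)
    · rw [← Set.ncard_singleton (some β)]
      exact hPdeg v {some β} (by simp) (fun u hu => hu.resolve_left (h u))
    · rw [← Set.ncard_singleton (some α)]
      exact hPdeg v {some α} (by simp) (fun u hu => hu.resolve_right (h u))
  have hsplit : ∃ w ∈ y :: ys, FreeAt c w β ∧ ¬ P.Reachable w x := by
    by_contra! h
    exact not_reachable_three P hP2 (hfanx yj hyj1).symm (hfanx yl hylmem).symm hyj3
      (hP1 _ (Or.inl hα)) (hP1 _ (Or.inr hyj2)) (hP1 _ (Or.inr hβ))
      (h yj hyj1 hyj2).symm (h yl hylmem hβ).symm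
  obtain ⟨w, hw, hwβ, hwx⟩ := hsplit
  set S : Set V := {v | P.Reachable w v} with hS
  have hScl : ∀ u v, (c s(u, v) = some α ∨ c s(u, v) = some β) → u ∈ S → v ∈ S := by
    intro u v h hu
    exact SimpleGraph.Reachable.trans hu (SimpleGraph.Adj.reachable (G := P) h)
  have hxS : x ∉ S := hwx
  obtain ⟨l', hpre, hch', hlast⟩ := exists_prefix_chain (R := FanStep c x)
    (R' := FanStep (kempeSwap c α β S) x) (P := fun v => v ∈ S ∧ FreeAt c v β) (by
      rintro a b ⟨γ, hγ, hf⟩ hP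
      refine ⟨γ, by rwa [kempeSwap_of_notMem hxS], ?_⟩
      by_cases ha : a ∈ S
      · apply freeAt_kempeSwap_of_mem hScl ha
        rw [Equiv.swap_apply_of_ne_of_ne]
        · exact hf
        · rintro rfl; exact hα _ hγ
        · rintro rfl; exact hP ⟨ha, hf⟩
      · exact freeAt_kempeSwap_of_notMem ha hf) ys y hch
    ⟨w, hw, SimpleGraph.Reachable.refl _, hwβ⟩
  obtain ⟨c', h1, h2, h3⟩ := (hc.kempe hScl).rotate x α l' y _ hxy
    (by rwa [kempeSwap_of_notMem hxS])
    (hnd.sublist hpre.sublist) hch' (freeAt_kempeSwap_of_notMem hxS hα)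
    (freeAt_kempeSwap_of_mem hScl hlast.1 (by simpa using hlast.2))
  refine ⟨c', h1, fun e he => h2 e ?_, h3⟩
  unfold kempeSwap
  split_ifs
  · simpa using he
  · exact he

/-- Vizing's theorem: a graph of maximum degree at most `D` has a proper edge colouring with `D + 1`
colours. -/
theorem exists_edge_coloring [Fintype V] (H : SimpleGraph V) (D : ℕ)
    (hD : ∀ v, (H.neighborSet v).ncard ≤ D) :
    ∃ c : Sym2 V → Fin (D + 1), ∀ u v w, H.Adj u v → H.Adj u w → v ≠ w →
      c s(u, v) ≠ c s(u, w) := by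
  classical
  suffices h : ∀ n, ∀ c : Sym2 V → Option (Fin (D + 1)), IsPartialColoring H c →
      (univ.filter (fun e => e ∈ H.edgeSet ∧ c e = none)).card = n →
      ∃ c : Sym2 V → Option (Fin (D + 1)), IsPartialColoring H c ∧ ∀ e ∈ H.edgeSet, c e ≠ none by
    obtain ⟨c, hc, hall⟩ := h _ (fun _ => none) ⟨by simp, by simp⟩ rfl
    refine ⟨fun e => (c e).getD 0, fun u v w huv huw hvw h => hvw ?_⟩
    obtain ⟨a, ha⟩ := Option.ne_none_iff_exists'.1 (hall s(u, v) huv)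
    obtain ⟨b, hb⟩ := Option.ne_none_iff_exists'.1 (hall s(u, w) huw)
    simp only [ha, hb, Option.getD_some] at h
    subst h
    exact hc.inj _ _ _ _ ha hb
  intro n
  induction n using Nat.strong_induction_on with
  | _ n ih =>
  intro c hc hn
  by_cases hall : ∀ e ∈ H.edgeSet, c e ≠ none
  · exact ⟨c, hc, hall⟩
  push Not at hall
  obtain ⟨e, he, hce⟩ := hall
  induction e using Sym2.ind with
  | _ x y =>
  have hfree : ∀ v, ∃ a, FreeAt c v a := by
    intro v
    by_contra! h
    unfold FreeAt at h
    push Not at h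
    choose f hf using h
    have h1 : Function.Injective f := by
      intro a b hab
      have ha := hf a
      rw [hab, hf b] at ha
      exact (Option.some.inj ha).symm
    have h2 : (Set.range f).ncard ≤ (H.neighborSet v).ncard := by
      apply Set.ncard_le_ncard _ (Set.toFinite _)
      rintro _ ⟨a, rfl⟩
      exact hc.adj _ _ _ (hf a)
    rw [← Nat.card_coe_set_eq, Nat.card_range_of_injective h1, Nat.card_eq_fintype_card,
      Fintype.card_fin] at h2
    have := hD v
    omega
  obtain ⟨c', h1, h2, h3⟩ := hc.augment hfree he hce
  refine ih _ ?_ c' h1 rfl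
  rw [← hn]
  apply card_lt_card
  rw [ssubset_iff_of_subset]
  · refine ⟨s(x, y), by simpa using ⟨he, hce⟩, by simp [h3]⟩
  · intro e he
    simp only [mem_filter, mem_univ, true_and] at he ⊢
    refine ⟨he.1, ?_⟩
    by_contra h
    exact h2 e h he.2

end Vizing
end IncFree

/-! ### Light and heavy vertices, groups, targets -/

namespace IncFree

open Finset

/-- Greedy colouring: the colouring `c₀` of `S` is changed on `T` only, one element at a time, such
that elements of `T` are distinguished from all elements of `S ∪ T` in conflict with them. -/
theorem exists_greedy_extension {E : Type*} [DecidableEq E] {k : ℕ} (r : E → E → Prop)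
    [DecidableRel r] (hr : ∀ e f, r e f → r f e) (S T : Finset E) (c₀ : E → Fin k)
    (hT : ∀ e ∈ T, ((S ∪ T).filter (fun f => f ≠ e ∧ r e f)).card < k) :
    ∃ c : E → Fin k, (∀ e, e ∉ T → c e = c₀ e) ∧
      ∀ e ∈ T, ∀ f ∈ S ∪ T, f ≠ e → r e f → c e ≠ c f := by
  induction T using Finset.induction_on with
  | empty => exact ⟨c₀, by simp⟩
  | insert a T ha ih =>
    obtain ⟨c, h1, h2⟩ := ih (fun e he => lt_of_le_of_lt (card_le_card (by
      apply filter_subset_filter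
      exact union_subset_union_right (subset_insert _ _))) (hT e (mem_insert_of_mem he)))
    have hlt := hT a (mem_insert_self _ _)
    obtain ⟨q, hq⟩ : ∃ q, q ∉ ((S ∪ insert a T).filter (fun f => f ≠ a ∧ r a f)).image c := by
      by_contra! h
      have := card_image_le (s := (S ∪ insert a T).filter (fun f => f ≠ a ∧ r a f)) (f := c)
      rw [eq_univ_of_forall h, card_univ, Fintype.card_fin] at this
      omega
    have hq' : ∀ f ∈ S ∪ insert a T, f ≠ a → r a f → c f ≠ q := by
      intro f hf h3 h4 h5
      exact hq (mem_image.2 ⟨f, mem_filter.2 ⟨hf, h3, h4⟩, h5⟩)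
    refine ⟨Function.update c a q, ?_, ?_⟩
    · intro e he
      rw [mem_insert, not_or] at he
      rw [Function.update_of_ne he.1, h1 e he.2]
    · intro e he f hf hfe hef
      by_cases hea : e = a
      · subst hea
        rw [Function.update_self, Function.update_of_ne hfe]
        exact (hq' f hf hfe hef).symm
      · have heT : e ∈ T := (mem_insert.1 he).resolve_left hea
        by_cases hfa : f = a
        · subst hfa
          rw [Function.update_self, Function.update_of_ne hea]
          exact hq' e (mem_union_right _ he) hea (hr _ _ hef)
        · rw [Function.update_of_ne hea, Function.update_of_ne hfa]
          apply h2 e heT f _ hfe hef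
          simp only [mem_union, mem_insert] at hf ⊢
          tauto

variable {V : Type*} [Fintype V] [DecidableEq V] (G : SimpleGraph V) [DecidableRel G.Adj]

/-- The vertices `w` and `v` are adjacent, `w` is light (of degree less than `L`) and `v` is heavy. -/
def LightHeavy (L : ℕ) (w v : V) : Prop := G.degree w < L ∧ L ≤ G.degree v ∧ G.Adj w v

/-- The vertex `w` has a light neighbour. -/
def HasLightNbr (L : ℕ) (w : V) : Prop := ∃ z, G.Adj w z ∧ G.degree z < L

/-- For every light vertex `w`, a partition of its heavy neighbours into groups of size at most
`2 * δ`, and at least `δ` if `w` has no light neighbour; `grp w v` is the group containing `v`.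
To the edge `wv` belongs a target `tgt w v`, a vertex at which the colour of `wv` is to be absent:
another member of the group of `v`, the targets of different edges at `w` being different, if `w` has
no light neighbour, and otherwise a fixed light neighbour `lightNbr w`. -/
structure Groups (L δ : ℕ) where
  grp : V → V → Finset V
  tgt : V → V → V
  lightNbr : V → V
  self_mem : ∀ w v, LightHeavy G L w v → v ∈ grp w v
  mem_lh : ∀ w v y, LightHeavy G L w v → y ∈ grp w v → LightHeavy G L w y
  grp_eq : ∀ w v y, LightHeavy G L w v → y ∈ grp w v → grp w y = grp w v
  card_le : ∀ w v, LightHeavy G L w v → (grp w v).card ≤ 2 * δ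
  le_card : ∀ w v, LightHeavy G L w v → ¬ HasLightNbr G L w → δ ≤ (grp w v).card
  tgt_mem : ∀ w v, LightHeavy G L w v → ¬ HasLightNbr G L w → tgt w v ∈ grp w v
  tgt_ne : ∀ w v, LightHeavy G L w v → ¬ HasLightNbr G L w → tgt w v ≠ v
  tgt_inj : ∀ w v y, LightHeavy G L w v → LightHeavy G L w y → ¬ HasLightNbr G L w →
    tgt w v = tgt w y → v = y
  tgt_light : ∀ w v, LightHeavy G L w v → HasLightNbr G L w → tgt w v = lightNbr w
  lightNbr_adj : ∀ w, HasLightNbr G L w → G.Adj w (lightNbr w)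
  lightNbr_light : ∀ w, HasLightNbr G L w → G.degree (lightNbr w) < L

theorem exists_partition {α : Type*} [DecidableEq α] {δ : ℕ} (hδ : 1 ≤ δ) (N : Finset α) :
    δ ≤ N.card → ∃ g : α → Finset α, ∀ v ∈ N, v ∈ g v ∧ g v ⊆ N ∧ (∀ y ∈ g v, g y = g v) ∧
      δ ≤ (g v).card ∧ (g v).card ≤ 2 * δ := by
  induction hn : N.card using Nat.strong_induction_on generalizing N with
  | _ n ih =>
  intro hN
  by_cases h2 : n < 2 * δ
  · exact ⟨fun _ => N, fun v hv => ⟨hv, Subset.rfl, fun _ _ => rfl, by simp only; omega, by simp only; omega⟩⟩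
  · obtain ⟨P, hPN, hPc⟩ := exists_subset_card_eq (s := N) (n := δ) (by omega)
    have hc : (N \ P).card = n - δ := by rw [card_sdiff_of_subset hPN, hPc, hn]
    obtain ⟨g, hg⟩ := ih (n - δ) (by omega) (N \ P) hc (by omega)
    refine ⟨fun v => if v ∈ P then P else g v, fun v hv => ?_⟩
    by_cases hvP : v ∈ P
    · simp only [hvP, if_true]
      exact ⟨trivial, hPN, fun y hy => by simp [hy], by omega, by omega⟩
    · obtain ⟨h1, h2, h3, h4, h5⟩ := hg v (mem_sdiff.2 ⟨hv, hvP⟩)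
      simp only [hvP, if_false]
      refine ⟨h1, h2.trans sdiff_subset, fun y hy => ?_, h4, h5⟩
      rw [if_neg (mem_sdiff.1 (h2 hy)).2]
      exact h3 y hy

theorem exists_groups {L δ : ℕ} (hδ : 2 ≤ δ) (hdeg : ∀ v, δ ≤ G.degree v) :
    Nonempty (Groups G L δ) := by
  classical
  -- fixed-point-free permutations of finite sets
  have hperm : ∀ P : Finset V, ∃ f : Equiv.Perm V, 2 ≤ P.card → ∀ v ∈ P, f v ∈ P ∧ f v ≠ v := by
    intro P
    obtain ⟨f, hf, -⟩ := P.exists_cycleOn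
    refine ⟨f, fun h v hv => ⟨hf.1.mapsTo hv, ?_⟩⟩
    exact hf.apply_ne (Finset.one_lt_card_iff_nontrivial.1 (by omega)) hv
  choose σ hσ using hperm
  have hw : ∀ w, ∃ g : V → Finset V, ∀ v, LightHeavy G L w v →
      v ∈ g v ∧ (∀ y ∈ g v, LightHeavy G L w y) ∧ (∀ y ∈ g v, g y = g v) ∧ (g v).card ≤ 2 * δ ∧
      (¬ HasLightNbr G L w → δ ≤ (g v).card) := by
    intro w
    by_cases hl : HasLightNbr G L w
    · refine ⟨fun v => {v}, fun v hv => ⟨by simp, by simpa using hv, by simp, ?_, fun h => absurd hl h⟩⟩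
      simp; omega
    · obtain ⟨g, hg⟩ := exists_partition (δ := δ) (by omega) (G.neighborFinset w)
        (by rw [G.card_neighborFinset_eq_degree]; exact hdeg w)
      refine ⟨g, fun v hv => ?_⟩
      obtain ⟨h1, h2, h3, h4, h5⟩ := hg v (by simpa using hv.2.2)
      refine ⟨h1, fun y hy => ?_, h3, h5, fun _ => h4⟩
      have hy' : G.Adj w y := by simpa using h2 hy
      refine ⟨hv.1, ?_, hy'⟩
      by_contra! h
      exact hl ⟨y, hy', h⟩
  choose g hg using hw
  have hz : ∀ w, ∃ z, HasLightNbr G L w → G.Adj w z ∧ G.degree z < L := by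
    intro w
    by_cases hl : HasLightNbr G L w
    · obtain ⟨z, hz⟩ := hl
      exact ⟨z, fun _ => hz⟩
    · exact ⟨w, fun h => absurd h hl⟩
  choose z hz using hz
  have htm : ∀ w v, LightHeavy G L w v → ¬ HasLightNbr G L w →
      σ (g w v) v ∈ g w v ∧ σ (g w v) v ≠ v := by
    intro w v h hl
    obtain ⟨h1, h2, h3, h4, h5⟩ := hg w v h
    have := h5 hl
    exact hσ _ (by omega) v h1
  exact ⟨{
    grp := g
    tgt := fun w v => if HasLightNbr G L w then z w else σ (g w v) v
    lightNbr := z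
    self_mem := fun w v h => (hg w v h).1
    mem_lh := fun w v y h hy => (hg w v h).2.1 y hy
    grp_eq := fun w v y h hy => (hg w v h).2.2.1 y hy
    card_le := fun w v h => (hg w v h).2.2.2.1
    le_card := fun w v h => (hg w v h).2.2.2.2
    tgt_mem := fun w v h hl => by
      rw [if_neg hl]
      exact (htm w v h hl).1
    tgt_ne := fun w v h hl => by
      rw [if_neg hl]
      exact (htm w v h hl).2
    tgt_inj := fun w v y hv hy hl he => by
      rw [if_neg hl, if_neg hl] at he
      have h1 := (htm w v hv hl).1
      have h2 := (htm w y hy hl).1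
      have h3 := (hg w v hv).2.2.1 _ h1
      have h4 := (hg w y hy).2.2.1 _ h2
      rw [he, h4] at h3
      rw [h3] at he
      exact (σ (g w v)).injective he
    tgt_light := fun w v h hl => by rw [if_pos hl]
    lightNbr_adj := fun w hl => (hz w hl).1
    lightNbr_light := fun w hl => (hz w hl).2 }⟩

/-- The edges of `A` incident with `v`. -/
def edgesAt (A : Finset (Sym2 V)) (v : V) : Finset (Sym2 V) := A.filter (fun e => v ∈ e)

variable {G}

theorem card_edgesAt_le_degree {A : Finset (Sym2 V)} (hA : ∀ e ∈ A, e ∈ G.edgeSet) (v : V) :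
    (edgesAt A v).card ≤ G.degree v := by
  rw [← G.card_incidenceFinset_eq_degree]
  apply card_le_card
  intro e he
  simp only [edgesAt, mem_filter] at he
  simp [SimpleGraph.incidenceSet, he.2, hA e he.1]

/-- A set `A` of edges, each with a heavy end, that contains a whole group with each of its edges has
a proper colouring in which the colour of every `wv` is absent at its target. The edges between
heavy vertices are coloured first, then the edges from light to heavy vertices, all greedily. For the
latter, the edges at the heavy end, those at the target and those having the heavy end as target
forbid at most `D` colours each, the edges at the light end at most `L`, and those having the light
end as target at most `L ^ 2`. -/
theorem exists_target_coloring {L δ : ℕ} (𝒢 : Groups G L δ) {D : ℕ} (hLD : L ≤ D)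
    (A : Finset (Sym2 V)) (hA : ∀ e ∈ A, e ∈ G.edgeSet) (hheavy : ∀ e ∈ A, ∃ v ∈ e, L ≤ G.degree v)
    (hclosed : ∀ w v y, LightHeavy G L w v → s(w, v) ∈ A → y ∈ 𝒢.grp w v → s(w, y) ∈ A)
    (hD : ∀ v, L ≤ G.degree v → (edgesAt A v).card ≤ D) :
    ∃ c : Sym2 V → Fin (3 * D + L + L ^ 2 + 1),
      (∀ v, ∀ e ∈ A, ∀ f ∈ A, v ∈ e → v ∈ f → e ≠ f → c e ≠ c f) ∧
      ∀ w v, LightHeavy G L w v → s(w, v) ∈ A → ∀ f ∈ A, 𝒢.tgt w v ∈ f → c s(w, v) ≠ c f := by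
  classical
  set k := 3 * D + L + L ^ 2 + 1 with hk
  have hDall : ∀ v, (edgesAt A v).card ≤ D := by
    intro v
    by_cases h : L ≤ G.degree v
    · exact hD v h
    · exact (card_edgesAt_le_degree hA v).trans (by omega)
  let isT : Sym2 V → Sym2 V → Prop := fun e f => ∃ w v, LightHeavy G L w v ∧ e = s(w, v) ∧
    𝒢.tgt w v ∈ f
  let r : Sym2 V → Sym2 V → Prop := fun e f => (∃ v, v ∈ e ∧ v ∈ f) ∨ isT e f ∨ isT f e
  have hr : ∀ e f, r e f → r f e := by
    rintro e f (⟨v, h1, h2⟩ | h | h)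
    · exact Or.inl ⟨v, h2, h1⟩
    · exact Or.inr (Or.inr h)
    · exact Or.inr (Or.inl h)
  set S := A.filter (fun e => ∀ v ∈ e, L ≤ G.degree v) with hS
  set T := A.filter (fun e => ¬ ∀ v ∈ e, L ≤ G.degree v) with hT
  have hSnot : ∀ e ∈ S, ∀ f, ¬ isT e f := by
    rintro e he f ⟨w, v, h, rfl, _⟩
    have := (mem_filter.1 he).2 w (by simp)
    have := h.1
    omega
  obtain ⟨c₁, -, hc₁⟩ := exists_greedy_extension r hr ∅ S (fun _ => (⟨0, by omega⟩ : Fin k)) (by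
    intro e he
    induction e using Sym2.ind with
    | _ x y =>
    calc _ ≤ (edgesAt A x ∪ edgesAt A y).card := by
          apply card_le_card
          intro f hf
          simp only [mem_filter, empty_union] at hf
          obtain ⟨hf, -, h⟩ := hf
          rcases h with ⟨v, h1, h2⟩ | h | h
          · simp only [Sym2.mem_iff] at h1
            simp only [edgesAt, mem_union, mem_filter, (mem_filter.1 hf).1, true_and]
            rcases h1 with rfl | rfl
            · exact Or.inl h2
            · exact Or.inr h2
          · exact absurd h (hSnot _ he _)
          · exact absurd h (hSnot _ hf _)
      _ ≤ (edgesAt A x).card + (edgesAt A y).card := card_union_le _ _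
      _ < k := by have := hDall x; have := hDall y; omega)
  have hST : S ∪ T = A := filter_union_filter_not_eq _ _
  have hsurj : ∀ e ∈ T, ∃ w v, LightHeavy G L w v ∧ e = s(w, v) := by
    intro e he
    rw [hT, mem_filter] at he
    obtain ⟨heA, hne⟩ := he
    obtain ⟨v, hv, hvL⟩ := hheavy e heA
    induction e using Sym2.ind with
    | _ x y =>
    have hadj : G.Adj x y := hA _ heA
    push Not at hne
    obtain ⟨u, hu, huL⟩ := hne
    simp only [Sym2.mem_iff] at hv hu
    rcases hv with rfl | rfl <;> rcases hu with rfl | rfl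
    · omega
    · exact ⟨u, v, ⟨huL, hvL, hadj.symm⟩, Sym2.eq_swap⟩
    · exact ⟨u, v, ⟨huL, hvL, hadj⟩, rfl⟩
    · omega
  obtain ⟨c, hc1, hc2⟩ := exists_greedy_extension r hr S T c₁ (by
    rw [hST]
    intro e he
    obtain ⟨w, x, hwx, rfl⟩ := hsurj e he
    have hrev1 : (A.filter (fun f => ∃ w' x', LightHeavy G L w' x' ∧ f = s(w', x') ∧
        𝒢.tgt w' x' = x)).card ≤ D := by
      refine le_trans (card_le_card_of_forall_subsingleton
        (fun f e' => ∃ w' x', LightHeavy G L w' x' ∧ f = s(w', x') ∧ 𝒢.tgt w' x' = x ∧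
          e' = s(w', x)) ?_ ?_) (hDall x)
      · intro f hf
        obtain ⟨hfA, w', x', h1, rfl, h3⟩ := mem_filter.1 hf
        refine ⟨s(w', x), ?_, w', x', h1, rfl, h3, rfl⟩
        have hnl : ¬ HasLightNbr G L w' := by
          intro hl
          have h4 := 𝒢.lightNbr_light w' hl
          rw [← 𝒢.tgt_light w' x' h1 hl, h3] at h4
          have := hwx.2.1
          omega
        simp only [edgesAt, mem_filter, Sym2.mem_iff, or_true, and_true]
        apply hclosed w' x' x h1 hfA
        rw [← h3]
        exact 𝒢.tgt_mem w' x' h1 hnl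
      · rintro e' - f ⟨-, w1, x1, h1, rfl, h2, rfl⟩ f' ⟨-, w2, x2, h3, rfl, h4, h5⟩
        have hw : w1 = w2 := Sym2.congr_left.1 h5
        subst hw
        have hnl : ¬ HasLightNbr G L w1 := by
          intro hl
          have h4 := 𝒢.lightNbr_light w1 hl
          rw [← 𝒢.tgt_light w1 x1 h1 hl, h2] at h4
          have := hwx.2.1
          omega
        rw [𝒢.tgt_inj w1 x1 x2 h1 h3 hnl (h2.trans h4.symm)]
    have hrev2 : (A.filter (fun f => ∃ w' x', LightHeavy G L w' x' ∧ f = s(w', x') ∧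
        𝒢.tgt w' x' = w)).card ≤ L ^ 2 := by
      calc _ ≤ (((G.neighborFinset w).filter (fun w' => G.degree w' < L)).biUnion
            (fun w' => edgesAt A w')).card := by
            apply card_le_card
            intro f hf
            obtain ⟨hfA, w', x', h1, rfl, h3⟩ := mem_filter.1 hf
            have hl : HasLightNbr G L w' := by
              by_contra hl
              have h4 := 𝒢.mem_lh w' x' _ h1 (𝒢.tgt_mem w' x' h1 hl)
              rw [h3] at h4
              have := h4.2.1
              have := hwx.1
              omega
            have h4 := 𝒢.lightNbr_adj w' hl
            rw [← 𝒢.tgt_light w' x' h1 hl, h3] at h4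
            rw [mem_biUnion]
            exact ⟨w', by simp [h4.symm, h1.1], by simp [edgesAt, hfA]⟩
        _ ≤ ((G.neighborFinset w).filter (fun w' => G.degree w' < L)).card * L := by
            apply card_biUnion_le_card_mul
            intro w' hw'
            exact (card_edgesAt_le_degree hA w').trans (mem_filter.1 hw').2.le
        _ ≤ L * L := by
            apply Nat.mul_le_mul_right
            refine (card_filter_le _ _).trans ?_
            rw [G.card_neighborFinset_eq_degree]
            exact hwx.1.le
        _ = L ^ 2 := by ring
    have hwL := (card_edgesAt_le_degree hA w).trans hwx.1.le
    set X1 := A.filter (fun f => ∃ w' x', LightHeavy G L w' x' ∧ f = s(w', x') ∧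
        𝒢.tgt w' x' = x) with hX1
    set X2 := A.filter (fun f => ∃ w' x', LightHeavy G L w' x' ∧ f = s(w', x') ∧
        𝒢.tgt w' x' = w) with hX2
    calc _ ≤ (edgesAt A x ∪ (edgesAt A w ∪ (edgesAt A (𝒢.tgt w x) ∪ (X1 ∪ X2)))).card := by
          apply card_le_card
          intro f hf
          obtain ⟨hfA, -, h⟩ := mem_filter.1 hf
          simp only [edgesAt, mem_union, mem_filter, hfA, true_and, hX1, hX2]
          rcases h with ⟨v, h1, h2⟩ | ⟨w', v', h1, h2, h3⟩ | ⟨w', v', h1, h2, h3⟩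
          · simp only [Sym2.mem_iff] at h1
            rcases h1 with rfl | rfl
            · exact Or.inr (Or.inl h2)
            · exact Or.inl h2
          · have : w = w' ∧ x = v' := by
              rcases Sym2.eq_iff.1 h2 with h | ⟨rfl, rfl⟩
              · exact h
              · have := h1.1; have := hwx.2.1; omega
            obtain ⟨rfl, rfl⟩ := this
            exact Or.inr (Or.inr (Or.inl h3))
          · simp only [Sym2.mem_iff] at h3
            rcases h3 with h3 | h3
            · exact Or.inr (Or.inr (Or.inr (Or.inr ⟨w', v', h1, h2, h3⟩)))
            · exact Or.inr (Or.inr (Or.inr (Or.inl ⟨w', v', h1, h2, h3⟩)))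
      _ ≤ (edgesAt A x).card + ((edgesAt A w).card + ((edgesAt A (𝒢.tgt w x)).card +
            (X1.card + X2.card))) := by
          refine (card_union_le _ _).trans (Nat.add_le_add_left ?_ _)
          refine (card_union_le _ _).trans (Nat.add_le_add_left ?_ _)
          refine (card_union_le _ _).trans (Nat.add_le_add_left ?_ _)
          exact card_union_le _ _
      _ < k := by
          have := hDall x
          have := hDall (𝒢.tgt w x)
          omega)
  rw [hST] at hc2
  have hall : ∀ e ∈ A, ∀ f ∈ A, e ≠ f → r e f → c e ≠ c f := by
    intro e he f hf hef hre
    by_cases h1 : e ∈ T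
    · exact hc2 e h1 f hf hef.symm hre
    by_cases h2 : f ∈ T
    · exact (hc2 f h2 e he hef (hr _ _ hre)).symm
    rw [hc1 e h1, hc1 f h2]
    rw [← hST] at he hf
    have heS := (mem_union.1 he).resolve_right h1
    have hfS := (mem_union.1 hf).resolve_right h2
    exact hc₁ e heS f (by simpa using hfS) hef.symm hre
  refine ⟨c, ?_, ?_⟩
  · intro v e he f hf h1 h2 hne
    exact hall e he f hf hne (Or.inl ⟨v, h1, h2⟩)
  · intro w v h hwv f hf hfe
    refine hall _ hwv f hf ?_ (Or.inr (Or.inl ⟨w, v, h, rfl, hfe⟩))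
    rintro rfl
    by_cases hl : HasLightNbr G L w
    · rw [𝒢.tgt_light w v h hl] at hfe
      have h1 := 𝒢.lightNbr_adj w hl
      have h2 := 𝒢.lightNbr_light w hl
      rcases Sym2.mem_iff.1 hfe with h3 | h3
      · exact h1.ne h3.symm
      · rw [h3] at h2
        have := h.2.1
        omega
    · have h1 := 𝒢.tgt_ne w v h hl
      have h2 := 𝒢.mem_lh w v _ h (𝒢.tgt_mem w v h hl)
      rcases Sym2.mem_iff.1 hfe with h3 | h3
      · exact h2.2.2.ne h3.symm
      · exact h1 h3

end IncFree

/-! ### Ordering of edges, strong colourings, and labels -/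

namespace IncFree

open Finset

section Reductions

variable {V : Type*} [Fintype V] [DecidableEq V] (G : SimpleGraph V) [DecidableRel G.Adj]

/-- A strict total order on the vertices refining the degree; ties are broken by an arbitrary
enumeration. -/
def Prec (u v : V) : Prop :=
  G.degree u < G.degree v ∨ (G.degree u = G.degree v ∧ Fintype.equivFin V u < Fintype.equivFin V v)

variable {G}

theorem Prec.degree_le {u v : V} (h : Prec G u v) : G.degree u ≤ G.degree v := by
  rcases h with h | h
  · exact h.le
  · exact h.1.le

theorem Prec.asymm {u v : V} (h : Prec G u v) : ¬ Prec G v u := by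
  rintro (h' | h') <;> rcases h with h | h
  · omega
  · omega
  · omega
  · exact absurd h.2 (not_lt.2 h'.2.le)

theorem prec_or_prec {u v : V} (h : u ≠ v) : Prec G u v ∨ Prec G v u := by
  unfold Prec
  have h1 : Fintype.equivFin V u ≠ Fintype.equivFin V v := fun h' => h ((Fintype.equivFin V).injective h')
  have h2 := lt_or_gt_of_ne h1
  rcases lt_trichotomy (G.degree u) (G.degree v) with h3 | h3 | h3
  · exact Or.inl (Or.inl h3)
  · rcases h2 with h2 | h2
    · exact Or.inl (Or.inr ⟨h3, h2⟩)
    · exact Or.inr (Or.inr ⟨h3.symm, h2⟩)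
  · exact Or.inr (Or.inl h3)

/-- For a proper colouring, a palette can only be contained in a palette of at least the same size,
and for equal sizes the inclusion is an equality. Hence only edges `uv` with `u` before `v` have to be
considered. -/
theorem inclusionChromaticIndex_le {K : Type*} [Fintype K] (c : Sym2 V → K)
    (hp : ∀ u v w, G.Adj u v → G.Adj u w → v ≠ w → c s(u, v) ≠ c s(u, w))
    (hi : ∀ u v, G.Adj u v → Prec G u v →
      ∃ x, G.Adj u x ∧ ∀ y, G.Adj v y → c s(v, y) ≠ c s(u, x)) :
    inclusionChromaticIndex G ≤ Fintype.card K := by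
  classical
  apply Nat.sInf_le
  let ι : K → ℕ := fun a => (Fintype.equivFin K a : ℕ)
  have hι : Function.Injective ι := fun a b h => (Fintype.equivFin K).injective (Fin.ext h)
  refine ⟨fun e => ι (c e), ⟨?_, ?_⟩, fun e _ => (Fintype.equivFin K (c e)).2⟩
  · intro u v w h1 h2 h3 h4
    exact hp u v w h1 h2 h3 (hι h4)
  · intro u v huv hsub
    have hfin : ∀ w, palette G (fun e => ι (c e)) w =
        ((G.neighborFinset w).image (fun x => ι (c s(w, x))) : Finset ℕ) := by
      intro w
      ext n
      simp [palette]
    have hcard : ∀ w, ((G.neighborFinset w).image (fun x => ι (c s(w, x)))).card = G.degree w := by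
      intro w
      rw [card_image_of_injOn, G.card_neighborFinset_eq_degree]
      intro x hx y hy hxy
      by_contra hne
      exact hp w x y (by simpa using hx) (by simpa using hy) hne (hι hxy)
    have hnot : ∀ a b, G.Adj a b → Prec G a b → 
        ¬ palette G (fun e => ι (c e)) a ⊆ palette G (fun e => ι (c e)) b := by
      intro a b hab hpr hs
      obtain ⟨x, hx, hxy⟩ := hi a b hab hpr
      obtain ⟨y, hy, h⟩ := hs ⟨x, hx, rfl⟩
      exact hxy y hy (hι h)
    rcases prec_or_prec (G := G) huv.ne with h | h
    · exact hnot u v huv h hsub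
    · apply hnot v u huv.symm h
      rw [hfin, hfin] at hsub ⊢
      rw [coe_subset] at hsub
      rw [eq_of_subset_of_card_le hsub]
      rw [hcard, hcard]
      exact h.degree_le

/-- A strong edge colouring: edges that share a vertex or are joined by an edge get different
colours. -/
theorem exists_strong_coloring (H : SimpleGraph V) [DecidableRel H.Adj] (d : ℕ)
    (hd : ∀ v, H.degree v ≤ d) :
    ∃ c : Sym2 V → Fin (2 * d ^ 2 + 1), ∀ e ∈ H.edgeSet, ∀ f ∈ H.edgeSet, e ≠ f →
      (∃ a ∈ e, ∃ b ∈ f, a = b ∨ H.Adj a b) → c e ≠ c f := by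
  classical
  let r : Sym2 V → Sym2 V → Prop := fun e f => ∃ a ∈ e, ∃ b ∈ f, a = b ∨ H.Adj a b
  obtain ⟨c, -, hc⟩ := exists_greedy_extension r
    (by
      rintro e f ⟨a, ha, b, hb, h⟩
      exact ⟨b, hb, a, ha, h.imp Eq.symm (fun h => h.symm)⟩)
    ∅ H.edgeFinset (fun _ => (⟨0, by omega⟩ : Fin (2 * d ^ 2 + 1))) (by
    intro e he
    induction e using Sym2.ind with
    | _ x y =>
    have hxy : H.Adj x y := by simpa using he
    calc _ ≤ ((H.neighborFinset x ∪ H.neighborFinset y).biUnion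
          (fun a => H.incidenceFinset a)).card := by
          apply card_le_card
          intro f hf
          simp only [empty_union, mem_filter, SimpleGraph.mem_edgeFinset] at hf
          obtain ⟨hf, -, a, ha, b, hb, h⟩ := hf
          simp only [mem_biUnion, mem_union, SimpleGraph.mem_neighborFinset,
            SimpleGraph.mem_incidenceFinset]
          refine ⟨b, ?_, hf, hb⟩
          rcases Sym2.mem_iff.1 ha with rfl | rfl <;> rcases h with rfl | h
          · exact Or.inr hxy.symm
          · exact Or.inl h
          · exact Or.inl hxy
          · exact Or.inr h
      _ ≤ (H.neighborFinset x ∪ H.neighborFinset y).card * d := by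
          apply card_biUnion_le_card_mul
          intro a _
          rw [H.card_incidenceFinset_eq_degree]
          exact hd a
      _ ≤ (d + d) * d := by
          apply Nat.mul_le_mul_right
          refine (card_union_le _ _).trans ?_
          rw [H.card_neighborFinset_eq_degree, H.card_neighborFinset_eq_degree]
          exact Nat.add_le_add (hd x) (hd y)
      _ < 2 * d ^ 2 + 1 := by ring_nf; omega)
  refine ⟨c, fun e he f hf hef h => ?_⟩
  exact hc e (by simpa using he) f (by simpa using hf) hef.symm h

/-- A crude bound, used for small `Δ`: strong colourings are inclusion-free if all degrees are at least
two. -/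
theorem inclusionChromaticIndex_le_strong (Δ : ℕ) (hmin : ∀ v, 2 ≤ G.degree v)
    (hmax : ∀ v, G.degree v ≤ Δ) : inclusionChromaticIndex G ≤ 2 * Δ ^ 2 + 1 := by
  obtain ⟨c, hc⟩ := exists_strong_coloring G Δ hmax
  have := inclusionChromaticIndex_le c (G := G) ?_ ?_
  · simpa using this
  · intro u v w h1 h2 h3
    exact hc _ h1 _ h2 (fun h => h3 (Sym2.congr_right.1 h)) ⟨u, by simp, u, by simp, Or.inl rfl⟩
  · intro u v huv _
    obtain ⟨x, hx, hxv⟩ : ∃ x ∈ G.neighborFinset u, x ≠ v :=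
      exists_mem_ne (by rw [G.card_neighborFinset_eq_degree]; exact hmin u) v
    have hux : G.Adj u x := by simpa using hx
    refine ⟨x, hux, fun y hy => hc _ hy _ hux ?_ ⟨v, by simp, u, by simp, Or.inr huv.symm⟩⟩
    intro h
    rcases Sym2.eq_iff.1 h with ⟨h, _⟩ | ⟨h, _⟩
    · exact huv.ne h.symm
    · exact hxv h.symm

/-- Labels `g v`, the value tables of polynomials of degree less than `k` over `ZMod Q`. A colouring of
the square of `G` makes the polynomials of vertices at distance at most two different, so that their
tables agree in at most `k` places. -/
theorem exists_labels (Δ k Q : ℕ) [Fact Q.Prime] (hmax : ∀ v, G.degree v ≤ Δ)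
    (hk : Δ ^ 2 + 1 ≤ Q ^ k) :
    ∃ g : V → ZMod Q → ZMod Q, ∀ u v, u ≠ v → (G.Adj u v ∨ ∃ x, G.Adj u x ∧ G.Adj x v) →
      (univ.filter (fun b => g u b = g v b)).card ≤ k := by
  classical
  let r : V → V → Prop := fun u v => G.Adj u v ∨ ∃ x, G.Adj u x ∧ G.Adj x v
  obtain ⟨c, -, hc⟩ := exists_greedy_extension (k := Q ^ k) r
    (by
      rintro u v (h | ⟨x, h1, h2⟩)
      · exact Or.inl h.symm
      · exact Or.inr ⟨x, h2.symm, h1.symm⟩)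
    ∅ univ (fun _ => ⟨0, by omega⟩) (by
    intro u _
    calc _ ≤ ((G.neighborFinset u).biUnion
          (fun x => insert x ((G.neighborFinset x).erase u))).card := by
          apply card_le_card
          intro f hf
          simp only [mem_filter] at hf
          obtain ⟨-, hfu, h⟩ := hf
          rw [mem_biUnion]
          rcases h with h | ⟨x, h1, h2⟩
          · exact ⟨f, by simpa using h, by simp⟩
          · exact ⟨x, by simpa using h1, by simp [hfu, h2]⟩
      _ ≤ (G.neighborFinset u).card * Δ := by
          apply card_biUnion_le_card_mul
          intro x hx
          have hx : G.Adj u x := by simpa using hx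
          refine (card_insert_le _ _).trans ?_
          rw [card_erase_of_mem (by simpa using hx.symm), G.card_neighborFinset_eq_degree]
          have := hmax x
          have : 0 < G.degree x := by
            rw [G.degree_pos_iff_exists_adj]
            exact ⟨u, hx.symm⟩
          omega
      _ ≤ Δ * Δ := by
          apply Nat.mul_le_mul_right
          rw [G.card_neighborFinset_eq_degree]
          exact hmax u
      _ < Q ^ k := by rw [← sq]; omega)
  have hcard : Fintype.card (Fin (Q ^ k)) = Fintype.card (Fin k → ZMod Q) := by
    simp [ZMod.card]
  let ε := (Fintype.equivOfCardEq hcard).trans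
    (Polynomial.degreeLTEquiv (ZMod Q) k).symm.toEquiv
  refine ⟨fun v b => (ε (c v) : Polynomial (ZMod Q)).eval b, fun u v huv h => ?_⟩
  have hne : c u ≠ c v := hc u (mem_univ _) v (by simp) huv.symm h
  set p := (ε (c u) : Polynomial (ZMod Q)) - (ε (c v) : Polynomial (ZMod Q)) with hp
  have hp0 : p ≠ 0 := by
    intro h0
    rw [hp, sub_eq_zero] at h0
    exact hne (ε.injective (Subtype.ext h0))
  have hpd : p.degree < k := by
    have : p ∈ Polynomial.degreeLT (ZMod Q) k := Submodule.sub_mem _ (ε (c u)).2 (ε (c v)).2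
    exact Polynomial.mem_degreeLT.1 this
  calc _ ≤ p.roots.toFinset.card := by
        apply card_le_card
        intro b hb
        simp only [mem_filter, mem_univ, true_and] at hb
        rw [Multiset.mem_toFinset, Polynomial.mem_roots hp0]
        simp [hp, hb]
    _ ≤ p.roots.card := Multiset.toFinset_card_le _
    _ ≤ p.natDegree := p.card_roots'
    _ ≤ k := (Polynomial.natDegree_lt_iff_degree_lt hp0).2 hpd |>.le

end Reductions
end IncFree

/-! ### Extra classes between heavy vertices -/

namespace IncFree

open Finset

section EdgeRounding

variable {V : Type*} [Fintype V] [DecidableEq V] {G : SimpleGraph V} [DecidableRel G.Adj]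

theorem LightHeavy.unique {L : ℕ} {w v w' v' : V} (h : LightHeavy G L w v)
    (h' : LightHeavy G L w' v') (he : s(w, v) = s(w', v')) : w = w' ∧ v = v' := by
  rcases Sym2.eq_iff.1 he with h1 | ⟨rfl, rfl⟩
  · exact h1
  · have := h.1
    have := h'.2.1
    omega

/-- Rounding for edges. The units are the single edges between heavy vertices and the groups; a group
chooses a common option, from which `lhc` computes the class of each of its edges. At every heavy
vertex, the number of edges in a class differs from its expectation under uniform independent choices
by at most `4 * δ`. -/
theorem exists_edge_rounding {L δ : ℕ} (hδ : 1 ≤ δ) (𝒢 : Groups G L δ) {O R : Type*} [Fintype O]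
    [Fintype R] [DecidableEq O] [DecidableEq R]
    (opt : Sym2 V ⊕ (V × Finset V) → Finset O) (hopt : ∀ u, (opt u).Nonempty)
    (hhc : Sym2 V → O → Option R) (lhc : V → Finset V → V → O → Option R) :
    ∃ (cls : Sym2 V → Option R) (f : Sym2 V ⊕ (V × Finset V) → O), (∀ u, f u ∈ opt u) ∧
      (∀ u v, L ≤ G.degree u → L ≤ G.degree v → cls s(u, v) = hhc s(u, v) (f (Sum.inl s(u, v)))) ∧
      (∀ w v, LightHeavy G L w v →
        cls s(w, v) = lhc w (𝒢.grp w v) v (f (Sum.inr (w, 𝒢.grp w v)))) ∧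
      ∀ v, L ≤ G.degree v → ∀ r,
        |(((G.neighborFinset v).filter (fun x => cls s(v, x) = some r)).card : ℝ) -
          ∑ x ∈ G.neighborFinset v, if L ≤ G.degree x then
            (((opt (Sum.inl s(v, x))).filter (fun o => hhc s(v, x) o = some r)).card : ℝ) /
              (opt (Sum.inl s(v, x))).card
          else
            (((opt (Sum.inr (x, 𝒢.grp x v))).filter
              (fun o => lhc x (𝒢.grp x v) v o = some r)).card : ℝ) /
              (opt (Sum.inr (x, 𝒢.grp x v))).card| ≤ 4 * δ := by
  classical
  let valid : V × Finset V → Prop := fun p => ∃ v, LightHeavy G L p.1 v ∧ p.2 = 𝒢.grp p.1 v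
  let inc : Sym2 V ⊕ (V × Finset V) → O → Finset (V × R) := fun u o =>
    match u with
    | Sum.inl e => if e ∈ G.edgeSet ∧ ∀ v ∈ e, L ≤ G.degree v then
        (e.toFinset ×ˢ univ).filter (fun p => hhc e o = some p.2) else ∅
    | Sum.inr p => if valid p then
        (p.2 ×ˢ univ).filter (fun q => lhc p.1 p.2 q.1 o = some q.2) else ∅
  -- a set of pairs that is functional over a set of vertices is no larger than that set
  have hfun : ∀ (S : Finset V) (h : V → Option R),
      ((S ×ˢ (univ : Finset R)).filter (fun q => h q.1 = some q.2)).card ≤ S.card := by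
    intro S h
    apply card_le_card_of_injOn Prod.fst
    · intro q hq
      simp only [coe_filter, mem_product, Set.mem_ofPred_eq] at hq
      exact hq.1.1
    · rintro ⟨a, b⟩ hq ⟨a', b'⟩ hq' h1
      simp only [coe_filter, mem_product, Set.mem_ofPred_eq] at hq hq' h1
      subst h1
      have := hq.2.symm.trans hq'.2
      simp only [Option.some.injEq] at this
      rw [this]
  have hinc : ∀ u o, (inc u o).card ≤ 2 * δ := by
    rintro (e | p) o
    · simp only [inc]
      split_ifs
      · refine (hfun e.toFinset (fun _ => hhc e o)).trans ?_
        have : e.toFinset.card ≤ 2 := by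
          rw [Sym2.card_toFinset]; split_ifs <;> omega
        omega
      · simp
    · simp only [inc]
      split_ifs with h
      · obtain ⟨v, h1, h2⟩ := h
        refine (hfun p.2 (fun v => lhc p.1 p.2 v o)).trans ?_
        rw [h2]
        exact 𝒢.card_le _ _ h1
      · simp
  obtain ⟨f, hf, hround⟩ := exists_uniform_rounding (2 * δ) inc hinc opt hopt
  let cls : Sym2 V → Option R := fun e =>
    if h : ∃ p : V × V, LightHeavy G L p.1 p.2 ∧ e = s(p.1, p.2) then
      lhc h.choose.1 (𝒢.grp h.choose.1 h.choose.2) h.choose.2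
        (f (Sum.inr (h.choose.1, 𝒢.grp h.choose.1 h.choose.2)))
    else hhc e (f (Sum.inl e))
  have hcls1 : ∀ u v, L ≤ G.degree u → L ≤ G.degree v →
      cls s(u, v) = hhc s(u, v) (f (Sum.inl s(u, v))) := by
    intro u v hu hv
    simp only [cls]
    rw [dif_neg]
    rintro ⟨⟨a, b⟩, h1, h2⟩
    have : G.degree a < L := h1.1
    rcases Sym2.eq_iff.1 h2 with ⟨rfl, _⟩ | ⟨_, rfl⟩ <;> omega
  have hcls2 : ∀ w v, LightHeavy G L w v →
      cls s(w, v) = lhc w (𝒢.grp w v) v (f (Sum.inr (w, 𝒢.grp w v))) := by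
    intro w v h
    have hex : ∃ p : V × V, LightHeavy G L p.1 p.2 ∧ s(w, v) = s(p.1, p.2) := ⟨(w, v), h, rfl⟩
    simp only [cls]
    rw [dif_pos hex]
    obtain ⟨h1, h2⟩ := h.unique hex.choose_spec.1 hex.choose_spec.2
    rw [← h1, ← h2]
  refine ⟨cls, f, hf, hcls1, hcls2, fun v hv r => ?_⟩
  -- the units touching `v` correspond to the neighbours of `v`
  let φ : V → Sym2 V ⊕ (V × Finset V) := fun x =>
    if L ≤ G.degree x then Sum.inl s(v, x) else Sum.inr (x, 𝒢.grp x v)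
  have hφ : Set.InjOn φ (G.neighborFinset v) := by
    intro x _ y _ hxy
    simp only [φ] at hxy
    split_ifs at hxy with h1 h2 h2
    · exact Sym2.congr_right.1 (Sum.inl.inj hxy)
    · exact congrArg Prod.fst (Sum.inr.inj hxy)
  have hmem : ∀ x ∈ G.neighborFinset v, ∀ o, ((v, r) ∈ inc (φ x) o ↔
      if L ≤ G.degree x then hhc s(v, x) o = some r else lhc x (𝒢.grp x v) v o = some r) := by
    intro x hx o
    have hx : G.Adj v x := by simpa using hx
    simp only [φ]
    split_ifs with h1
    · simp only [inc]
      rw [if_pos]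
      · simp
      · refine ⟨hx, ?_⟩
        intro y hy
        rcases Sym2.mem_iff.1 hy with rfl | rfl <;> assumption
    · have hlh : LightHeavy G L x v := ⟨by omega, hv, hx.symm⟩
      simp only [inc]
      rw [if_pos ⟨v, hlh, rfl⟩]
      simp [𝒢.self_mem x v hlh]
  have hout : ∀ u o, (v, r) ∈ inc u o → u ∈ (G.neighborFinset v).image φ := by
    rintro (e | ⟨w, Y⟩) o h
    · simp only [inc] at h
      split_ifs at h with h1
      · simp only [mem_filter, mem_product, Sym2.mem_toFinset] at h
        obtain ⟨x, rfl⟩ := h.1.1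
        refine mem_image.2 ⟨x, by simpa using h1.1, ?_⟩
        simp only [φ]
        rw [if_pos (h1.2 x (by simp))]
      · simp at h
    · simp only [inc] at h
      split_ifs at h with h1
      · obtain ⟨y, hy, hY⟩ := h1
        simp only at hy hY
        simp only [mem_filter, mem_product] at h
        have hvY := h.1.1
        rw [hY] at hvY
        have hlh := 𝒢.mem_lh w y v hy hvY
        refine mem_image.2 ⟨w, by simpa using hlh.2.2.symm, ?_⟩
        simp only [φ]
        rw [if_neg (by have := hlh.1; omega), hY, 𝒢.grp_eq w y v hy hvY]
      · simp at h
  have hr := hround (v, r)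
  have e1 : (univ.filter (fun u => (v, r) ∈ inc u (f u))).card =
      ((G.neighborFinset v).filter (fun x => cls s(v, x) = some r)).card := by
    have : univ.filter (fun u => (v, r) ∈ inc u (f u)) =
        ((G.neighborFinset v).filter (fun x => cls s(v, x) = some r)).image φ := by
      have hx' : ∀ x ∈ G.neighborFinset v, (cls s(v, x) = some r ↔ (v, r) ∈ inc (φ x) (f (φ x))) := by
        intro x hx
        rw [hmem x hx]
        have hx : G.Adj v x := by simpa using hx
        simp only [φ]
        split_ifs with h1
        · rw [hcls1 v x hv h1]
        · have hlh : LightHeavy G L x v := ⟨by omega, hv, hx.symm⟩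
          rw [Sym2.eq_swap, hcls2 x v hlh]
      ext u
      simp only [mem_filter, mem_univ, true_and, mem_image]
      constructor
      · intro h
        obtain ⟨x, hx, rfl⟩ := mem_image.1 (hout u _ h)
        exact ⟨x, ⟨hx, (hx' x hx).2 h⟩, rfl⟩
      · rintro ⟨x, ⟨hx, h⟩, rfl⟩
        exact (hx' x hx).1 h
    rw [this, card_image_of_injOn (hφ.mono (coe_subset.2 (filter_subset _ _)))]
  have e2 : ∑ u, (((opt u).filter (fun o => (v, r) ∈ inc u o)).card : ℝ) / (opt u).card =
      ∑ x ∈ G.neighborFinset v, if L ≤ G.degree x then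
            (((opt (Sum.inl s(v, x))).filter (fun o => hhc s(v, x) o = some r)).card : ℝ) /
              (opt (Sum.inl s(v, x))).card
          else
            (((opt (Sum.inr (x, 𝒢.grp x v))).filter
              (fun o => lhc x (𝒢.grp x v) v o = some r)).card : ℝ) /
              (opt (Sum.inr (x, 𝒢.grp x v))).card := by
    rw [← sum_subset (subset_univ ((G.neighborFinset v).image φ))]
    · rw [sum_image hφ]
      apply sum_congr rfl
      intro x hx
      have h1 := hmem x hx
      simp only [h1]
      simp only [φ]
      split_ifs with h2
      · rfl
      · rfl
    · intro u _ hu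
      have : (opt u).filter (fun o => (v, r) ∈ inc u o) = ∅ := by
        apply filter_eq_empty_iff.2
        intro o _ h
        exact hu (hout u o h)
      simp [this]
  rw [e1, e2] at hr
  refine hr.trans (le_of_eq ?_)
  push_cast
  ring

end EdgeRounding

section Extra

variable {V : Type*} [Fintype V] [DecidableEq V] {G : SimpleGraph V} [DecidableRel G.Adj]

/-- The assignment of extra classes: groups are either entirely extra or entirely not, a heavy vertex
`v` has no edge in a class `(b, g v b)`, every heavy `u` has for each heavy neighbour `v` an edge in a
class avoided by `v`, and few edges at a heavy vertex are extra. The options are the `Q ^ 2` classes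
together with `M` dummies that leave a unit without an extra class. -/
theorem exists_extra_classes {L δ Δ Q k M : ℕ} [Fact Q.Prime] (hδ : 1 ≤ δ) (𝒢 : Groups G L δ)
    (hmax : ∀ v, G.degree v ≤ Δ) (g : V → ZMod Q → ZMod Q)
    (hg : ∀ u v, u ≠ v → (G.Adj u v ∨ ∃ x, G.Adj u x ∧ G.Adj x v) →
      (univ.filter (fun b => g u b = g v b)).card ≤ k)
    (hQk : 2 * k < Q) (hL : 4 * δ * Q * (Q ^ 2 + M) + 1 < L) :
    ∃ cls : Sym2 V → Option (ZMod Q × ZMod Q),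
      (∀ w v y, LightHeavy G L w v → y ∈ 𝒢.grp w v → cls s(w, v) ≠ none → cls s(w, y) ≠ none) ∧
      (∀ u v r, L ≤ G.degree v → G.Adj v u → cls s(v, u) = some r → g v r.1 ≠ r.2) ∧
      (∀ u v, L ≤ G.degree u → L ≤ G.degree v → G.Adj u v →
        ∃ x r, G.Adj u x ∧ cls s(u, x) = some r ∧ g v r.1 = r.2) ∧
      ∀ v, L ≤ G.degree v →
        (((G.neighborFinset v).filter (fun x => cls s(v, x) ≠ none)).card : ℝ) ≤
          Q ^ 2 * ((Δ : ℝ) / (Q ^ 2 + M) + 4 * δ) := by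
  classical
  have hQ : 0 < Q := (Fact.out : Q.Prime).pos
  have hO : (univ : Finset ((ZMod Q × ZMod Q) ⊕ Fin M)).card = Q ^ 2 + M := by
    simp [ZMod.card, sq]
  let hhc : Sym2 V → ((ZMod Q × ZMod Q) ⊕ Fin M) → Option (ZMod Q × ZMod Q) := fun e =>
    Sum.elim (fun r => if ∀ v ∈ e, g v r.1 ≠ r.2 then some r else none) (fun _ => none)
  let lhc : V → Finset V → V → ((ZMod Q × ZMod Q) ⊕ Fin M) → Option (ZMod Q × ZMod Q) := fun _ _ v =>
    Sum.elim (fun r => if r.2 ≠ 0 then some (r.1, g v r.1 + r.2) else none) (fun _ => none)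
  obtain ⟨cls, f, -, h1, h2, h3⟩ := exists_edge_rounding (O := ((ZMod Q × ZMod Q) ⊕ Fin M)) hδ 𝒢 (fun _ => univ)
    (fun _ => ⟨Sum.inl (0, 0), mem_univ _⟩) hhc lhc
  have hN : (0 : ℝ) < Q ^ 2 + M := by positivity
  have hhc_some : ∀ e o r, hhc e o = some r ↔ o = Sum.inl r ∧ ∀ v ∈ e, g v r.1 ≠ r.2 := by
    rintro e (q | q) r
    · simp only [hhc, Sum.elim_inl]
      split_ifs with h
      · simp only [Option.some.injEq, Sum.inl.injEq]
        constructor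
        · rintro rfl; exact ⟨rfl, h⟩
        · exact fun h => h.1
      · simp only [reduceCtorEq, false_iff, Sum.inl.injEq]
        rintro ⟨rfl, h'⟩
        exact h h'
    · simp [hhc]
  have lhc_some : ∀ w Y v o r, lhc w Y v o = some r ↔
      o = Sum.inl (r.1, r.2 - g v r.1) ∧ g v r.1 ≠ r.2 := by
    rintro w Y v (⟨b, τ⟩ | q) ⟨b', s⟩
    · simp only [lhc, Sum.elim_inl]
      split_ifs with h
      · simp only [Option.some.injEq, Sum.inl.injEq, Prod.mk.injEq]
        constructor
        · rintro ⟨rfl, rfl⟩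
          exact ⟨⟨rfl, by ring⟩, by simpa using h⟩
        · rintro ⟨⟨rfl, rfl⟩, _⟩
          exact ⟨rfl, by ring⟩
      · simp only [reduceCtorEq, false_iff, Sum.inl.injEq, Prod.mk.injEq]
        rintro ⟨⟨rfl, rfl⟩, h'⟩
        exact h (sub_ne_zero.2 h'.symm)
    · simp [lhc]
  have lhc_none : ∀ w Y v w' Y' v' o, lhc w Y v o = none → lhc w' Y' v' o = none := by
    rintro w Y v w' Y' v' (⟨b, τ⟩ | q) h
    · simp only [lhc, Sum.elim_inl] at h ⊢
      split_ifs at h ⊢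
      rfl
    · simp [lhc]
  have h3' := h3
  simp only [hO] at h3'
  -- the fractional load of a class at a vertex
  have hload : ∀ v, L ≤ G.degree v → ∀ r, ∀ x ∈ G.neighborFinset v,
      (if L ≤ G.degree x then
          (((univ : Finset ((ZMod Q × ZMod Q) ⊕ Fin M)).filter (fun o => hhc s(v, x) o = some r)).card : ℝ) /
            ((Q ^ 2 + M : ℕ) : ℝ)
        else (((univ : Finset ((ZMod Q × ZMod Q) ⊕ Fin M)).filter (fun o => lhc x (𝒢.grp x v) v o = some r)).card : ℝ) /
            ((Q ^ 2 + M : ℕ) : ℝ)) =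
      if g v r.1 ≠ r.2 ∧ (L ≤ G.degree x → g x r.1 ≠ r.2) then 1 / ((Q : ℝ) ^ 2 + M) else 0 := by
    intro v hv r x hx
    split_ifs with ha hb hb
    · have : (univ : Finset ((ZMod Q × ZMod Q) ⊕ Fin M)).filter (fun o => hhc s(v, x) o = some r) = {Sum.inl r} := by
        ext o
        simp only [mem_filter, mem_univ, true_and, mem_singleton, hhc_some]
        refine ⟨fun h => h.1, fun h => ⟨h, ?_⟩⟩
        intro y hy
        rcases Sym2.mem_iff.1 hy with rfl | rfl
        · exact hb.1
        · exact hb.2 ha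
      rw [this]
      simp
    · have : (univ : Finset ((ZMod Q × ZMod Q) ⊕ Fin M)).filter (fun o => hhc s(v, x) o = some r) = ∅ := by
        apply filter_eq_empty_iff.2
        intro o _ h
        rw [hhc_some] at h
        exact hb ⟨h.2 v (by simp), fun _ => h.2 x (by simp)⟩
      rw [this]
      simp
    · have : (univ : Finset ((ZMod Q × ZMod Q) ⊕ Fin M)).filter (fun o => lhc x (𝒢.grp x v) v o = some r) =
          {Sum.inl (r.1, r.2 - g v r.1)} := by
        ext o
        simp only [mem_filter, mem_univ, true_and, mem_singleton, lhc_some]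
        exact ⟨fun h => h.1, fun h => ⟨h, hb.1⟩⟩
      rw [this]
      simp
    · have : (univ : Finset ((ZMod Q × ZMod Q) ⊕ Fin M)).filter (fun o => lhc x (𝒢.grp x v) v o = some r) = ∅ := by
        apply filter_eq_empty_iff.2
        intro o _ h
        have h' := (lhc_some x (𝒢.grp x v) v o r).1 h
        exact hb ⟨h'.2, fun h => absurd h ha⟩
      rw [this]
      simp
  have h4 : ∀ v, L ≤ G.degree v → ∀ r,
      |(((G.neighborFinset v).filter (fun x => cls s(v, x) = some r)).card : ℝ) -
        (((G.neighborFinset v).filter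
            (fun x => g v r.1 ≠ r.2 ∧ (L ≤ G.degree x → g x r.1 ≠ r.2))).card : ℝ)
          * (1 / ((Q : ℝ) ^ 2 + M))| ≤ (4 * δ : ℝ) := by
    intro v hv r
    have h5 := h3' v hv r
    rw [sum_congr rfl (hload v hv r), ← sum_filter, sum_const, nsmul_eq_mul] at h5
    exact h5
  refine ⟨cls, ?_, ?_, ?_, ?_⟩
  · intro w v y hlh hy hne h0
    apply hne
    rw [h2 w y (𝒢.mem_lh w v y hlh hy), 𝒢.grp_eq w v y hlh hy] at h0
    rw [h2 w v hlh]
    exact lhc_none w (𝒢.grp w v) y w (𝒢.grp w v) v _ h0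
  · intro u v r hv hvu hr
    by_cases hu : L ≤ G.degree u
    · rw [h1 v u hv hu, hhc_some] at hr
      exact hr.2 v (by simp)
    · rw [Sym2.eq_swap, h2 u v ⟨by omega, hv, hvu.symm⟩] at hr
      exact ((lhc_some u (𝒢.grp u v) v _ r).1 hr).2
  · intro u v hu hv huv
    -- some class `(b, g v b)` must have positive load at `u`: for each neighbour `x` of `u` other
    -- than `v` some `b` has `g v b` different from `g u b` and `g x b`, so by double counting over
    -- `b` the total expected load of the classes avoided by `v` exceeds the total rounding error
    let ok : ZMod Q → V → Prop := fun b x => g u b ≠ g v b ∧ (L ≤ G.degree x → g x b ≠ g v b)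
    have hok : ∀ x ∈ (G.neighborFinset u).erase v, 1 ≤ (univ.filter (fun b => ok b x)).card := by
      intro x hx
      have hxv : x ≠ v := (mem_erase.1 hx).1
      have hux : G.Adj u x := by simpa using (mem_erase.1 hx).2
      have hu1 := hg u v huv.ne (Or.inl huv)
      have hx1 := hg x v hxv (Or.inr ⟨u, hux.symm, huv⟩)
      have hcov : (univ : Finset (ZMod Q)) ⊆ univ.filter (fun b => ok b x) ∪
          (univ.filter (fun b => g u b = g v b) ∪ univ.filter (fun b => g x b = g v b)) := by
        intro b _
        simp only [mem_union, mem_filter, mem_univ, true_and, ok]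
        tauto
      have := card_le_card hcov
      have h5 := card_union_le (univ.filter (fun b => ok b x))
          (univ.filter (fun b => g u b = g v b) ∪ univ.filter (fun b => g x b = g v b))
      have h6 := card_union_le (univ.filter (fun b => g u b = g v b))
        (univ.filter (fun b => g x b = g v b))
      rw [card_univ, ZMod.card] at this
      omega
    have hsum : L - 1 ≤ ∑ b : ZMod Q, ((G.neighborFinset u).filter (fun x => ok b x)).card := by
      calc L - 1 ≤ ((G.neighborFinset u).erase v).card := by
            have := pred_card_le_card_erase (s := G.neighborFinset u) (a := v)
            rw [G.card_neighborFinset_eq_degree] at this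
            omega
        _ = ∑ x ∈ (G.neighborFinset u).erase v, 1 := by simp
        _ ≤ ∑ x ∈ (G.neighborFinset u).erase v, (univ.filter (fun b => ok b x)).card :=
            sum_le_sum hok
        _ ≤ ∑ x ∈ G.neighborFinset u, (univ.filter (fun b => ok b x)).card :=
            sum_le_sum_of_subset (erase_subset _ _)
        _ = _ := (sum_card_bipartiteAbove_eq_sum_card_bipartiteBelow _).symm
    obtain ⟨b, hb⟩ : ∃ b : ZMod Q,
        4 * δ * (Q ^ 2 + M) < ((G.neighborFinset u).filter (fun x => ok b x)).card := by
      by_contra! h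
      have h5 := sum_le_sum (fun b (_ : b ∈ (univ : Finset (ZMod Q))) => h b)
      rw [sum_const, card_univ, ZMod.card, smul_eq_mul] at h5
      have : Q * (4 * δ * (Q ^ 2 + M)) = 4 * δ * Q * (Q ^ 2 + M) := by ring
      omega
    have h5 := h4 u hu (b, g v b)
    have hpos : 0 < ((G.neighborFinset u).filter
        (fun x => cls s(u, x) = some (b, g v b))).card := by
      by_contra! h0
      rw [Nat.le_zero.1 h0] at h5
      rw [Nat.cast_zero, zero_sub, abs_neg, abs_of_nonneg (by positivity), mul_one_div,
        div_le_iff₀ hN] at h5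
      have hb' : (4 * δ * (Q ^ 2 + M) : ℝ) <
          ((G.neighborFinset u).filter (fun x => ok b x)).card := by exact_mod_cast hb
      exact absurd h5 (not_le.2 hb')
    obtain ⟨x, hx⟩ := card_pos.1 hpos
    rw [mem_filter] at hx
    exact ⟨x, (b, g v b), by simpa using hx.1, hx.2, rfl⟩
  · intro v hv
    have hone : ∀ r, (((G.neighborFinset v).filter (fun x => cls s(v, x) = some r)).card : ℝ) ≤
        (Δ : ℝ) / (Q ^ 2 + M) + 4 * δ := by
      intro r
      have h5 := (abs_le.1 (h4 v hv r)).2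
      have h6 : (((G.neighborFinset v).filter
          (fun x => g v r.1 ≠ r.2 ∧ (L ≤ G.degree x → g x r.1 ≠ r.2))).card : ℝ) *
            (1 / ((Q : ℝ) ^ 2 + M)) ≤ (Δ : ℝ) / (Q ^ 2 + M) := by
        rw [mul_one_div]
        gcongr
        refine (card_filter_le _ _).trans ?_
        rw [G.card_neighborFinset_eq_degree]
        exact hmax v
      linarith
    have hcov : (G.neighborFinset v).filter (fun x => cls s(v, x) ≠ none) ⊆
        (univ : Finset (ZMod Q × ZMod Q)).biUnion
          (fun r => (G.neighborFinset v).filter (fun x => cls s(v, x) = some r)) := by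
      intro x hx
      rw [mem_filter] at hx
      obtain ⟨r, hr⟩ := Option.ne_none_iff_exists'.1 hx.2
      rw [mem_biUnion]
      exact ⟨r, mem_univ _, mem_filter.2 ⟨hx.1, hr⟩⟩
    have h6 := (card_le_card hcov).trans card_biUnion_le
    have h7 : (((G.neighborFinset v).filter (fun x => cls s(v, x) ≠ none)).card : ℝ) ≤
        ∑ r : ZMod Q × ZMod Q,
          (((G.neighborFinset v).filter (fun x => cls s(v, x) = some r)).card : ℝ) := by
      exact_mod_cast h6
    refine h7.trans ((sum_le_sum (fun r _ => hone r)).trans (le_of_eq ?_))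
    rw [sum_const, card_univ, Fintype.card_prod, ZMod.card, nsmul_eq_mul]
    push_cast
    ring

end Extra
end IncFree

/-! ### Assembling the colouring -/

namespace IncFree

open Finset

section Assembly

variable {V : Type*} [Fintype V] [DecidableEq V] {G : SimpleGraph V} [DecidableRel G.Adj]

/-- An edge is main if it has a heavy end and no extra class. -/
def IsMain {R : Type*} (G : SimpleGraph V) [DecidableRel G.Adj] (L : ℕ) (cls : Sym2 V → Option R)
    (e : Sym2 V) : Prop :=
  e ∈ G.edgeSet ∧ (∃ v ∈ e, L ≤ G.degree v) ∧ cls e = none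

/-- The targets permute each group of a light vertex without light neighbours. -/
theorem Groups.exists_tgt_eq {L δ : ℕ} (𝒢 : Groups G L δ) {w v : V} (h : LightHeavy G L w v)
    (hl : ¬ HasLightNbr G L w) : ∃ x ∈ 𝒢.grp w v, 𝒢.tgt w x = v := by
  have hmaps : ∀ x ∈ 𝒢.grp w v, 𝒢.tgt w x ∈ 𝒢.grp w v := by
    intro x hx
    have := 𝒢.tgt_mem w x (𝒢.mem_lh w v x h hx) hl
    rwa [𝒢.grp_eq w v x h hx] at this
  have hinj : Set.InjOn (𝒢.tgt w) (𝒢.grp w v) := by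
    intro x hx y hy hxy
    exact 𝒢.tgt_inj w x y (𝒢.mem_lh w v x h hx) (𝒢.mem_lh w v y h hy) hl hxy
  have := surjOn_of_injOn_of_card_le _ hmaps hinj le_rfl
  obtain ⟨x, hx, hxv⟩ := this (𝒢.self_mem w v h)
  exact ⟨x, hx, hxv⟩

theorem card_edgesAt_le_of_image {A : Finset (Sym2 V)} {v : V} {S : Finset V}
    (h : ∀ x, s(v, x) ∈ A → x ∈ S) : (edgesAt A v).card ≤ S.card := by
  refine (card_le_card (t := S.image (fun x => s(v, x))) ?_).trans card_image_le
  intro e he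
  simp only [edgesAt, mem_filter] at he
  obtain ⟨hA, x, rfl⟩ := he
  exact mem_image.2 ⟨x, h x hA, rfl⟩

/-- Assembling the colouring from a strong colouring of the edges between light vertices, a target
colouring of each extra class and a given colouring `cm` of the main edges, with disjoint sets of
colours. The conditions `hcm₁` and `hcm₂` on `cm` concern the light vertices that the other colours do
not separate: those without a light neighbour, and those with exactly one. -/
theorem inclusionChromaticIndex_le_of_main {L δ Q D : ℕ} [NeZero Q] (𝒢 : Groups G L δ)
    (hδ : 2 ≤ δ) (hdeg : ∀ v, δ ≤ G.degree v) (hLD : L ≤ D) (g : V → ZMod Q → ZMod Q)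
    (cls : Sym2 V → Option (ZMod Q × ZMod Q))
    (hclosed : ∀ w v y, LightHeavy G L w v → y ∈ 𝒢.grp w v → cls s(w, v) ≠ none →
      cls s(w, y) ≠ none)
    (havoid : ∀ u v r, L ≤ G.degree v → G.Adj v u → cls s(v, u) = some r → g v r.1 ≠ r.2)
    (hcover : ∀ u v, L ≤ G.degree u → L ≤ G.degree v → G.Adj u v →
        ∃ x r, G.Adj u x ∧ cls s(u, x) = some r ∧ g v r.1 = r.2)
    (hD : ∀ v, L ≤ G.degree v →
        ((G.neighborFinset v).filter (fun x => cls s(v, x) ≠ none)).card ≤ D)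
    {K : Type*} [Fintype K] (cm : Sym2 V → K)
    (hcm : ∀ u v w, IsMain G L cls s(u, v) → IsMain G L cls s(u, w) → v ≠ w →
      cm s(u, v) ≠ cm s(u, w))
    (hcm₁ : ∀ w v, LightHeavy G L w v → ¬ HasLightNbr G L w → IsMain G L cls s(w, v) →
      ∃ x ∈ 𝒢.grp w v, ∀ y, IsMain G L cls s(v, y) → cm s(w, x) ≠ cm s(v, y))
    (hcm₂ : ∀ w z, G.degree w < L → G.degree z < L → G.Adj w z → Prec G w z →
      (∀ z', G.Adj w z' → G.degree z' < L → z' = z) →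
      ∃ x, LightHeavy G L w x ∧
        (IsMain G L cls s(w, x) → ∀ y, IsMain G L cls s(z, y) → cm s(w, x) ≠ cm s(z, y))) :
    inclusionChromaticIndex G ≤
      (2 * L ^ 2 + 1) + (Q ^ 2 * (3 * D + L + L ^ 2 + 1) + Fintype.card K) := by
  classical
  -- the subgraph of edges between light vertices
  let H : SimpleGraph V :=
    { Adj := fun u v => G.Adj u v ∧ G.degree u < L ∧ G.degree v < L
      symm := ⟨fun u v h => ⟨h.1.symm, h.2.2, h.2.1⟩⟩
      loopless := ⟨fun u h => G.loopless.irrefl u h.1⟩ }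
  have hHd : ∀ v, H.degree v ≤ L := by
    intro v
    by_cases hv : G.degree v < L
    · refine le_trans ?_ hv.le
      rw [← H.card_neighborFinset_eq_degree, ← G.card_neighborFinset_eq_degree]
      apply card_le_card
      intro x hx
      rw [SimpleGraph.mem_neighborFinset] at hx ⊢
      exact hx.1
    · have : H.neighborFinset v = ∅ := by
        apply eq_empty_of_forall_notMem
        intro x hx
        rw [SimpleGraph.mem_neighborFinset] at hx
        exact hv hx.2.1
      rw [← H.card_neighborFinset_eq_degree, this]
      simp
  obtain ⟨cL, hcL⟩ := exists_strong_coloring H L hHd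
  let A : Finset (Sym2 V) := univ.filter (fun e => e ∈ G.edgeSet ∧ (∃ v ∈ e, L ≤ G.degree v) ∧
    cls e ≠ none)
  have hAmem : ∀ e, e ∈ A ↔ e ∈ G.edgeSet ∧ (∃ v ∈ e, L ≤ G.degree v) ∧ cls e ≠ none := by
    simp [A]
  obtain ⟨cE, hcE, hcE'⟩ := exists_target_coloring 𝒢 hLD A (fun e he => ((hAmem e).1 he).1)
    (fun e he => ((hAmem e).1 he).2.1)
    (by
      intro w v y h h1 hy
      have hy' := 𝒢.mem_lh w v y h hy
      exact (hAmem _).2 ⟨hy'.2.2, ⟨y, by simp, hy'.2.1⟩, hclosed w v y h hy ((hAmem _).1 h1).2.2⟩)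
    (by
      intro v hv
      refine (card_edgesAt_le_of_image ?_).trans (hD v hv)
      intro x hx
      have hx := (hAmem _).1 hx
      exact mem_filter.2 ⟨by simpa using hx.1, hx.2.2⟩)
  let c : Sym2 V → Fin (2 * L ^ 2 + 1) ⊕
      (((ZMod Q × ZMod Q) × Fin (3 * D + L + L ^ 2 + 1)) ⊕ K) := fun e =>
    if ∃ v ∈ e, L ≤ G.degree v then
      (cls e).elim (Sum.inr (Sum.inr (cm e))) (fun r => Sum.inr (Sum.inl (r, cE e)))
    else Sum.inl (cL e)
  have c_light : ∀ u v, G.degree u < L → G.degree v < L → c s(u, v) = Sum.inl (cL s(u, v)) := by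
    intro u v hu hv
    simp only [c]
    rw [if_neg]
    rintro ⟨x, hx, h⟩
    rcases Sym2.mem_iff.1 hx with rfl | rfl <;> omega
  have c_extra : ∀ e r, (∃ v ∈ e, L ≤ G.degree v) → cls e = some r →
      c e = Sum.inr (Sum.inl (r, cE e)) := by
    intro e r h h1
    simp only [c]
    rw [if_pos h, h1]
    rfl
  have c_main : ∀ e, (∃ v ∈ e, L ≤ G.degree v) → cls e = none →
      c e = Sum.inr (Sum.inr (cm e)) := by
    intro e h h1
    simp only [c]
    rw [if_pos h, h1]
    rfl
  -- the three kinds of edges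
  have kinds : ∀ u v, G.Adj u v → (G.degree u < L ∧ G.degree v < L ∧
      c s(u, v) = Sum.inl (cL s(u, v))) ∨ (∃ r, s(u, v) ∈ A ∧ cls s(u, v) = some r ∧
      c s(u, v) = Sum.inr (Sum.inl (r, cE s(u, v)))) ∨
      (IsMain G L cls s(u, v) ∧ c s(u, v) = Sum.inr (Sum.inr (cm s(u, v)))) := by
    intro u v huv
    by_cases h : ∃ x ∈ s(u, v), L ≤ G.degree x
    · right
      rcases hc : cls s(u, v) with _ | r
      · exact Or.inr ⟨⟨huv, h, hc⟩, c_main _ h hc⟩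
      · exact Or.inl ⟨r, (hAmem _).2 ⟨huv, h, by simp [hc]⟩, rfl, c_extra _ r h hc⟩
    · push Not at h
      have hu := h u (by simp)
      have hv := h v (by simp)
      exact Or.inl ⟨hu, hv, c_light u v hu hv⟩
  have hcard : Fintype.card (Fin (2 * L ^ 2 + 1) ⊕
      (((ZMod Q × ZMod Q) × Fin (3 * D + L + L ^ 2 + 1)) ⊕ K)) =
      (2 * L ^ 2 + 1) + (Q ^ 2 * (3 * D + L + L ^ 2 + 1) + Fintype.card K) := by
    simp [ZMod.card, sq]
  rw [← hcard]
  refine inclusionChromaticIndex_le c ?_ ?_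
  · intro u v w huv huw hvw
    have hne : s(u, v) ≠ s(u, w) := fun h => hvw (Sym2.congr_right.1 h)
    rcases kinds u v huv with ⟨h1, h2, h3⟩ | ⟨r, h1, h2, h3⟩ | ⟨h1, h3⟩ <;>
    rcases kinds u w huw with ⟨h1', h2', h3'⟩ | ⟨r', h1', h2', h3'⟩ | ⟨h1', h3'⟩ <;>
    rw [h3, h3'] <;> intro h <;> simp only [reduceCtorEq, Sum.inl.injEq, Sum.inr.injEq] at h
    · exact hcL s(u, v) ⟨huv, h1, h2⟩ s(u, w) ⟨huw, h1', h2'⟩ hne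
        ⟨u, by simp, u, by simp, Or.inl rfl⟩ h
    · exact hcE u _ h1 _ h1' (by simp) (by simp) hne (Prod.mk.inj h).2
    · exact hcm u v w h1 h1' hvw h
  · intro u v huv hprec
    have hle := hprec.degree_le
    by_cases hv : L ≤ G.degree v
    · by_cases hu : L ≤ G.degree u
      · obtain ⟨x, r, hux, hr, hgr⟩ := hcover u v hu hv huv
        refine ⟨x, hux, fun y hvy => ?_⟩
        rw [c_extra _ r ⟨u, by simp, hu⟩ hr]
        rcases kinds v y hvy with ⟨h1, h2, h3⟩ | ⟨r', h1, h2, h3⟩ | ⟨h1, h3⟩ <;>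
          rw [h3] <;> intro h <;> simp only [reduceCtorEq, Sum.inl.injEq, Sum.inr.injEq] at h
        have := (Prod.mk.inj h).1
        subst this
        exact havoid y v r' hv hvy h2 hgr
      · have hlh : LightHeavy G L u v := ⟨by omega, hv, huv⟩
        by_cases hl : HasLightNbr G L u
        · obtain ⟨z, huz, hz⟩ := hl
          refine ⟨z, huz, fun y hvy => ?_⟩
          rw [c_light u z (by omega) hz]
          rcases kinds v y hvy with ⟨h1, h2, h3⟩ | ⟨r', h1, h2, h3⟩ | ⟨h1, h3⟩
          · omega
          · rw [h3]; simp
          · rw [h3]; simp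
        · rcases hc : cls s(u, v) with _ | r
          · obtain ⟨x, hx, hxy⟩ := hcm₁ u v hlh hl ⟨huv, ⟨v, by simp, hv⟩, hc⟩
            have hx' := 𝒢.mem_lh u v x hlh hx
            refine ⟨x, hx'.2.2, fun y hvy => ?_⟩
            have hcx : cls s(u, x) = none := by
              by_contra h
              refine hclosed u x v hx' ?_ h hc
              rw [𝒢.grp_eq u v x hlh hx]
              exact 𝒢.self_mem u v hlh
            rw [c_main _ ⟨x, by simp, hx'.2.1⟩ hcx]
            rcases kinds v y hvy with ⟨h1, h2, h3⟩ | ⟨r', h1, h2, h3⟩ | ⟨h1, h3⟩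
            · omega
            · rw [h3]; simp
            · rw [h3]
              intro h
              simp only [Sum.inr.injEq] at h
              exact hxy y h1 h.symm
          · obtain ⟨x, hx, hxy⟩ := 𝒢.exists_tgt_eq hlh hl
            have hx' := 𝒢.mem_lh u v x hlh hx
            refine ⟨x, hx'.2.2, fun y hvy => ?_⟩
            have hcx : cls s(u, x) ≠ none := hclosed u v x hlh hx (by simp [hc])
            obtain ⟨r', hr'⟩ := Option.ne_none_iff_exists'.1 hcx
            have hxA : s(u, x) ∈ A := (hAmem _).2 ⟨hx'.2.2, ⟨x, by simp, hx'.2.1⟩, hcx⟩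
            rw [c_extra _ r' ⟨x, by simp, hx'.2.1⟩ hr']
            rcases kinds v y hvy with ⟨h1, h2, h3⟩ | ⟨r'', h1, h2, h3⟩ | ⟨h1, h3⟩
            · omega
            · rw [h3]
              intro h
              simp only [Sum.inl.injEq, Sum.inr.injEq] at h
              exact hcE' u x hx' hxA s(v, y) h1 (by rw [hxy]; simp) (Prod.mk.inj h).2.symm
            · rw [h3]; simp
    · have hu : G.degree u < L := by omega
      by_cases hz : ∃ z', G.Adj u z' ∧ G.degree z' < L ∧ z' ≠ v
      · obtain ⟨x, hux, hx, hxv⟩ := hz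
        refine ⟨x, hux, fun y hvy => ?_⟩
        rw [c_light u x hu hx]
        rcases kinds v y hvy with ⟨h1, h2, h3⟩ | ⟨r'', h1, h2, h3⟩ | ⟨h1, h3⟩
        · rw [h3]
          intro h
          simp only [Sum.inl.injEq] at h
          refine hcL s(u, x) ⟨hux, hu, hx⟩ s(v, y) ⟨hvy, h1, h2⟩ ?_ ⟨u, by simp, v, by simp,
            Or.inr ⟨huv, hu, h1⟩⟩ h.symm
          intro he
          rcases Sym2.eq_iff.1 he with ⟨h4, _⟩ | ⟨_, h5⟩
          · exact huv.ne h4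
          · exact hxv h5
        · rw [h3]; simp
        · rw [h3]; simp
      · push Not at hz
        obtain ⟨x, hlh, hx⟩ := hcm₂ u v hu (by omega) huv hprec hz
        have huniq : HasLightNbr G L u := ⟨v, huv, by omega⟩
        refine ⟨x, hlh.2.2, fun y hvy => ?_⟩
        have hheavy : ∃ a ∈ s(u, x), L ≤ G.degree a := ⟨x, by simp, hlh.2.1⟩
        rcases hc : cls s(u, x) with _ | r
        · rw [c_main _ hheavy hc]
          rcases kinds v y hvy with ⟨h1, h2, h3⟩ | ⟨r'', h1, h2, h3⟩ | ⟨h1, h3⟩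
          · rw [h3]; simp
          · rw [h3]; simp
          · rw [h3]
            intro h
            simp only [Sum.inr.injEq] at h
            exact hx ⟨hlh.2.2, hheavy, hc⟩ y h1 h.symm
        · rw [c_extra _ r hheavy hc]
          rcases kinds v y hvy with ⟨h1, h2, h3⟩ | ⟨r'', h1, h2, h3⟩ | ⟨h1, h3⟩
          · rw [h3]; simp
          · rw [h3]
            intro h
            simp only [Sum.inl.injEq, Sum.inr.injEq] at h
            have hlv : 𝒢.lightNbr u = v :=
              hz _ (𝒢.lightNbr_adj u huniq) (𝒢.lightNbr_light u huniq)
            refine hcE' u x hlh ((hAmem _).2 ⟨hlh.2.2, hheavy, by simp [hc]⟩) s(v, y) h1 ?_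
              (Prod.mk.inj h).2.symm
            rw [𝒢.tgt_light u x hlh huniq, hlv]
            simp
          · rw [h3]; simp

/-- The main edges can be coloured by targets with about `3 * Δ` colours. This is good enough for
`δ = 2`, where `1 + 4 / δ = 3`. -/
theorem exists_main_coloring_of_targets {L δ Δ : ℕ} {R : Type*} (𝒢 : Groups G L δ)
    (hδ : 2 ≤ δ) (hdeg : ∀ v, δ ≤ G.degree v) (hmax : ∀ v, G.degree v ≤ Δ) (hLD : L ≤ Δ)
    (cls : Sym2 V → Option R)
    (hclosed : ∀ w v y, LightHeavy G L w v → y ∈ 𝒢.grp w v → cls s(w, v) ≠ none →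
      cls s(w, y) ≠ none) :
    ∃ cm : Sym2 V → Fin (3 * Δ + L + L ^ 2 + 1),
    (∀ u v w, IsMain G L cls s(u, v) → IsMain G L cls s(u, w) → v ≠ w →
      cm s(u, v) ≠ cm s(u, w)) ∧
    (∀ w v, LightHeavy G L w v → ¬ HasLightNbr G L w → IsMain G L cls s(w, v) →
      ∃ x ∈ 𝒢.grp w v, ∀ y, IsMain G L cls s(v, y) → cm s(w, x) ≠ cm s(v, y)) ∧
    (∀ w z, G.degree w < L → G.degree z < L → G.Adj w z → Prec G w z →
      (∀ z', G.Adj w z' → G.degree z' < L → z' = z) →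
      ∃ x, LightHeavy G L w x ∧
        (IsMain G L cls s(w, x) → ∀ y, IsMain G L cls s(z, y) → cm s(w, x) ≠ cm s(z, y))) := by
  classical
  let A : Finset (Sym2 V) := univ.filter (fun e => IsMain G L cls e)
  have hAmem : ∀ e, e ∈ A ↔ IsMain G L cls e := by simp [A]
  have hcl : ∀ w v y, LightHeavy G L w v → s(w, v) ∈ A → y ∈ 𝒢.grp w v → s(w, y) ∈ A := by
    intro w v y h h1 hy
    have hy' := 𝒢.mem_lh w v y h hy
    refine (hAmem _).2 ⟨hy'.2.2, ⟨y, by simp, hy'.2.1⟩, ?_⟩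
    by_contra hne
    refine hclosed w y v hy' ?_ hne ((hAmem _).1 h1).2.2
    rw [𝒢.grp_eq w v y h hy]
    exact 𝒢.self_mem w v h
  obtain ⟨c, h1, h2⟩ := exists_target_coloring 𝒢 hLD A (fun e he => ((hAmem e).1 he).1)
    (fun e he => ((hAmem e).1 he).2.1) hcl
    (fun v _ => (card_edgesAt_le_degree (fun e he => ((hAmem e).1 he).1) v).trans (hmax v))
  refine ⟨c, ?_, ?_, ?_⟩
  · intro u v w hv hw hvw
    exact h1 u _ ((hAmem _).2 hv) _ ((hAmem _).2 hw) (by simp) (by simp)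
      (fun h => hvw (Sym2.congr_right.1 h))
  · intro w v h hl hm
    obtain ⟨x, hx, hxv⟩ := 𝒢.exists_tgt_eq h hl
    refine ⟨x, hx, fun y hy => ?_⟩
    exact h2 w x (𝒢.mem_lh w v x h hx) (hcl w v x h ((hAmem _).2 hm) hx) _ ((hAmem _).2 hy)
      (by rw [hxv]; simp)
  · intro w z hw hz hwz _ huniq
    have hl : HasLightNbr G L w := ⟨z, hwz, hz⟩
    obtain ⟨x, hx⟩ : ∃ x ∈ G.neighborFinset w, x ≠ z := by
      apply exists_mem_ne
      rw [G.card_neighborFinset_eq_degree]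
      have := hdeg w
      omega
    have hwx : G.Adj w x := by simpa using hx.1
    have hlh : LightHeavy G L w x := by
      refine ⟨hw, ?_, hwx⟩
      by_contra! h
      exact hx.2 (huniq x hwx h)
    refine ⟨x, hlh, fun hm y hy => ?_⟩
    refine h2 w x hlh ((hAmem _).2 hm) _ ((hAmem _).2 hy) ?_
    rw [𝒢.tgt_light w x hlh hl, huniq _ (𝒢.lightNbr_adj w hl) (𝒢.lightNbr_light w hl)]
    simp

end Assembly
end IncFree

/-! ### Promised classes and crowding -/

namespace IncFree

open Finset

section Promises

variable {V B A : Type*} [Fintype B] [DecidableEq B] [Fintype A] [DecidableEq A] {s : ℕ} [NeZero s]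

theorem card_vanishing (S : Finset A) :
    (univ.filter (fun f : A → ZMod s => ∀ a ∈ S, f a = 0)).card * s ^ S.card =
      s ^ Fintype.card A := by
  have h1 : univ.filter (fun f : A → ZMod s => ∀ a ∈ S, f a = 0) =
      Fintype.piFinset (fun a => if a ∈ S then ({0} : Finset (ZMod s)) else univ) := by
    ext f
    simp only [mem_filter, mem_univ, true_and, Fintype.mem_piFinset]
    refine forall_congr' fun a => ?_
    split_ifs with h <;> simp [h]
  have h2 : s ^ S.card = ∏ a : A, if a ∈ S then s else 1 := by
    rw [prod_ite]
    simp
  rw [h1, Fintype.card_piFinset, h2, ← prod_mul_distrib]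
  have : ∀ a ∈ (univ : Finset A), ((if a ∈ S then ({0} : Finset (ZMod s)) else univ).card *
      if a ∈ S then s else 1) = s := by
    intro a _
    split_ifs <;> simp [ZMod.card]
  rw [prod_congr rfl this]
  simp

/-- The classes that `v` promises to keep off its edges. A class is a pair `(b, f)`, and it is promised
if `f` vanishes at the label `g v b`. -/
def promise (s : ℕ) [NeZero s] (g : V → B → A) (v : V) : Finset (B × (A → ZMod s)) :=
  univ.filter (fun c => c.2 (g v c.1) = 0)

theorem mem_promise {g : V → B → A} {v : V} {c : B × (A → ZMod s)} :
    c ∈ promise s g v ↔ c.2 (g v c.1) = 0 := by simp [promise]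

theorem card_filter_prod {β γ : Type*} [Fintype β] [Fintype γ] [DecidableEq β] [DecidableEq γ]
    (p : β × γ → Prop) [DecidablePred p] :
    (univ.filter p).card = ∑ b, (univ.filter (fun f => p (b, f))).card := by
  rw [card_filter, Fintype.sum_prod_type]
  simp only [card_filter]

/-- The promises of `u` and `v` are pairwise independent up to the places where their labels agree. -/
theorem card_promise_inter (g : V → B → A) (u v : V) :
    ((promise s g u ∩ promise s g v).card : ℝ) * (s : ℝ) ^ 2 =
      (Fintype.card B : ℝ) * (s : ℝ) ^ Fintype.card A +
      ((univ.filter (fun b => g u b = g v b)).card : ℝ) * ((s : ℝ) - 1) * (s : ℝ) ^ Fintype.card A := by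
  have h1 : promise s g u ∩ promise s g v = univ.filter
      (fun c : B × (A → ZMod s) => c.2 (g u c.1) = 0 ∧ c.2 (g v c.1) = 0) := by
    ext c; simp [promise]
  have h2 : ∀ b, ((univ.filter (fun f : A → ZMod s => f (g u b) = 0 ∧ f (g v b) = 0)).card : ℝ)
      * (s : ℝ) ^ 2 = (s : ℝ) ^ Fintype.card A +
        if g u b = g v b then ((s : ℝ) - 1) * (s : ℝ) ^ Fintype.card A else 0 := by
    intro b
    have h3 := card_vanishing (s := s) ({g u b, g v b} : Finset A)
    have h4 : univ.filter (fun f : A → ZMod s => ∀ a ∈ ({g u b, g v b} : Finset A), f a = 0) =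
        univ.filter (fun f : A → ZMod s => f (g u b) = 0 ∧ f (g v b) = 0) := by
      ext f; simp
    rw [h4] at h3
    have h3' : ((univ.filter (fun f : A → ZMod s => f (g u b) = 0 ∧ f (g v b) = 0)).card : ℝ) *
        (s : ℝ) ^ ({g u b, g v b} : Finset A).card = (s : ℝ) ^ Fintype.card A := by
      exact_mod_cast h3
    split_ifs with h
    · rw [h] at h3' ⊢
      simp only [mem_singleton, insert_eq_of_mem, card_singleton, pow_one] at h3'
      rw [← h3']
      ring
    · rw [card_pair h] at h3'
      rw [h3']
      ring
  rw [h1, card_filter_prod, Nat.cast_sum, sum_mul]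
  rw [sum_congr rfl (fun b _ => h2 b), sum_add_distrib, ← sum_filter, sum_const, sum_const]
  simp only [card_univ, nsmul_eq_mul]
  ring

theorem card_promise (g : V → B → A) (v : V) :
    ((promise s g v).card : ℝ) * s = (Fintype.card B : ℝ) * (s : ℝ) ^ Fintype.card A := by
  have h := card_promise_inter (s := s) g v v
  have hs : (s : ℝ) ≠ 0 := by exact_mod_cast NeZero.ne s
  rw [inter_self] at h
  simp only [filter_true, card_univ] at h
  apply mul_right_cancel₀ hs
  linear_combination h

/-- The classes that are promised by too few vertices of `W`: more than the expected number of
vertices plus `θ` do not avoid them. -/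
noncomputable def crowded (s : ℕ) [NeZero s] (g : V → B → A) (W : Finset V) (θ : ℝ) :
    Finset (B × (A → ZMod s)) :=
  univ.filter (fun c => (1 - 1 / (s : ℝ)) * W.card + θ <
    ((W.filter (fun w => c ∉ promise s g w)).card : ℝ))

/-- Few classes are crowded, by Chebyshev's inequality and the near independence of promises. -/
theorem card_crowded_le (g : V → B → A) (W : Finset V) {θ : ℝ} (hθ : 0 ≤ θ) {k : ℕ}
    (hW : ∀ u ∈ W, ∀ w ∈ W, u ≠ w → (univ.filter (fun b => g u b = g w b)).card ≤ k) :
    ((crowded s g W θ).card : ℝ) * θ ^ 2 ≤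
      (s : ℝ) ^ Fintype.card A * (Fintype.card B * W.card + k * (W.card : ℝ) ^ 2) := by
  classical
  have hs0 : (0 : ℝ) < s := by exact_mod_cast Nat.pos_of_ne_zero (NeZero.ne s)
  have hs1 : (1 : ℝ) ≤ s := by exact_mod_cast Nat.one_le_iff_ne_zero.2 (NeZero.ne s)
  set m : ℝ := (Fintype.card B : ℝ) * (s : ℝ) ^ Fintype.card A with hm
  have hmc : ((univ : Finset (B × (A → ZMod s))).card : ℝ) = m := by
    rw [card_univ, Fintype.card_prod, Fintype.card_fun, ZMod.card]
    push_cast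
    rfl
  let y : V → B × (A → ZMod s) → ℝ := fun w c => (if c ∈ promise s g w then 1 else 0) - 1 / s
  have hX : ∀ c, ((W.filter (fun w => c ∉ promise s g w)).card : ℝ) - (1 - 1 / (s : ℝ)) * W.card =
      - ∑ w ∈ W, y w c := by
    intro c
    have h1 := card_filter_add_card_filter_not (s := W) (fun w => c ∈ promise s g w)
    have h1' : ((W.filter (fun w => c ∈ promise s g w)).card : ℝ) +
        ((W.filter (fun w => c ∉ promise s g w)).card : ℝ) = W.card := by exact_mod_cast h1
    simp only [y, sum_sub_distrib, sum_const, nsmul_eq_mul]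
    rw [sum_boole]
    linear_combination h1'
  have hcov : ∀ u w, ∑ c, y u c * y w c =
      ((univ.filter (fun b => g u b = g w b)).card : ℝ) * ((s : ℝ) - 1) *
        (s : ℝ) ^ Fintype.card A / (s : ℝ) ^ 2 := by
    intro u w
    have h1 : ∀ c, y u c * y w c = (if c ∈ promise s g u ∩ promise s g w then 1 else 0) -
        1 / s * (if c ∈ promise s g u then 1 else 0) - 1 / s * (if c ∈ promise s g w then 1 else 0)
        + 1 / s ^ 2 := by
      intro c
      simp only [y, mem_inter]
      by_cases h1 : c ∈ promise s g u <;> by_cases h2 : c ∈ promise s g w <;>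
        simp [h1, h2] <;> ring
    simp only [h1]
    rw [sum_add_distrib, sum_sub_distrib, sum_sub_distrib, ← mul_sum, ← mul_sum, sum_const,
      sum_ite_mem, sum_ite_mem, sum_ite_mem]
    simp only [univ_inter, sum_const, nsmul_eq_mul, mul_one, hmc]
    have e1 := card_promise_inter (s := s) g u w
    have e2 := card_promise (s := s) g u
    have e3 := card_promise (s := s) g w
    rw [← hm] at e1 e2 e3
    field_simp
    linear_combination e1 - e2 - e3
  have hcov_le : ∀ u ∈ W, ∀ w ∈ W, ∑ c, y u c * y w c ≤
      (s : ℝ) ^ Fintype.card A * ((if u = w then (Fintype.card B : ℝ) else 0) + k) := by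
    intro u hu w hw
    rw [hcov]
    have hκ : ((univ.filter (fun b => g u b = g w b)).card : ℝ) ≤
        (if u = w then (Fintype.card B : ℝ) else 0) + k := by
      split_ifs with h
      · subst h
        simp [card_univ]
      · rw [zero_add]
        exact_mod_cast hW u hu w hw h
    have hfac : ((s : ℝ) - 1) / (s : ℝ) ^ 2 ≤ 1 := by
      rw [div_le_one (by positivity)]
      nlinarith
    have hfac0 : 0 ≤ ((s : ℝ) - 1) / (s : ℝ) ^ 2 := div_nonneg (by linarith) (by positivity)
    calc _ = (s : ℝ) ^ Fintype.card A * (((univ.filter (fun b => g u b = g w b)).card : ℝ) *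
          (((s : ℝ) - 1) / (s : ℝ) ^ 2)) := by ring
      _ ≤ (s : ℝ) ^ Fintype.card A * (((univ.filter (fun b => g u b = g w b)).card : ℝ) * 1) := by
          gcongr
      _ ≤ _ := by
          rw [mul_one]
          gcongr
  have hvar : ∑ c, (∑ w ∈ W, y w c) ^ 2 ≤
      (s : ℝ) ^ Fintype.card A * (Fintype.card B * W.card + k * (W.card : ℝ) ^ 2) := by
    calc ∑ c, (∑ w ∈ W, y w c) ^ 2 = ∑ u ∈ W, ∑ w ∈ W, ∑ c, y u c * y w c := by
          simp only [sq, sum_mul_sum]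
          rw [sum_comm]
          exact sum_congr rfl fun u _ => sum_comm
      _ ≤ ∑ u ∈ W, ∑ w ∈ W,
          (s : ℝ) ^ Fintype.card A * ((if u = w then (Fintype.card B : ℝ) else 0) + k) :=
          sum_le_sum fun u hu => sum_le_sum fun w hw => hcov_le u hu w hw
      _ = _ := by
          simp only [← mul_sum, sum_add_distrib, sum_ite_eq, sum_const, nsmul_eq_mul]
          rw [sum_ite_mem]
          simp only [inter_self, sum_const, nsmul_eq_mul]
          ring
  refine le_trans ?_ hvar
  calc ((crowded s g W θ).card : ℝ) * θ ^ 2 = ∑ c ∈ crowded s g W θ, θ ^ 2 := by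
        rw [sum_const, nsmul_eq_mul]
    _ ≤ ∑ c ∈ crowded s g W θ, (∑ w ∈ W, y w c) ^ 2 := by
        apply sum_le_sum
        intro c hc
        simp only [crowded, mem_filter, mem_univ, true_and] at hc
        have := hX c
        nlinarith
    _ ≤ _ := sum_le_sum_of_subset_of_nonneg (subset_univ _) (fun _ _ _ => sq_nonneg _)

end Promises
end IncFree

/-! ### Options of a group -/

namespace IncFree

open Finset

section Options

variable {V B A : Type*} [DecidableEq V] [Fintype B] [DecidableEq B] [Fintype A] [DecidableEq A]
  {s : ℕ} [NeZero s]

/-- A choice of shifts for the elements of every set `S` such that all values in `ZMod s` occur if `S`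
has at least `s` elements. -/
theorem exists_shift (V : Type*) [DecidableEq V] (s : ℕ) [NeZero s] :
    ∃ h : Finset V → V → ZMod s, ∀ S : Finset V, s ≤ S.card → ∀ a, ∃ i ∈ S, h S i = a := by
  classical
  have : ∀ S : Finset V, ∃ h : V → ZMod s, s ≤ S.card → ∀ a, ∃ i ∈ S, h i = a := by
    intro S
    by_cases hS : s ≤ S.card
    · have hc : Fintype.card (ZMod s) ≤ Fintype.card S := by
        rw [ZMod.card, Fintype.card_coe]; exact hS
      obtain ⟨e⟩ := Function.Embedding.nonempty_of_card_le hc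
      refine ⟨fun i => if hi : i ∈ S then Function.invFun e ⟨i, hi⟩ else 0, fun _ a => ?_⟩
      refine ⟨e a, (e a).2, ?_⟩
      simp only [dif_pos (e a).2]
      exact Function.leftInverse_invFun e.injective a
    · exact ⟨fun _ => 0, fun h => absurd h hS⟩
  choose h hh using this
  exact ⟨h, hh⟩

/-- The options of a group `Y`: a class `(b, f)` such that the labels at `b` of the members of `Y` are
different, and a nonzero value in `ZMod s`. -/
def groupOptions (s : ℕ) [NeZero s] (g : V → B → A) (Y : Finset V) :
    Finset ((B × (A → ZMod s)) × ZMod s) :=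
  univ.filter (fun o => (∀ u ∈ Y, ∀ w ∈ Y, u ≠ w → g u o.1.1 ≠ g w o.1.1) ∧ o.2 ≠ 0)

/-- The class of the edge to the member `v` of a group `Y` when the group has option `((b, f), ν)`. The
function takes the nonzero value `ν` at the label of `v`, so that `v` keeps its promise, and elsewhere
`f` shifted by an amount depending on `v`. The shifts at the label of a member `u` range over all of
`ZMod s` as `v` ranges over the other members. -/
def groupClass (h : Finset V → V → ZMod s) (g : V → B → A) (Y : Finset V) (v : V)
    (o : (B × (A → ZMod s)) × ZMod s) : B × (A → ZMod s) :=
  (o.1.1, fun y => if y = g v o.1.1 then o.2 else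
    o.1.2 y + h (Y.filter (fun j => g j o.1.1 ≠ y)) v)

theorem groupClass_notMem_promise {h : Finset V → V → ZMod s} {g : V → B → A} {Y : Finset V}
    (v : V) {o : (B × (A → ZMod s)) × ZMod s} (ho : o ∈ groupOptions s g Y) :
    groupClass h g Y v o ∉ promise s g v := by
  rw [mem_promise]
  simp only [groupClass, if_true]
  exact (mem_filter.1 ho).2.2

/-- In a group of at least `s + 1` members, for every member `v` the edge to some other member gets a
class promised by `v`. -/
theorem exists_groupClass_mem_promise {h : Finset V → V → ZMod s} {g : V → B → A} {Y : Finset V}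
    (hh : ∀ S : Finset V, s ≤ S.card → ∀ a, ∃ i ∈ S, h S i = a) (hY : s + 1 ≤ Y.card)
    {v : V} (hv : v ∈ Y) {o : (B × (A → ZMod s)) × ZMod s} (ho : o ∈ groupOptions s g Y) :
    ∃ x ∈ Y, x ≠ v ∧ groupClass h g Y x o ∈ promise s g v := by
  have ho := (mem_filter.1 ho).2.1
  have h1 : Y.filter (fun j => g j o.1.1 ≠ g v o.1.1) = Y.erase v := by
    ext j
    simp only [mem_filter, mem_erase]
    constructor
    · rintro ⟨h1, h2⟩
      exact ⟨fun e => h2 (by rw [e]), h1⟩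
    · rintro ⟨h1, h2⟩
      exact ⟨h2, ho j h2 v hv h1⟩
  have h2 : s ≤ (Y.erase v).card := by rw [card_erase_of_mem hv]; omega
  obtain ⟨x, hx, hxa⟩ := hh (Y.erase v) h2 (- o.1.2 (g v o.1.1))
  rw [mem_erase] at hx
  refine ⟨x, hx.2, hx.1, ?_⟩
  rw [mem_promise]
  simp only [groupClass]
  rw [if_neg (fun e => ho x hx.2 v hv hx.1 e.symm), h1, hxa]
  ring

/-- An option is determined by the resulting class at `v` and the value of `f` at the label of `v`, so
a class arises from at most `s` options. -/
theorem card_groupClass_fiber_le (h : Finset V → V → ZMod s) (g : V → B → A) (Y : Finset V) (v : V)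
    (c : B × (A → ZMod s)) (S : Finset ((B × (A → ZMod s)) × ZMod s)) :
    (S.filter (fun o => groupClass h g Y v o = c)).card ≤ s := by
  have : (S.filter (fun o => groupClass h g Y v o = c)).card ≤ (univ : Finset (ZMod s)).card := by
    apply card_le_card_of_injOn (fun o => o.1.2 (g v c.1)) (fun _ _ => mem_univ _)
    rintro ⟨⟨b, f⟩, ν⟩ ho ⟨⟨b', f'⟩, ν'⟩ ho' he
    have e1 := (mem_filter.1 (mem_coe.1 ho)).2
    have e2 := (mem_filter.1 (mem_coe.1 ho')).2
    simp only [groupClass] at e1 e2 he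
    obtain ⟨c1, c2⟩ := c
    simp only [Prod.mk.injEq] at e1 e2 he
    obtain ⟨rfl, e1⟩ := e1
    obtain ⟨rfl, e2⟩ := e2
    have e3 : ∀ y, _ := fun y => (congrFun e1 y).trans (congrFun e2 y).symm
    have hν : ν = ν' := by simpa using e3 (g v b')
    have hf : f = f' := by
      funext y
      by_cases hy : y = g v b'
      · rw [hy]; exact he
      · simpa [hy] using e3 y
    rw [hν, hf]
  rwa [card_univ, ZMod.card] at this

theorem card_groupOptions_ge (g : V → B → A) (Y : Finset V) {k n : ℕ} (hn : Y.card ≤ n)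
    (hY : ∀ u ∈ Y, ∀ w ∈ Y, u ≠ w → (univ.filter (fun b => g u b = g w b)).card ≤ k) :
    ((Fintype.card B : ℝ) - n ^ 2 * k) * (s : ℝ) ^ Fintype.card A * ((s : ℝ) - 1) ≤
      ((groupOptions s g Y).card : ℝ) := by
  classical
  have hs1 : 1 ≤ s := Nat.one_le_iff_ne_zero.2 (NeZero.ne s)
  let good : Finset B := univ.filter (fun b => ∀ u ∈ Y, ∀ w ∈ Y, u ≠ w → g u b ≠ g w b)
  have h1 : groupOptions s g Y =
      (good ×ˢ (univ : Finset (A → ZMod s))) ×ˢ ((univ : Finset (ZMod s)).erase 0) := by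
    ext o
    simp [groupOptions, good]
  have h2 : Fintype.card B ≤ good.card + n ^ 2 * k := by
    have hcov : (univ : Finset B) ⊆ good ∪
        Y.offDiag.biUnion (fun p => univ.filter (fun b => g p.1 b = g p.2 b)) := by
      intro b _
      by_cases hb : b ∈ good
      · exact mem_union_left _ hb
      · apply mem_union_right
        simp only [good, mem_filter, mem_univ, true_and] at hb
        push Not at hb
        obtain ⟨u, hu, w, hw, hne, he⟩ := hb
        exact mem_biUnion.2 ⟨(u, w), mem_offDiag.2 ⟨hu, hw, hne⟩, by simpa using he⟩
    have h3 := (card_le_card hcov).trans (card_union_le _ _)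
    have h4 : (Y.offDiag.biUnion (fun p => univ.filter (fun b => g p.1 b = g p.2 b))).card ≤
        Y.offDiag.card * k := by
      apply card_biUnion_le_card_mul
      intro p hp
      obtain ⟨hu, hw, hne⟩ := mem_offDiag.1 hp
      exact hY _ hu _ hw hne
    have h5 : Y.offDiag.card ≤ n ^ 2 := by
      rw [offDiag_card]
      have := Nat.mul_le_mul hn hn
      rw [sq]
      omega
    rw [card_univ] at h3
    have := Nat.mul_le_mul_right k h5
    omega
  have h2' : (Fintype.card B : ℝ) - n ^ 2 * k ≤ good.card := by
    have : (Fintype.card B : ℝ) ≤ good.card + n ^ 2 * k := by exact_mod_cast h2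
    linarith
  rw [h1, card_product, card_product, card_erase_of_mem (mem_univ _), card_univ, card_univ,
    Fintype.card_fun, ZMod.card]
  push_cast [Nat.cast_sub hs1]
  have : (0 : ℝ) ≤ (s : ℝ) - 1 := by
    have : (1 : ℝ) ≤ s := by exact_mod_cast hs1
    linarith
  gcongr

/-- A lower bound for the number of classes allowed on an edge `uw` with both ends heavy, where `X` and
`Y` will be the crowded classes at the ends. -/
theorem card_compl_promise_ge (g : V → B → A) (u w : V) (X Y : Finset (B × (A → ZMod s))) {b : ℝ}
    (hX : (X.card : ℝ) ≤ b) (hY : (Y.card : ℝ) ≤ b) :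
    (Fintype.card B : ℝ) * (s : ℝ) ^ Fintype.card A * (1 - 1 / (s : ℝ)) ^ 2 - 2 * b ≤
      ((univ \ ((promise s g u ∪ promise s g w) ∪ (X ∪ Y))).card : ℝ) := by
  classical
  have hs0 : (0 : ℝ) < s := by exact_mod_cast Nat.pos_of_ne_zero (NeZero.ne s)
  have hs1 : (1 : ℝ) ≤ s := by exact_mod_cast Nat.one_le_iff_ne_zero.2 (NeZero.ne s)
  set m : ℝ := (Fintype.card B : ℝ) * (s : ℝ) ^ Fintype.card A with hm
  have hmc : ((univ : Finset (B × (A → ZMod s))).card : ℝ) = m := by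
    rw [card_univ, Fintype.card_prod, Fintype.card_fun, ZMod.card]
    push_cast
    rfl
  have h1 : ((promise s g u ∪ promise s g w).card : ℝ) + (promise s g u ∩ promise s g w).card =
      (promise s g u).card + (promise s g w).card := by
    exact_mod_cast card_union_add_card_inter _ _
  have e1 := card_promise_inter (s := s) g u w
  have e2 := card_promise (s := s) g u
  have e3 := card_promise (s := s) g w
  rw [← hm] at e1 e2 e3
  have e4 : m ≤ ((promise s g u ∩ promise s g w).card : ℝ) * (s : ℝ) ^ 2 := by
    rw [e1]
    have : (0 : ℝ) ≤ (s : ℝ) - 1 := by linarith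
    have : 0 ≤ ((univ.filter (fun b => g u b = g w b)).card : ℝ) * ((s : ℝ) - 1) *
      (s : ℝ) ^ Fintype.card A := by positivity
    linarith
  have e5 : m / s ^ 2 ≤ ((promise s g u ∩ promise s g w).card : ℝ) := by
    rw [div_le_iff₀ (by positivity)]; exact e4
  have e2' : ((promise s g u).card : ℝ) = m / s := by rw [eq_div_iff hs0.ne']; exact e2
  have e3' : ((promise s g w).card : ℝ) = m / s := by rw [eq_div_iff hs0.ne']; exact e3
  have h2 : ((univ : Finset (B × (A → ZMod s))).card : ℝ) ≤
      ((univ \ ((promise s g u ∪ promise s g w) ∪ (X ∪ Y))).card : ℝ) +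
      ((promise s g u ∪ promise s g w).card + (X.card + Y.card)) := by
    have h3 := card_le_card_sdiff_add_card (t := ((promise s g u ∪ promise s g w) ∪ (X ∪ Y)))
      (s := (univ : Finset (B × (A → ZMod s))))
    have h4 := card_union_le (promise s g u ∪ promise s g w) (X ∪ Y)
    have h5 := card_union_le X Y
    have : (univ : Finset (B × (A → ZMod s))).card ≤
      (univ \ ((promise s g u ∪ promise s g w) ∪ (X ∪ Y))).card +
      ((promise s g u ∪ promise s g w).card + (X.card + Y.card)) := by omega
    exact_mod_cast this
  rw [hmc] at h2
  have e6 : m * (1 - 1 / (s : ℝ)) ^ 2 = m - 2 * (m / s) + m / s ^ 2 := by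
    field_simp
    ring
  rw [e6]
  linarith

end Options
end IncFree

/-! ### Splitting the main edges into classes -/

namespace IncFree

open Finset

section MainClasses

variable {V B A : Type*} [Fintype V] [DecidableEq V] {G : SimpleGraph V} [DecidableRel G.Adj]
  [Fintype B] [DecidableEq B] [Fintype A] [DecidableEq A] {s : ℕ} [NeZero s]

/-- The light vertex `w` has exactly one light neighbour `z`, and `w` comes before `z`. In this case
the colours of edges between light vertices do not separate `w` from `z`, and `z` is not needy itself. -/
def Needy (G : SimpleGraph V) [DecidableRel G.Adj] (L : ℕ) (w z : V) : Prop :=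
  G.degree w < L ∧ G.degree z < L ∧ G.Adj w z ∧ Prec G w z ∧
    ∀ z', G.Adj w z' → G.degree z' < L → z' = z

/-- Every needy vertex `w` has a heavy neighbour `spx w`; `zf w` is its light neighbour. -/
theorem exists_special {L : ℕ} (hdeg : ∀ v, 2 ≤ G.degree v) :
    ∃ (zf spx : V → V), ∀ w z, Needy G L w z → zf w = z ∧ LightHeavy G L w (spx w) := by
  have : ∀ w, ∃ p : V × V, ∀ z, Needy G L w z → p.1 = z ∧ LightHeavy G L w p.2 := by
    intro w
    by_cases hw : ∃ z, Needy G L w z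
    · obtain ⟨z, hz⟩ := hw
      obtain ⟨h1, h2, h3, h4, h5⟩ := hz
      obtain ⟨x, hx⟩ : ∃ x ∈ G.neighborFinset w, x ≠ z := by
        apply exists_mem_ne
        rw [G.card_neighborFinset_eq_degree]
        exact hdeg w
      have hwx : G.Adj w x := by simpa using hx.1
      refine ⟨(z, x), fun z' hz' => ⟨(h5 z' hz'.2.2.1 hz'.2.1).symm, h1, ?_, hwx⟩⟩
      by_contra! h
      exact hx.2 (h5 x hwx h)
    · exact ⟨(w, w), fun z hz => absurd ⟨z, hz⟩ hw⟩
  choose p hp using this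
  exact ⟨fun w => (p w).1, fun w => (p w).2, hp⟩

set_option maxHeartbeats 2000000 in
/-- The assignment of main classes. Heavy vertices keep their promises, groups of light vertices without
light neighbours contain for each member an edge in a class promised by it, each needy `w` has an edge
in a class not used at its light neighbour, and no class is overloaded at any heavy vertex. Here `ρ`
is the expected share of a class among the edges at a vertex, `θ` the tolerance for crowding, `β` a
bound on the number of crowded classes and `N` one on the number of classes allowed on an edge
between heavy vertices. -/
theorem exists_main_classes {L Δ k : ℕ} (𝒢 : Groups G L (s + 1)) (hdeg : ∀ v, 2 ≤ G.degree v)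
    (hmax : ∀ v, G.degree v ≤ Δ) (g : V → B → A)
    (hg : ∀ u v, u ≠ v → (G.Adj u v ∨ ∃ x, G.Adj u x ∧ G.Adj x v) →
      (univ.filter (fun b => g u b = g v b)).card ≤ k)
    {ρ τ θ β N : ℝ} (hρ : 0 ≤ ρ) (hθ : 0 < θ) (hN : 0 < N)
    (hgrp : (s : ℝ) ≤ ρ * (((Fintype.card B : ℝ) - ((2 * (s + 1) : ℕ) : ℝ) ^ 2 * k) *
      (s : ℝ) ^ Fintype.card A * ((s : ℝ) - 1)))
    (hsp : 1 ≤ ρ * ((Fintype.card B : ℝ) * (s : ℝ) ^ Fintype.card A * (1 - 1 / (s : ℝ)) - L))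
    (hβ : (s : ℝ) ^ Fintype.card A * (Fintype.card B * Δ + k * (Δ : ℝ) ^ 2) ≤ β * θ ^ 2)
    (hNβ : N ≤ (Fintype.card B : ℝ) * (s : ℝ) ^ Fintype.card A * (1 - 1 / (s : ℝ)) ^ 2 - 2 * β)
    (hNρ : 1 - 1 / (s : ℝ) ≤ ρ * N) (hNτ : θ ≤ τ * N) :
    ∃ fc : Sym2 V → B × (A → ZMod s),
      (∀ v y, L ≤ G.degree v → G.Adj v y → fc s(v, y) ∉ promise s g v) ∧
      (∀ w v, LightHeavy G L w v → ¬ HasLightNbr G L w →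
        ∃ x ∈ 𝒢.grp w v, fc s(w, x) ∈ promise s g v) ∧
      (∀ w z, Needy G L w z → ∃ x, LightHeavy G L w x ∧
        ∀ y, LightHeavy G L z y → fc s(w, x) ≠ fc s(z, y)) ∧
      ∀ v, L ≤ G.degree v → ∀ c,
        (((G.neighborFinset v).filter (fun x => fc s(v, x) = c)).card : ℝ) ≤
          ρ * Δ + τ + 4 * (s + 1) + 2 := by
  classical
  have hs0 : (0 : ℝ) < s := by exact_mod_cast Nat.pos_of_ne_zero (NeZero.ne s)
  have hs1 : (1 : ℝ) ≤ s := by exact_mod_cast Nat.one_le_iff_ne_zero.2 (NeZero.ne s)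
  set m : ℝ := (Fintype.card B : ℝ) * (s : ℝ) ^ Fintype.card A with hm
  have hmc : ((univ : Finset (B × (A → ZMod s))).card : ℝ) = m := by
    rw [card_univ, Fintype.card_prod, Fintype.card_fun, ZMod.card]
    push_cast
    rfl
  have hBpos : 0 < Fintype.card B := by
    by_contra! h0
    have h0 := Nat.le_zero.1 h0
    have h1 : ((Fintype.card B : ℝ) - ((2 * (s + 1) : ℕ) : ℝ) ^ 2 * k) *
      (s : ℝ) ^ Fintype.card A * ((s : ℝ) - 1) ≤ 0 := by
      rw [h0, Nat.cast_zero, zero_sub]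
      apply mul_nonpos_of_nonpos_of_nonneg _ (by linarith)
      apply mul_nonpos_of_nonpos_of_nonneg _ (by positivity)
      have : (0:ℝ) ≤ ((2 * (s + 1) : ℕ) : ℝ) ^ 2 * k := by positivity
      linarith
    have := mul_nonpos_of_nonneg_of_nonpos hρ h1
    linarith
  haveI : Nonempty B := Fintype.card_pos_iff.1 hBpos
  haveI : Inhabited (B × (A → ZMod s)) := ⟨(Classical.arbitrary B, fun _ => 0)⟩
  obtain ⟨h, hh⟩ := exists_shift V s
  obtain ⟨zf, spx, hspec⟩ := exists_special (G := G) (L := L) hdeg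
  let nd : V → Prop := fun w => ∃ z, Needy G L w z
  have hnd : ∀ w, nd w → LightHeavy G L w (spx w) := fun w ⟨z, hz⟩ => (hspec w z hz).2
  let NH : V → Finset V := fun v => (G.neighborFinset v).filter (fun x => L ≤ G.degree x)
  let C : V → Finset (B × (A → ZMod s)) := fun v => crowded s g (NH v) θ
  have hNHdist : ∀ v, ∀ u ∈ NH v, ∀ w ∈ NH v, u ≠ w →
      (univ.filter (fun b => g u b = g w b)).card ≤ k := by
    intro v u hu w hw hne
    have h1 : G.Adj v u := by simpa using (mem_filter.1 hu).1
    have h2 : G.Adj v w := by simpa using (mem_filter.1 hw).1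
    exact hg u w hne (Or.inr ⟨v, h1.symm, h2⟩)
  have hCβ : ∀ v, ((C v).card : ℝ) ≤ β := by
    intro v
    have h1 := card_crowded_le (s := s) g (NH v) hθ.le (hNHdist v)
    have h2 : ((NH v).card : ℝ) ≤ Δ := by
      have : (NH v).card ≤ Δ := by
        refine (card_filter_le _ _).trans ?_
        rw [G.card_neighborFinset_eq_degree]
        exact hmax v
      exact_mod_cast this
    have h3 : (s : ℝ) ^ Fintype.card A * (Fintype.card B * (NH v).card + k * ((NH v).card : ℝ) ^ 2)
        ≤ (s : ℝ) ^ Fintype.card A * (Fintype.card B * Δ + k * (Δ : ℝ) ^ 2) := by gcongr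
    exact le_of_mul_le_mul_right (h1.trans (h3.trans hβ)) (by positivity)
  -- an edge between heavy vertices may use the classes that are neither promised by an end nor
  -- crowded at an end; the second component of its options is a dummy
  let allowed : Sym2 V → Finset (B × (A → ZMod s)) := fun e =>
    univ.filter (fun c => ∀ v ∈ e, c ∉ promise s g v ∧ c ∉ C v)
  let opt₀ : Sym2 V ⊕ (V × Finset V) → Finset ((B × (A → ZMod s)) × ZMod s) := fun u =>
    match u with
    | Sum.inl e => allowed e ×ˢ {0}
    | Sum.inr p => groupOptions s g p.2
  let opt : Sym2 V ⊕ (V × Finset V) → Finset ((B × (A → ZMod s)) × ZMod s) := fun u =>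
    if (opt₀ u).Nonempty then opt₀ u else univ
  have hopt : ∀ u, (opt u).Nonempty := by
    intro u
    simp only [opt]
    split_ifs with h
    · exact h
    · exact univ_nonempty
  let hhc : Sym2 V → (B × (A → ZMod s)) × ZMod s → Option (B × (A → ZMod s)) :=
    fun _ o => some o.1
  let lhc : V → Finset V → V → (B × (A → ZMod s)) × ZMod s → Option (B × (A → ZMod s)) :=
    fun w Y v o => if nd w ∧ v = spx w then none else some (groupClass h g Y v o)
  have hallowed : ∀ u w, N ≤ ((allowed s(u, w)).card : ℝ) := by
    intro u w
    refine hNβ.trans ((card_compl_promise_ge g u w (C u) (C w) (hCβ u) (hCβ w)).trans ?_)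
    have : univ \ ((promise s g u ∪ promise s g w) ∪ (C u ∪ C w)) ⊆ allowed s(u, w) := by
      intro c hc
      simp only [mem_sdiff, mem_univ, true_and, mem_union, not_or] at hc
      simp only [allowed, mem_filter, mem_univ, true_and, Sym2.mem_iff]
      rintro v (rfl | rfl)
      · exact ⟨hc.1.1, hc.2.1⟩
      · exact ⟨hc.1.2, hc.2.2⟩
    exact_mod_cast card_le_card this
  have hopt_hh : ∀ u w, opt (Sum.inl s(u, w)) = allowed s(u, w) ×ˢ {0} := by
    intro u w
    have hne : (opt₀ (Sum.inl s(u, w))).Nonempty := by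
      simp only [opt₀]
      refine Nonempty.product ?_ (singleton_nonempty _)
      rw [← card_pos]
      have : (0 : ℝ) < ((allowed s(u, w)).card : ℝ) := hN.trans_le (hallowed u w)
      exact_mod_cast this
    simp only [opt, hne, if_true]
    rfl
  have hgcard : ∀ w v, LightHeavy G L w v →
      (s : ℝ) ≤ ρ * ((groupOptions s g (𝒢.grp w v)).card : ℝ) := by
    intro w v hlh
    refine hgrp.trans ?_
    refine mul_le_mul_of_nonneg_left ?_ hρ
    apply card_groupOptions_ge g _ (𝒢.card_le w v hlh)
    intro u hu x hx hne
    exact hg u x hne (Or.inr ⟨w, (𝒢.mem_lh w v u hlh hu).2.2.symm, (𝒢.mem_lh w v x hlh hx).2.2⟩)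
  have hopt_lh : ∀ w v, LightHeavy G L w v →
      opt (Sum.inr (w, 𝒢.grp w v)) = groupOptions s g (𝒢.grp w v) := by
    intro w v hlh
    have hne : (opt₀ (Sum.inr (w, 𝒢.grp w v))).Nonempty := by
      simp only [opt₀]
      rw [← card_pos]
      by_contra! h0
      have h1 := hgcard w v hlh
      rw [Nat.le_zero.1 h0] at h1
      simp at h1
      exact absurd h1 (NeZero.ne s)
    simp only [opt, hne, if_true]
    rfl
  obtain ⟨cls, f, hf, h1, h2, h3⟩ := exists_edge_rounding (by omega) 𝒢 opt hopt hhc lhc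
  -- a needy `w` has a special edge to `spx w`, assigned after all other edges to a class that occurs
  -- nowhere at its light neighbour `zf w`, which is light and so has fewer than `L` edges
  let opt₁ : V → Finset (B × (A → ZMod s)) := fun w => univ \ (promise s g (spx w) ∪
    (G.neighborFinset (zf w)).image (fun y => (cls s(zf w, y)).getD default))
  let opt₂ : V → Finset (B × (A → ZMod s)) := fun w => if (opt₁ w).Nonempty then opt₁ w else univ
  have hopt₂ : ∀ w, (opt₂ w).Nonempty := by
    intro w
    simp only [opt₂]
    split_ifs with h
    · exact h
    · exact univ_nonempty
  have hcard₁ : ∀ w, nd w → 1 ≤ ρ * ((opt₁ w).card : ℝ) := by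
    rintro w ⟨z, hz⟩
    refine hsp.trans (mul_le_mul_of_nonneg_left ?_ hρ)
    have e1 : ((univ : Finset (B × (A → ZMod s))).card : ℝ) ≤ (opt₁ w).card +
        ((promise s g (spx w)).card + L) := by
      have h4 := card_le_card_sdiff_add_card (s := (univ : Finset (B × (A → ZMod s))))
        (t := (promise s g (spx w) ∪
          (G.neighborFinset (zf w)).image (fun y => (cls s(zf w, y)).getD default)))
      have h5 := card_union_le (promise s g (spx w))
        ((G.neighborFinset (zf w)).image (fun y => (cls s(zf w, y)).getD default))
      have h6 := card_image_le (s := G.neighborFinset (zf w))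
        (f := fun y => (cls s(zf w, y)).getD default)
      rw [G.card_neighborFinset_eq_degree, (hspec w z hz).1] at h6
      have h7 := hz.2.1
      rw [(hspec w z hz).1] at h5 h4
      have h8 : (opt₁ w).card = (univ \ (promise s g (spx w) ∪
        (G.neighborFinset z).image (fun y => (cls s(z, y)).getD default))).card := by
        simp only [opt₁]
        rw [(hspec w z hz).1]
      have : (univ : Finset (B × (A → ZMod s))).card ≤ (opt₁ w).card +
        ((promise s g (spx w)).card + L) := by omega
      exact_mod_cast this
    have e2 := card_promise (s := s) g (spx w)
    rw [← hm] at e2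
    have e2' : ((promise s g (spx w)).card : ℝ) = m / s := by rw [eq_div_iff hs0.ne']; exact e2
    rw [hmc, e2'] at e1
    have : m * (1 - 1 / (s : ℝ)) = m - m / s := by ring
    rw [this]
    linarith
  have hopt₂_eq : ∀ w, nd w → opt₂ w = opt₁ w := by
    intro w hw
    have : (opt₁ w).Nonempty := by
      rw [← card_pos]
      by_contra! h0
      have := hcard₁ w hw
      rw [Nat.le_zero.1 h0] at this
      simp at this
      linarith
    simp only [opt₂, this, if_true]
  let inc : V → B × (A → ZMod s) → Finset (V × (B × (A → ZMod s))) := fun w o =>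
    if nd w then {(spx w, o)} else ∅
  obtain ⟨f₂, hf₂, h4⟩ := exists_uniform_rounding 1 inc (by
    intro u o
    simp only [inc]
    split_ifs <;> simp) opt₂ hopt₂
  let fc : Sym2 V → B × (A → ZMod s) := fun e =>
    if hex : ∃ w, nd w ∧ e = s(w, spx w) then f₂ hex.choose else (cls e).getD default
  have fc_sp : ∀ w, nd w → fc s(w, spx w) = f₂ w := by
    intro w hw
    have hex : ∃ w', nd w' ∧ s(w, spx w) = s(w', spx w') := ⟨w, hw, rfl⟩
    simp only [fc]
    rw [dif_pos hex]
    congr 1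
    exact ((hnd w hw).unique (hnd _ hex.choose_spec.1) hex.choose_spec.2).1.symm
  have fc_hh : ∀ u v, L ≤ G.degree u → L ≤ G.degree v →
      cls s(u, v) = some (f (Sum.inl s(u, v))).1 ∧ fc s(u, v) = (f (Sum.inl s(u, v))).1 := by
    intro u v hu hv
    have hc : cls s(u, v) = some (f (Sum.inl s(u, v))).1 := h1 u v hu hv
    refine ⟨hc, ?_⟩
    simp only [fc]
    rw [dif_neg, hc]
    · rfl
    · rintro ⟨w, hw, he⟩
      have := (hnd w hw).1
      rcases Sym2.eq_iff.1 he with ⟨rfl, _⟩ | ⟨_, rfl⟩ <;> omega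
  have fc_lh : ∀ w v, LightHeavy G L w v → ¬ (nd w ∧ v = spx w) →
      cls s(w, v) = some (groupClass h g (𝒢.grp w v) v (f (Sum.inr (w, 𝒢.grp w v)))) ∧
      fc s(w, v) = groupClass h g (𝒢.grp w v) v (f (Sum.inr (w, 𝒢.grp w v))) := by
    intro w v hlh hns
    have hc : cls s(w, v) =
        some (groupClass h g (𝒢.grp w v) v (f (Sum.inr (w, 𝒢.grp w v)))) := by
      rw [h2 w v hlh]
      simp only [lhc]
      rw [if_neg hns]
    refine ⟨hc, ?_⟩
    simp only [fc]
    rw [dif_neg, hc]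
    · rfl
    · rintro ⟨w', hw', he⟩
      obtain ⟨rfl, rfl⟩ := hlh.unique (hnd w' hw') he
      exact hns ⟨hw', rfl⟩
  have hf_grp : ∀ w v, LightHeavy G L w v →
      f (Sum.inr (w, 𝒢.grp w v)) ∈ groupOptions s g (𝒢.grp w v) := by
    intro w v hlh
    rw [← hopt_lh w v hlh]
    exact hf _
  refine ⟨fc, ?_, ?_, ?_, ?_⟩
  · intro v y hv hvy
    by_cases hy : L ≤ G.degree y
    · rw [(fc_hh v y hv hy).2]
      have := hf (Sum.inl s(v, y))
      rw [hopt_hh, mem_product] at this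
      exact ((mem_filter.1 this.1).2 v (by simp)).1
    · have hlh : LightHeavy G L y v := ⟨by omega, hv, hvy.symm⟩
      rw [Sym2.eq_swap]
      by_cases hns : nd y ∧ v = spx y
      · rw [hns.2, fc_sp y hns.1]
        have := hf₂ y
        rw [hopt₂_eq y hns.1] at this
        exact fun h => (mem_sdiff.1 this).2 (mem_union_left _ h)
      · rw [(fc_lh y v hlh hns).2]
        exact groupClass_notMem_promise v (hf_grp y v hlh)
  · intro w v hlh hl
    obtain ⟨x, hx, -, hxv⟩ := exists_groupClass_mem_promise (h := h) hh (𝒢.le_card w v hlh hl)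
      (𝒢.self_mem w v hlh) (hf_grp w v hlh)
    refine ⟨x, hx, ?_⟩
    have hx' := 𝒢.mem_lh w v x hlh hx
    have hns : ¬ (nd w ∧ x = spx w) := by
      rintro ⟨⟨z, hz⟩, -⟩
      exact hl ⟨z, hz.2.2.1, hz.2.1⟩
    rw [(fc_lh w x hx' hns).2, 𝒢.grp_eq w v x hlh hx]
    exact hxv
  · intro w z hz
    have hw : nd w := ⟨z, hz⟩
    refine ⟨spx w, hnd w hw, fun y hy => ?_⟩
    have hzn : ¬ (nd z ∧ y = spx z) := by
      rintro ⟨⟨z', hz'⟩, -⟩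
      have := hz'.2.2.2.2 w hz.2.2.1.symm hz.1
      subst this
      exact hz.2.2.2.1.asymm hz'.2.2.2.1
    rw [fc_sp w hw]
    intro he
    have := hf₂ w
    rw [hopt₂_eq w hw, he] at this
    refine (mem_sdiff.1 this).2 (mem_union_right _ (mem_image.2 ⟨y, ?_, ?_⟩))
    · rw [(hspec w z hz).1]
      simpa using hy.2.2
    · rw [(hspec w z hz).1, (fc_lh z y hy hzn).1, (fc_lh z y hy hzn).2]
      rfl
  · intro v hv c
    let SP : Finset V := univ.filter (fun x => nd x ∧ v = spx x)
    have hSP : ∀ x ∈ SP, x ∈ G.neighborFinset v ∧ ¬ L ≤ G.degree x := by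
      intro x hx
      obtain ⟨hx1, hx2⟩ := (mem_filter.1 hx).2
      have := hnd x hx1
      rw [← hx2] at this
      exact ⟨by simpa using this.2.2.symm, by have := this.1; omega⟩
    -- the edges at `v` that are not special
    have hA : (((G.neighborFinset v).filter (fun x => cls s(v, x) = some c)).card : ℝ) ≤
        ρ * (NH v).card + τ +
          ρ * ((G.neighborFinset v).filter (fun x => ¬ L ≤ G.degree x ∧ x ∉ SP)).card +
          4 * (s + 1) := by
      have h5 := (abs_le.1 (h3 v hv c)).2
      rw [sum_ite] at h5
      have hheavy : ∑ x ∈ G.neighborFinset v with L ≤ G.degree x,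
          (((opt (Sum.inl s(v, x))).filter (fun o => hhc s(v, x) o = some c)).card : ℝ) /
            (opt (Sum.inl s(v, x))).card ≤ ρ * (NH v).card + τ := by
        by_cases hc : c ∈ C v
        · rw [sum_eq_zero]
          · have hτ : 0 ≤ τ := by
              by_contra! h
              have := mul_neg_of_neg_of_pos h hN
              linarith
            positivity
          · intro x _
            rw [hopt_hh]
            have : (allowed s(v, x) ×ˢ ({0} : Finset (ZMod s))).filter
                (fun o => hhc s(v, x) o = some c) = ∅ := by
              apply filter_eq_empty_iff.2
              rintro ⟨o1, o2⟩ ho he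
              simp only [hhc, Option.some.injEq] at he
              subst he
              exact ((mem_filter.1 (mem_product.1 ho).1).2 v (by simp)).2 hc
            rw [this]
            simp
        · have hterm : ∀ x ∈ (G.neighborFinset v).filter (fun x => L ≤ G.degree x),
              (((opt (Sum.inl s(v, x))).filter (fun o => hhc s(v, x) o = some c)).card : ℝ) /
              (opt (Sum.inl s(v, x))).card ≤ if c ∉ promise s g x then 1 / N else 0 := by
            intro x _
            rw [hopt_hh]
            by_cases hcx : c ∉ promise s g x
            · rw [if_pos hcx]
              have e1 : ((allowed s(v, x) ×ˢ ({0} : Finset (ZMod s))).filter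
                (fun o => hhc s(v, x) o = some c)).card ≤ 1 := by
                rw [card_le_one]
                rintro ⟨o1, o2⟩ ho ⟨p1, p2⟩ hp
                simp only [hhc, mem_filter, mem_product, mem_singleton, Option.some.injEq]
                  at ho hp
                rw [ho.1.2, hp.1.2, ho.2, hp.2]
              have e2 : N ≤ ((allowed s(v, x) ×ˢ ({0} : Finset (ZMod s))).card : ℝ) := by
                rw [card_product, card_singleton, mul_one]
                exact hallowed v x
              have e1' : (((allowed s(v, x) ×ˢ ({0} : Finset (ZMod s))).filter
                (fun o => hhc s(v, x) o = some c)).card : ℝ) ≤ 1 := by exact_mod_cast e1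
              gcongr
            · rw [if_neg hcx]
              have : (allowed s(v, x) ×ˢ ({0} : Finset (ZMod s))).filter
                  (fun o => hhc s(v, x) o = some c) = ∅ := by
                apply filter_eq_empty_iff.2
                rintro ⟨o1, o2⟩ ho he
                simp only [hhc, Option.some.injEq] at he
                subst he
                exact hcx ((mem_filter.1 (mem_product.1 ho).1).2 x (Sym2.mem_mk_right v x)).1
              rw [this]
              simp
          refine (sum_le_sum hterm).trans ?_
          rw [← sum_filter, sum_const, nsmul_eq_mul]
          have hc' : (((NH v).filter (fun w => c ∉ promise s g w)).card : ℝ) ≤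
              (1 - 1 / (s : ℝ)) * (NH v).card + θ := by
            by_contra! h
            exact hc (by simpa [C, crowded] using h)
          rw [mul_one_div, div_le_iff₀ hN]
          refine hc'.trans ?_
          have := mul_le_mul_of_nonneg_right hNρ (Nat.cast_nonneg (α := ℝ) (NH v).card)
          nlinarith
      have hlight : ∑ x ∈ G.neighborFinset v with ¬ L ≤ G.degree x,
          (((opt (Sum.inr (x, 𝒢.grp x v))).filter
              (fun o => lhc x (𝒢.grp x v) v o = some c)).card : ℝ) /
              (opt (Sum.inr (x, 𝒢.grp x v))).card ≤
          ρ * ((G.neighborFinset v).filter (fun x => ¬ L ≤ G.degree x ∧ x ∉ SP)).card := by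
        have hterm : ∀ x ∈ (G.neighborFinset v).filter (fun x => ¬ L ≤ G.degree x),
            (((opt (Sum.inr (x, 𝒢.grp x v))).filter
              (fun o => lhc x (𝒢.grp x v) v o = some c)).card : ℝ) /
              (opt (Sum.inr (x, 𝒢.grp x v))).card ≤ if x ∉ SP then ρ else 0 := by
          intro x hx
          have hxv : G.Adj v x := by simpa using (mem_filter.1 hx).1
          have hlh : LightHeavy G L x v := ⟨by have := (mem_filter.1 hx).2; omega, hv, hxv.symm⟩
          rw [hopt_lh x v hlh]
          by_cases hns : x ∉ SP
          · rw [if_pos hns]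
            have hns' : ¬ (nd x ∧ v = spx x) := by simpa [SP] using hns
            have e1 := card_groupClass_fiber_le h g (𝒢.grp x v) v c
              (groupOptions s g (𝒢.grp x v))
            have e2 : (groupOptions s g (𝒢.grp x v)).filter
                (fun o => lhc x (𝒢.grp x v) v o = some c) = (groupOptions s g (𝒢.grp x v)).filter
                (fun o => groupClass h g (𝒢.grp x v) v o = c) := by
              apply filter_congr
              intro o _
              simp only [lhc]
              rw [if_neg hns', Option.some.injEq]
            rw [e2]
            have e3 := hgcard x v hlh
            have e1' : (((groupOptions s g (𝒢.grp x v)).filter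
                (fun o => groupClass h g (𝒢.grp x v) v o = c)).card : ℝ) ≤ s := by
              exact_mod_cast e1
            have e4 : 0 < ((groupOptions s g (𝒢.grp x v)).card : ℝ) := by
              rw [← hopt_lh x v hlh]
              exact_mod_cast card_pos.2 (hopt (Sum.inr (x, 𝒢.grp x v)))
            rw [div_le_iff₀ e4]
            linarith
          · rw [if_neg hns]
            have hns' : nd x ∧ v = spx x := by simpa [SP] using hns
            have : (groupOptions s g (𝒢.grp x v)).filter
                (fun o => lhc x (𝒢.grp x v) v o = some c) = ∅ := by
              apply filter_eq_empty_iff.2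
              intro o _
              simp only [lhc]
              rw [if_pos hns']
              simp
            rw [this]
            simp
        refine (sum_le_sum hterm).trans ?_
        rw [← sum_filter, sum_const, nsmul_eq_mul, filter_filter, mul_comm]
      push_cast at h5
      linarith
    -- the special edges at `v`
    have hB : ((SP.filter (fun x => f₂ x = c)).card : ℝ) ≤ ρ * SP.card + 2 := by
      have h5 := (abs_le.1 (h4 (v, c))).2
      have e1 : univ.filter (fun x => (v, c) ∈ inc x (f₂ x)) = SP.filter (fun x => f₂ x = c) := by
        ext x
        simp only [SP, mem_filter, mem_univ, true_and, inc]
        split_ifs with hx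
        · simp only [mem_singleton, Prod.mk.injEq, hx, true_and]
          exact and_congr_right fun _ => eq_comm
        · simp [hx]
      have e2 : ∑ u, (((opt₂ u).filter (fun o => (v, c) ∈ inc u o)).card : ℝ) / (opt₂ u).card ≤
          ∑ u, if u ∈ SP then ρ else 0 := by
        apply sum_le_sum
        intro x _
        split_ifs with hx
        · obtain ⟨hx1, hx2⟩ := (mem_filter.1 hx).2
          have e3 : ((opt₂ x).filter (fun o => (v, c) ∈ inc x o)).card ≤ 1 := by
            rw [card_le_one]
            intro o ho p hp
            simp only [inc, hx1, if_true, mem_filter, mem_singleton, Prod.mk.injEq] at ho hp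
            rw [← ho.2.2, ← hp.2.2]
          have e3' : (((opt₂ x).filter (fun o => (v, c) ∈ inc x o)).card : ℝ) ≤ 1 := by
            exact_mod_cast e3
          have e4 : 0 < ((opt₂ x).card : ℝ) := by exact_mod_cast card_pos.2 (hopt₂ _)
          rw [div_le_iff₀ e4, hopt₂_eq x hx1]
          rw [hopt₂_eq x hx1] at e3'
          exact e3'.trans (hcard₁ x hx1)
        · have : (opt₂ x).filter (fun o => (v, c) ∈ inc x o) = ∅ := by
            apply filter_eq_empty_iff.2
            intro o _ ho
            simp only [inc] at ho
            split_ifs at ho with h6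
            · simp only [mem_singleton, Prod.mk.injEq] at ho
              exact hx (mem_filter.2 ⟨mem_univ _, h6, ho.1⟩)
            · simp at ho
          rw [this]
          simp
      rw [sum_ite_mem, univ_inter, sum_const, nsmul_eq_mul] at e2
      rw [e1] at h5
      push_cast at h5
      linarith
    have hsub : (G.neighborFinset v).filter (fun x => fc s(v, x) = c) ⊆
        (G.neighborFinset v).filter (fun x => cls s(v, x) = some c) ∪
          SP.filter (fun x => f₂ x = c) := by
      intro x hx
      obtain ⟨hx1, hx2⟩ := mem_filter.1 hx
      have hvx : G.Adj v x := by simpa using hx1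
      by_cases hxh : L ≤ G.degree x
      · apply mem_union_left
        refine mem_filter.2 ⟨hx1, ?_⟩
        rw [(fc_hh v x hv hxh).1, ← (fc_hh v x hv hxh).2, hx2]
      · have hlh : LightHeavy G L x v := ⟨by omega, hv, hvx.symm⟩
        rw [Sym2.eq_swap] at hx2
        by_cases hns : nd x ∧ v = spx x
        · apply mem_union_right
          refine mem_filter.2 ⟨mem_filter.2 ⟨mem_univ _, hns⟩, ?_⟩
          rw [hns.2, fc_sp x hns.1] at hx2
          exact hx2
        · apply mem_union_left
          refine mem_filter.2 ⟨hx1, ?_⟩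
          rw [Sym2.eq_swap, (fc_lh x v hlh hns).1, ← (fc_lh x v hlh hns).2, hx2]
    have hcard : (((G.neighborFinset v).filter (fun x => fc s(v, x) = c)).card : ℝ) ≤
        ((G.neighborFinset v).filter (fun x => cls s(v, x) = some c)).card +
          (SP.filter (fun x => f₂ x = c)).card := by
      exact_mod_cast (card_le_card hsub).trans (card_union_le _ _)
    -- the neighbourhood of `v` splits into three parts
    have hsplit : ((NH v).card : ℝ) +
        ((G.neighborFinset v).filter (fun x => ¬ L ≤ G.degree x ∧ x ∉ SP)).card + SP.card ≤ Δ := by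
      have e1 : (NH v).card +
        ((G.neighborFinset v).filter (fun x => ¬ L ≤ G.degree x ∧ x ∉ SP)).card + SP.card ≤ Δ := by
        refine le_trans ?_ (hmax v)
        rw [← G.card_neighborFinset_eq_degree, ← card_union_of_disjoint, ← card_union_of_disjoint]
        · apply card_le_card
          intro x hx
          simp only [mem_union, NH, mem_filter] at hx
          rcases hx with (hx | hx) | hx
          · exact hx.1
          · exact hx.1
          · exact (hSP x hx).1
        · rw [disjoint_left]
          intro x hx hx'
          rw [mem_union] at hx
          rcases hx with hx | hx
          · exact (hSP x hx').2 (mem_filter.1 hx).2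
          · exact (mem_filter.1 hx).2.2 hx'
        · rw [disjoint_left]
          intro x hx hx'
          exact (mem_filter.1 hx').2.1 (mem_filter.1 hx).2
      exact_mod_cast e1
    have := mul_le_mul_of_nonneg_left hsplit hρ
    nlinarith

end MainClasses
end IncFree

/-! ### Colouring the main edges class by class -/

namespace IncFree

open Finset

section MainColoring

variable {V B A : Type*} [Fintype V] [DecidableEq V] {G : SimpleGraph V} [DecidableRel G.Adj]
  [Fintype B] [DecidableEq B] [Fintype A] [DecidableEq A] {s : ℕ} [NeZero s]

/-- Splitting the main edges into the classes `fc` and colouring each class by Vizing's theorem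
with its own colours gives a main colouring; the promises kept by `fc` provide the colours that
separate palettes. -/
theorem main_coloring_of_classes {L D : ℕ} {R : Type*} (𝒢 : Groups G L (s + 1)) (hLD : L ≤ D)
    (cls : Sym2 V → Option R) (g : V → B → A) (fc : Sym2 V → B × (A → ZMod s))
    (havoid : ∀ v y, L ≤ G.degree v → G.Adj v y → fc s(v, y) ∉ promise s g v)
    (hcover : ∀ w v, LightHeavy G L w v → ¬ HasLightNbr G L w →
        ∃ x ∈ 𝒢.grp w v, fc s(w, x) ∈ promise s g v)
    (hneedy : ∀ w z, Needy G L w z → ∃ x, LightHeavy G L w x ∧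
        ∀ y, LightHeavy G L z y → fc s(w, x) ≠ fc s(z, y))
    (hload : ∀ v, L ≤ G.degree v → ∀ c,
        ((G.neighborFinset v).filter (fun x => fc s(v, x) = c)).card ≤ D) :
    ∃ cm : Sym2 V → (B × (A → ZMod s)) × Fin (D + 1),
    (∀ u v w, IsMain G L cls s(u, v) → IsMain G L cls s(u, w) → v ≠ w →
      cm s(u, v) ≠ cm s(u, w)) ∧
    (∀ w v, LightHeavy G L w v → ¬ HasLightNbr G L w → IsMain G L cls s(w, v) →
      ∃ x ∈ 𝒢.grp w v, ∀ y, IsMain G L cls s(v, y) → cm s(w, x) ≠ cm s(v, y)) ∧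
    (∀ w z, G.degree w < L → G.degree z < L → G.Adj w z → Prec G w z →
      (∀ z', G.Adj w z' → G.degree z' < L → z' = z) →
      ∃ x, LightHeavy G L w x ∧
        (IsMain G L cls s(w, x) → ∀ y, IsMain G L cls s(z, y) → cm s(w, x) ≠ cm s(z, y))) := by
  classical
  let H : B × (A → ZMod s) → SimpleGraph V := fun c =>
    { Adj := fun u v => G.Adj u v ∧ fc s(u, v) = c
      symm := ⟨fun u v h => ⟨h.1.symm, by rw [Sym2.eq_swap]; exact h.2⟩⟩
      loopless := ⟨fun u h => h.1.ne rfl⟩ }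
  -- only vertices of large degree have a controlled load, so the light ones use `L ≤ D`
  have hH : ∀ c v, ((H c).neighborSet v).ncard ≤ D := by
    intro c v
    have : (H c).neighborSet v = ((G.neighborFinset v).filter (fun x => fc s(v, x) = c) : Finset V) := by
      ext x
      simp [H]
    rw [this, Set.ncard_coe_finset]
    by_cases hv : L ≤ G.degree v
    · exact hload v hv c
    · refine (card_filter_le _ _).trans ?_
      rw [G.card_neighborFinset_eq_degree]
      omega
  choose col hcol using fun c => exists_edge_coloring (H c) D (hH c)
  refine ⟨fun e => (fc e, col (fc e) e), ?_, ?_, ?_⟩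
  · intro u v w hv hw hvw he
    obtain ⟨h1, h2⟩ := Prod.mk.inj he
    rw [h1] at h2
    exact hcol _ u v w ⟨hv.1, h1⟩ ⟨hw.1, rfl⟩ hvw h2
  · intro w v hlh hl _
    obtain ⟨x, hx, hxv⟩ := hcover w v hlh hl
    refine ⟨x, hx, fun y hy he => ?_⟩
    have h1 := (Prod.mk.inj he).1
    rw [h1] at hxv
    exact havoid v y hlh.2.1 hy.1 hxv
  · intro w z hw hz hwz hp hu
    obtain ⟨x, hx, hne⟩ := hneedy w z ⟨hw, hz, hwz, hp, hu⟩
    refine ⟨x, hx, fun _ y hy he => hne y ⟨hz, ?_, hy.1⟩ (Prod.mk.inj he).1⟩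
    obtain ⟨a, ha, hal⟩ := hy.2.1
    rcases Sym2.mem_iff.1 ha with rfl | rfl
    · omega
    · exact hal

end MainColoring
end IncFree

/-! ### The bound for given parameters -/

namespace IncFree

open Finset

section Core

variable {V : Type*} [Fintype V] [DecidableEq V] {G : SimpleGraph V} [DecidableRel G.Adj]

/-- The bound for given parameters when `δ = 2`, where the main edges are coloured by targets. -/
theorem index_le_of_params_two {L Δ Q k N D : ℕ} [Fact Q.Prime] (hdeg : ∀ v, 2 ≤ G.degree v)
    (hmax : ∀ v, G.degree v ≤ Δ) (hk : Δ ^ 2 + 1 ≤ Q ^ k) (hQk : 2 * k < Q)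
    (hL : 4 * 2 * Q * N + 1 < L) (hQN : Q ^ 2 ≤ N) (hLΔ : L ≤ Δ) (hLD : L ≤ D)
    (hD : (Q : ℝ) ^ 2 * ((Δ : ℝ) / N + 4 * (2 : ℕ)) ≤ D) :
    inclusionChromaticIndex G ≤
      (2 * L ^ 2 + 1) + (Q ^ 2 * (3 * D + L + L ^ 2 + 1) + (3 * Δ + L + L ^ 2 + 1)) := by
  obtain ⟨𝒢⟩ := exists_groups (G := G) (L := L) le_rfl hdeg
  obtain ⟨g, hg⟩ := exists_labels (G := G) Δ k Q hmax hk
  obtain ⟨M, rfl⟩ := Nat.exists_eq_add_of_le hQN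
  obtain ⟨cls, h1, h2, h3, h4⟩ := exists_extra_classes (M := M) (by norm_num) 𝒢 hmax g hg hQk hL
  obtain ⟨cm, c1, c2, c3⟩ := exists_main_coloring_of_targets 𝒢 le_rfl hdeg hmax hLΔ cls h1
  have := inclusionChromaticIndex_le_of_main (D := D) 𝒢 le_rfl hdeg hLD g cls h1 h2 h3 (by
    intro v hv
    have := h4 v hv
    push_cast at hD this
    exact_mod_cast this.trans hD) cm c1 c2 c3
  rwa [Fintype.card_fin] at this

/-- The bound for given parameters when `δ = s + 1 ≥ 3`, where the main edges are split into
`Q * T * s ^ Q` classes of maximum degree at most `D'`. -/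
theorem index_le_of_params {s L Δ Q k N D D' T : ℕ} [Fact Q.Prime] (hs : 2 ≤ s)
    (hdeg : ∀ v, s + 1 ≤ G.degree v)
    (hmax : ∀ v, G.degree v ≤ Δ) (hk : Δ ^ 2 + 1 ≤ Q ^ k) (hQk : 2 * k < Q)
    (hL : 4 * (s + 1) * Q * N + 1 < L) (hQN : Q ^ 2 ≤ N) (hLD : L ≤ D)
    (hD : (Q : ℝ) ^ 2 * ((Δ : ℝ) / N + 4 * ((s + 1 : ℕ) : ℝ)) ≤ D) (hLD' : L ≤ D')
    {m ρ τ θ β N' κ : ℝ} (hm : m = ((Q * T * s ^ Q : ℕ) : ℝ)) (hκ : k ≤ κ * Q)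
    (hρ : 0 ≤ ρ) (hθ : 0 < θ) (hN : 0 < N')
    (hgrp : (s : ℝ) ≤ ρ * (m * (1 - (2 * (s + 1)) ^ 2 * κ) * ((s : ℝ) - 1)))
    (hsp : 1 ≤ ρ * (m * (1 - 1 / (s : ℝ)) - L))
    (hβ : m * (Δ + κ * (Δ : ℝ) ^ 2) ≤ β * θ ^ 2)
    (hNβ : N' ≤ m * (1 - 1 / (s : ℝ)) ^ 2 - 2 * β)
    (hNρ : 1 - 1 / (s : ℝ) ≤ ρ * N') (hNτ : θ ≤ τ * N')
    (hD' : ρ * Δ + τ + 4 * (s + 1) + 2 ≤ D') :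
    inclusionChromaticIndex G ≤
      (2 * L ^ 2 + 1) + (Q ^ 2 * (3 * D + L + L ^ 2 + 1) + Q * T * s ^ Q * (D' + 1)) := by
  haveI : NeZero s := ⟨by omega⟩
  obtain ⟨𝒢⟩ := exists_groups (G := G) (L := L) (δ := s + 1) (by omega) hdeg
  obtain ⟨g, hg⟩ := exists_labels (G := G) Δ k Q hmax hk
  obtain ⟨M, rfl⟩ := Nat.exists_eq_add_of_le hQN
  obtain ⟨cls, h1, h2, h3, h4⟩ := exists_extra_classes (M := M) (by omega) 𝒢 hmax g hg hQk hL
  have hg' : ∀ u v, u ≠ v → (G.Adj u v ∨ ∃ x, G.Adj u x ∧ G.Adj x v) →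
      ((univ : Finset (ZMod Q × Fin T)).filter (fun b => g u b.1 = g v b.1)).card ≤ k * T := by
    intro u v hne h
    have e : (univ : Finset (ZMod Q × Fin T)).filter (fun b => g u b.1 = g v b.1) =
        (univ.filter (fun b => g u b = g v b)) ×ˢ univ := by
      ext b
      simp
    rw [e, card_product, card_univ, Fintype.card_fin]
    exact Nat.mul_le_mul_right _ (hg u v hne h)
  have cB : (Fintype.card (ZMod Q × Fin T) : ℝ) = Q * T := by
    rw [Fintype.card_prod, ZMod.card, Fintype.card_fin, Nat.cast_mul]
  have hm' : m = Q * T * (s : ℝ) ^ Q := by rw [hm]; push_cast; ring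
  have hs1 : (0 : ℝ) ≤ (s : ℝ) - 1 := by
    have : (2 : ℝ) ≤ s := by exact_mod_cast hs
    linarith
  have hkT : (k : ℝ) * T * (s : ℝ) ^ Q ≤ κ * m := by
    rw [hm']
    have : 0 ≤ (T : ℝ) * (s : ℝ) ^ Q := by positivity
    nlinarith [mul_le_mul_of_nonneg_right hκ this]
  obtain ⟨fc, f1, f2, f3, f4⟩ := exists_main_classes (ρ := ρ) (τ := τ) (θ := θ) (β := β) (N := N')
    𝒢 (fun v => le_trans (by omega) (hdeg v)) hmax (fun v (b : ZMod Q × Fin T) => g v b.1) hg'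
    hρ hθ hN (by
      rw [cB, ZMod.card]
      refine hgrp.trans (mul_le_mul_of_nonneg_left (mul_le_mul_of_nonneg_right ?_ hs1) hρ)
      push_cast
      rw [sub_mul, ← hm', mul_sub, mul_one]
      have h0 : (0 : ℝ) ≤ (2 * (s + 1)) ^ 2 := by positivity
      nlinarith [mul_le_mul_of_nonneg_left hkT h0]) (by
      rw [cB, ZMod.card, ← hm']
      exact hsp) (by
      rw [cB, ZMod.card]
      refine le_trans ?_ hβ
      push_cast
      have h0 : (0 : ℝ) ≤ (Δ : ℝ) ^ 2 := by positivity
      have := mul_le_mul_of_nonneg_right hkT h0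
      have h5 : m * Δ = Q * T * (s : ℝ) ^ Q * Δ := by rw [hm']
      nlinarith) (by
      rw [cB, ZMod.card, ← hm']
      exact hNβ) hNρ hNτ
  obtain ⟨cm, c1, c2, c3⟩ := main_coloring_of_classes (D := D') 𝒢 hLD' cls _ fc f1 f2 f3 (by
    intro v hv c
    exact_mod_cast (f4 v hv c).trans hD')
  have := inclusionChromaticIndex_le_of_main (D := D) 𝒢 (by omega) hdeg hLD g cls h1 h2 h3 (by
    intro v hv
    have := h4 v hv
    push_cast at hD this
    exact_mod_cast this.trans hD) cm c1 c2 c3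
  rw [Fintype.card_prod, Fintype.card_prod, Fintype.card_prod, Fintype.card_fun, ZMod.card,
    ZMod.card, Fintype.card_fin, Fintype.card_fin] at this
  exact this

end Core
end IncFree

/-! ### Choice of parameters -/

namespace IncFree

open Filter Topology

/-- The constants in the bound on the number of main colours. They exist because
`s / (s - 1) < 1 + 4 / (s + 1)` for `s ≥ 2`: choose `r` slightly larger than `s / (s - 1)`, then `η`
small, and `ε` small depending on `η`. -/
theorem exists_constants {s : ℕ} (hs : 2 ≤ s) : ∃ r η ε : ℝ, 1 ≤ r ∧ 0 < η ∧ 0 < ε ∧ ε ≤ 1 / 4 ∧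
    (s : ℝ) ≤ r * ((1 - (2 * (s + 1)) ^ 2 * ε) * ((s : ℝ) - 1)) ∧
    1 ≤ r * ((1 - 1 / (s : ℝ)) - ε) ∧
    0 < (1 - 1 / (s : ℝ)) ^ 2 - 4 * ε / η ^ 2 ∧
    1 - 1 / (s : ℝ) ≤ r * ((1 - 1 / (s : ℝ)) ^ 2 - 4 * ε / η ^ 2) ∧
    r + η / ((1 - 1 / (s : ℝ)) ^ 2 - 4 * ε / η ^ 2) + ε * (4 * s + 8) ≤
      1 + 4 / ((s + 1 : ℕ) : ℝ) := by
  have hs2 : (2 : ℝ) ≤ s := by exact_mod_cast hs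
  set q : ℝ := 1 - 1 / (s : ℝ) with hq
  have hqs : q * s = s - 1 := by rw [hq]; field_simp
  have hq0 : 0 < q := by
    by_contra! h
    nlinarith
  have hq1 : q < 1 := by
    have : (0:ℝ) < 1 / s := by positivity
    linarith
  set a : ℝ := 1 + 4 / ((s + 1 : ℕ) : ℝ) - 1 / q with ha
  have ha0 : 0 < a := by
    have h1 : 1 / q = s / (s - 1) := by
      rw [div_eq_div_iff hq0.ne' (by linarith), one_mul, mul_comm, hqs]
    have h2 : a = (3 * s - 5) / ((s + 1) * (s - 1)) := by
      rw [ha, h1]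
      push_cast
      have : (s : ℝ) - 1 ≠ 0 := by linarith
      have : (s : ℝ) + 1 ≠ 0 := by linarith
      field_simp
      ring
    rw [h2]
    apply div_pos (by linarith)
    apply mul_pos <;> linarith
  have hqi : 1 < 1 / q := by rw [lt_div_iff₀ hq0]; linarith
  have hr1 : 1 < (1 / q + a / 2) * q := by
    have : 1 / q * q = 1 := by field_simp
    nlinarith [mul_pos ha0 hq0]
  set r : ℝ := 1 / q + a / 2 with hr
  set η : ℝ := a * q ^ 2 / 4 with hη
  have hη0 : 0 < η := by positivity
  -- each requirement is strict for `ε = 0`, so it persists for small positive `ε`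
  have key : ∀ {f g : ℝ → ℝ}, ContinuousAt f 0 → ContinuousAt g 0 → f 0 < g 0 →
      ∀ᶠ ε in 𝓝[>] (0 : ℝ), f ε < g ε := fun hf hg h =>
    (hf.eventually_lt hg h).filter_mono nhdsWithin_le_nhds
  have e1 := key (f := fun _ => (s : ℝ))
    (g := fun ε => r * ((1 - (2 * (s + 1)) ^ 2 * ε) * ((s : ℝ) - 1)))
    (by fun_prop) (by fun_prop) (by
      simp only [mul_zero, sub_zero, one_mul]
      rw [← hqs, ← mul_assoc]
      nlinarith)
  have e2 := key (f := fun _ => (1 : ℝ)) (g := fun ε => r * (q - ε))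
    (by fun_prop) (by fun_prop) (by simpa using hr1)
  have e3 := key (f := fun _ => (0 : ℝ)) (g := fun ε => q ^ 2 - 4 * ε / η ^ 2)
    (by fun_prop) (by fun_prop) (by simp; positivity)
  have e4 := key (f := fun _ => q) (g := fun ε => r * (q ^ 2 - 4 * ε / η ^ 2))
    (by fun_prop) (by fun_prop) (by simp; nlinarith)
  have e5 := key (f := fun ε => r + η / (q ^ 2 - 4 * ε / η ^ 2) + ε * (4 * s + 8))
    (g := fun _ => 1 + 4 / ((s + 1 : ℕ) : ℝ))
    (by
      have : q ^ 2 - 4 * 0 / η ^ 2 ≠ 0 := by simp; exact hq0.ne'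
      fun_prop (disch := assumption)) (by fun_prop) (by
      simp only [mul_zero, zero_div, sub_zero, zero_mul, add_zero]
      have : η / q ^ 2 = a / 4 := by rw [hη]; field_simp
      rw [this]
      linarith)
  have e6 := key (f := fun ε => ε) (g := fun _ => (1 / 4 : ℝ)) (by fun_prop) (by fun_prop)
    (by norm_num)
  obtain ⟨ε, ⟨⟨⟨⟨⟨⟨h1, h2⟩, h3⟩, h4⟩, h5⟩, h6⟩, h7⟩⟩ :=
    ((((((e1.and e2).and e3).and e4).and e5).and e6).and self_mem_nhdsWithin).exists
  exact ⟨r, η, ε, by linarith, hη0, h7, h6.le, h1.le, h2.le, h3, h4.le, h5.le⟩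

/-- The growth conditions that determine how large `Δ` has to be. -/
theorem eventually_growth (s : ℕ) (hs : 1 ≤ s) {ε : ℝ} (hε : 0 < ε) (K : ℝ) :
    ∀ᶠ Δ : ℕ in atTop, 20 * s ≤ Real.log Δ ∧ 20 * s / ε ≤ Real.log Δ ∧
      120 * s / ε ≤ Real.log (Real.log Δ / (20 * s)) ∧
      K * Real.log Δ ^ 2 ≤ Real.exp (Real.log Δ / 30) := by
  have hlog : Tendsto (fun Δ : ℕ => Real.log Δ) atTop atTop :=
    Real.tendsto_log_atTop.comp tendsto_natCast_atTop_atTop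
  have hs0 : (0 : ℝ) < s := by exact_mod_cast hs
  have h1 : ∀ᶠ x : ℝ in atTop, 120 * s / ε ≤ Real.log (x / (20 * s)) :=
    (Real.tendsto_log_atTop.comp (tendsto_id.atTop_div_const (by positivity))).eventually_ge_atTop _
  have h2 : ∀ᶠ x : ℝ in atTop, K * x ^ 2 ≤ Real.exp (x / 30) := by
    have h3 := (Real.tendsto_exp_div_pow_atTop 2).comp
      (tendsto_id.atTop_div_const (show (0:ℝ) < 30 by norm_num))
    filter_upwards [h3.eventually_ge_atTop (K * 900), eventually_gt_atTop 0] with x hx hx0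
    simp only [Function.comp, id] at hx
    rw [le_div_iff₀ (by positivity)] at hx
    nlinarith
  filter_upwards [hlog.eventually_ge_atTop _, hlog.eventually_ge_atTop _, hlog.eventually h1,
    hlog.eventually h2] with Δ a b c d
  exact ⟨a, b, c, d⟩

set_option maxHeartbeats 1000000 in
/-- The parameters for large `Δ`: `L` is about `Δ ^ (1/3) * log Δ`, `Q` is a prime of order
`log Δ / s`, `k = ⌊ε * Q⌋`, the number `Q * T * s ^ Q` of main classes is of order `Δ ^ (1/2)`, and
`N` is about `L / (8 * (s + 1) * Q)`. -/
theorem exists_params (s : ℕ) (hs : 1 ≤ s) {ε : ℝ} (hε : 0 < ε) (hε4 : ε ≤ 1 / 4) :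
    ∃ Δ₀ : ℕ, ∀ Δ : ℕ, Δ₀ ≤ Δ → ∃ L Q k T N : ℕ, Q.Prime ∧ Δ ^ 2 + 1 ≤ Q ^ k ∧ 2 * k < Q ∧
      k ≤ ε * Q ∧ 0 < Q * T * s ^ Q ∧ L ≤ ε * (Q * T * s ^ Q : ℕ) ∧ (Q * T * s ^ Q : ℕ) ≤ ε * Δ ∧
      L * (Q * T * s ^ Q) ≤ Δ ∧ L ≤ Δ ∧ 4 * (s + 1) * Q * N + 1 < L ∧ Q ^ 2 ≤ N ∧
      (Q : ℝ) ≤ Real.log Δ ∧ (L : ℝ) ^ 2 ≤ 4 * (Δ : ℝ) ^ ((2 : ℝ) / 3) * Real.log Δ ^ 2 ∧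
      (Δ : ℝ) / N * Real.log Δ ≤ 8 * (s + 1) * Q * (Δ : ℝ) ^ ((2 : ℝ) / 3) ∧
      1 ≤ ε * Δ ∧ 1 ≤ Real.log Δ ∧ 1 ≤ (Δ : ℝ) ^ ((2 : ℝ) / 3) := by
  set K : ℝ := 8 * (s + 1) + 4 + 2 / ε with hK
  obtain ⟨Δ₀, h⟩ := eventually_atTop.1 (eventually_growth s hs hε K)
  refine ⟨max Δ₀ 1, fun Δ hΔ => ?_⟩
  obtain ⟨g1, g2, g3, g4⟩ := h Δ (le_trans (le_max_left _ _) hΔ)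
  have hΔ1 : (1 : ℝ) ≤ Δ := by exact_mod_cast le_trans (le_max_right _ _) hΔ
  set ℓ : ℝ := Real.log Δ with hℓ
  set y : ℝ := Real.exp (ℓ / 30) with hy
  have hyn : ∀ n : ℕ, y ^ n = Real.exp (ℓ * (n / 30)) := by
    intro n
    rw [hy, ← Real.exp_nat_mul]
    congr 1
    ring
  have hyΔ : y ^ 30 = Δ := by
    rw [hyn]
    norm_num
    rw [hℓ, Real.exp_log (by linarith)]
  have hyX : y ^ 20 = (Δ : ℝ) ^ ((2 : ℝ) / 3) := by
    rw [hyn, Real.rpow_def_of_pos (by linarith)]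
    congr 1
    push_cast
    norm_num [hℓ]
  clear_value y ℓ K
  have hs0 : (1 : ℝ) ≤ s := by exact_mod_cast hs
  have hℓ1 : 1 ≤ ℓ := by linarith
  have hεinv : 0 < 2 / ε := by positivity
  have hℓ2 : ℓ ≤ ℓ ^ 2 := by nlinarith
  have hK20 : 20 ≤ K := by rw [hK]; linarith
  have hyK : K * ℓ ≤ y := le_trans (by nlinarith) g4
  have hyε : 2 * ℓ ≤ ε * y := by
    have h1 : 2 / ε * ℓ ≤ y := le_trans (by rw [hK]; nlinarith) hyK
    have h2 : ε * (2 / ε * ℓ) = 2 * ℓ := by field_simp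
    nlinarith [mul_le_mul_of_nonneg_left h1 hε.le]
  have hy4 : 4 * ℓ ≤ y := by nlinarith
  have hy1 : 1 ≤ y := by linarith
  have hpow : ∀ {a b : ℕ}, a ≤ b → y ^ a ≤ y ^ b := fun h => pow_le_pow_right₀ hy1 h
  have hpos : ∀ a : ℕ, 0 < y ^ a := fun a => pow_pos (by linarith) a
  -- the prime `Q`, by Bertrand's postulate
  obtain ⟨n, hn⟩ : ∃ a : ℕ, a = ⌊ℓ / (20 * s)⌋₊ := ⟨_, rfl⟩
  have hn0 : n ≠ 0 := by
    have : 1 ≤ n := by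
      rw [hn, Nat.one_le_floor_iff, le_div_iff₀ (by positivity)]
      linarith
    omega
  obtain ⟨Q, hQp, hnQ, hQn⟩ := Nat.exists_prime_lt_and_le_two_mul n hn0
  have hQlow : ℓ / (20 * s) ≤ Q := by
    have h1 := (Nat.lt_floor_add_one (ℓ / (20 * s))).le
    rw [← hn] at h1
    have h2 : ((n + 1 : ℕ) : ℝ) ≤ Q := by exact_mod_cast hnQ
    push_cast at h2
    linarith
  have hQup : s * Q ≤ ℓ / 10 := by
    have h1 : (n : ℝ) ≤ ℓ / (20 * s) := hn ▸ Nat.floor_le (by positivity)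
    have h2 : (Q : ℝ) ≤ 2 * n := by exact_mod_cast hQn
    have h3 : s * (ℓ / (20 * s)) = ℓ / 20 := by field_simp
    nlinarith
  have hQ0 : (0 : ℝ) < Q := by exact_mod_cast hQp.pos
  have hQℓ : (Q : ℝ) ≤ ℓ := by nlinarith
  -- the bound `k` on the number of places where two labels agree
  obtain ⟨k, hkdef⟩ : ∃ a : ℕ, a = ⌊ε * Q⌋₊ := ⟨_, rfl⟩
  have hk1 : (k : ℝ) ≤ ε * Q := hkdef ▸ Nat.floor_le (by positivity)
  have hεQ : 1 ≤ ε * Q := by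
    have h1 : 1 / ε ≤ ℓ / (20 * s) := by
      rw [le_div_iff₀ (by positivity)]
      calc 1 / ε * (20 * s) = 20 * s / ε := by ring
        _ ≤ ℓ := g2
    have h2 : ε * (1 / ε) = 1 := by field_simp
    have := mul_le_mul_of_nonneg_left (h1.trans hQlow) hε.le
    linarith
  have hk2 : ε * Q / 2 ≤ k := by
    have h1 := Nat.lt_floor_add_one (ε * Q)
    rw [← hkdef] at h1
    have h2 : (1 : ℝ) ≤ k := by
      have : 1 ≤ k := by rw [hkdef, Nat.one_le_floor_iff]; exact hεQ
      exact_mod_cast this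
    linarith
  have hQk : 2 * k < Q := by
    have : (2 : ℝ) * k < Q := by nlinarith
    exact_mod_cast this
  have hΔk : Δ ^ 2 + 1 ≤ Q ^ k := by
    have h1 : 120 * s / ε ≤ Real.log Q :=
      g3.trans (Real.log_le_log (by positivity) hQlow)
    have h2 : 3 * ℓ ≤ k * Real.log Q := by
      have h3 : ε * (ℓ / (20 * s)) / 2 ≤ k := le_trans (by gcongr) hk2
      calc 3 * ℓ = (ε * (ℓ / (20 * s)) / 2) * (120 * s / ε) := by field_simp; norm_num
        _ ≤ k * Real.log Q := by gcongr
    have h3 : (Δ : ℝ) ^ 3 ≤ (Q : ℝ) ^ k := by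
      calc (Δ : ℝ) ^ 3 = Real.exp (3 * ℓ) := by
            rw [hℓ, ← Real.exp_log (show (0:ℝ) < Δ by linarith), Real.log_exp,
              ← Real.exp_nat_mul]
            norm_num
        _ ≤ Real.exp (k * Real.log Q) := Real.exp_le_exp.2 h2
        _ = (Q : ℝ) ^ k := by rw [Real.exp_nat_mul, Real.exp_log hQ0]
    have h4 : (2 : ℝ) ≤ Δ := by
      rw [← hyΔ]
      have := hpow (show 1 ≤ 30 by norm_num)
      rw [pow_one] at this
      linarith
    have h5 : (Δ : ℝ) ^ 2 + 1 ≤ (Δ : ℝ) ^ 3 := by nlinarith [sq_nonneg ((Δ:ℝ) - 1)]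
    exact_mod_cast h5.trans h3
  -- the number of main classes
  have hsQ : (s : ℝ) ^ Q ≤ y ^ 3 := by
    have h1 : (s : ℝ) ≤ Real.exp s := by linarith [Real.add_one_le_exp (s : ℝ)]
    calc (s : ℝ) ^ Q ≤ Real.exp s ^ Q := by gcongr
      _ = Real.exp (s * Q) := by rw [← Real.exp_nat_mul, mul_comm]
      _ ≤ Real.exp (ℓ * ((3 : ℕ) / 30)) := by
        apply Real.exp_le_exp.2
        push_cast
        linarith
      _ = y ^ 3 := (hyn 3).symm
  obtain ⟨P, hP⟩ : ∃ a : ℝ, a = Q * (s : ℝ) ^ Q := ⟨_, rfl⟩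
  have hP0 : 0 < P := by rw [hP]; positivity
  have hPy : P ≤ y ^ 4 := by
    calc P ≤ y * y ^ 3 := by
          rw [hP]
          have : (Q : ℝ) ≤ y := by linarith
          gcongr
      _ = y ^ 4 := by ring
  obtain ⟨T, hT⟩ : ∃ a : ℕ, a = ⌈y ^ 15 / P⌉₊ := ⟨_, rfl⟩
  have hmlow : y ^ 15 ≤ ((Q * T * s ^ Q : ℕ) : ℝ) := by
    have h1 := Nat.le_ceil (y ^ 15 / P)
    rw [← hT] at h1
    rw [div_le_iff₀ hP0] at h1
    push_cast
    calc y ^ 15 ≤ _ := h1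
      _ = _ := by rw [hP]; ring
  have hmup : ((Q * T * s ^ Q : ℕ) : ℝ) ≤ 2 * y ^ 15 := by
    have h1 := (Nat.ceil_lt_add_one (show 0 ≤ y ^ 15 / P by positivity)).le
    rw [← hT] at h1
    have h2 := mul_le_mul_of_nonneg_right h1 hP0.le
    rw [add_mul, div_mul_cancel₀ _ hP0.ne', one_mul] at h2
    push_cast
    calc (Q : ℝ) * T * (s : ℝ) ^ Q = T * P := by rw [hP]; ring
      _ ≤ y ^ 15 + P := h2
      _ ≤ 2 * y ^ 15 := by linarith [hpow (show 4 ≤ 15 by norm_num)]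
  generalize hm : Q * T * s ^ Q = m at *
  -- the threshold between light and heavy vertices
  obtain ⟨L, hL⟩ : ∃ a : ℕ, a = ⌈y ^ 10 * ℓ⌉₊ := ⟨_, rfl⟩
  have hLlow : y ^ 10 * ℓ ≤ L := hL ▸ Nat.le_ceil _
  have hLup : (L : ℝ) ≤ 2 * (y ^ 10 * ℓ) := by
    have h1 := (Nat.ceil_lt_add_one (show 0 ≤ y ^ 10 * ℓ by positivity)).le
    rw [← hL] at h1
    have h2 : 1 ≤ y ^ 10 * ℓ := one_le_mul_of_one_le_of_one_le (one_le_pow₀ hy1) hℓ1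
    linarith
  have hLm : (L : ℝ) * m ≤ Δ := by
    calc (L : ℝ) * m ≤ (2 * (y ^ 10 * ℓ)) * (2 * y ^ 15) := by gcongr
      _ = y ^ 25 * (4 * ℓ) := by ring
      _ ≤ y ^ 25 * y := by gcongr
      _ = y ^ 26 := by ring
      _ ≤ y ^ 30 := hpow (by norm_num)
      _ = Δ := hyΔ
  have hm1 : 0 < m := by
    have : (0 : ℝ) < m := (hpos 15).trans_le hmlow
    exact_mod_cast this
  have hLm' : L * m ≤ Δ := by exact_mod_cast hLm
  have hLK : K * ℓ ^ 3 ≤ L := by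
    refine le_trans ?_ hLlow
    have h1 : K * ℓ ^ 2 ≤ y ^ 10 := g4.trans (by simpa using hpow (show 1 ≤ 10 by norm_num))
    calc K * ℓ ^ 3 = K * ℓ ^ 2 * ℓ := by ring
      _ ≤ y ^ 10 * ℓ := by gcongr
  have hQ3 : (Q : ℝ) ^ 3 ≤ ℓ ^ 3 := by gcongr
  have hℓ3 : 1 ≤ ℓ ^ 3 := one_le_pow₀ hℓ1
  have hℓ13 : ℓ ≤ ℓ ^ 3 := by nlinarith
  -- the number of options for extra classes, dummies included
  have hW0 : (0 : ℝ) < 8 * (s + 1) * Q := by positivity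
  obtain ⟨N, hN⟩ : ∃ a : ℕ, a = ⌈(L : ℝ) / (8 * (s + 1) * Q)⌉₊ := ⟨_, rfl⟩
  have hNlow : (L : ℝ) / (8 * (s + 1) * Q) ≤ N := hN ▸ Nat.le_ceil _
  have hNup : (N : ℝ) * (8 * (s + 1) * Q) ≤ L + 8 * (s + 1) * Q := by
    have h1 := (Nat.ceil_lt_add_one (show 0 ≤ (L : ℝ) / (8 * (s + 1) * Q) by positivity)).le
    rw [← hN] at h1
    have h2 := mul_le_mul_of_nonneg_right h1 hW0.le
    rwa [add_mul, div_mul_cancel₀ _ hW0.ne', one_mul] at h2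
  have hLpos : (0 : ℝ) < L := by nlinarith
  have hNpos : (0 : ℝ) < N := lt_of_lt_of_le (by positivity) hNlow
  refine ⟨L, Q, k, T, N, ?_⟩
  rw [hm]
  refine ⟨hQp, hΔk, hQk, hk1, hm1, ?_, ?_, hLm', ?_, ?_, ?_, hQℓ, ?_, ?_, ?_, hℓ1, ?_⟩
  · calc (L : ℝ) ≤ y ^ 10 * (2 * ℓ) := by linarith
      _ ≤ y ^ 10 * (ε * y) := by gcongr
      _ = ε * y ^ 11 := by ring
      _ ≤ ε * y ^ 15 := by
        have := hpow (show 11 ≤ 15 by norm_num)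
        gcongr
      _ ≤ ε * m := by gcongr
  · calc (m : ℝ) ≤ y ^ 15 * 2 := by linarith
      _ ≤ y ^ 15 * (ε * y) := by
        have : 2 ≤ ε * y := by linarith
        gcongr
      _ = ε * y ^ 16 := by ring
      _ ≤ ε * y ^ 30 := by
        have := hpow (show 16 ≤ 30 by norm_num)
        gcongr
      _ = ε * Δ := by rw [hyΔ]
  · exact (Nat.le_mul_of_pos_right L hm1).trans hLm'
  · have h1 : (4 : ℝ) * (s + 1) * Q * N + 1 < L := by
      have h2 : (8 : ℝ) * (s + 1) * Q ≤ 8 * (s + 1) * ℓ ^ 3 := by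
        have := hQℓ.trans hℓ13
        gcongr
      have h3 : (8 * ((s : ℝ) + 1) + 4) * ℓ ^ 3 ≤ K * ℓ ^ 3 := by
        apply mul_le_mul_of_nonneg_right _ (by linarith)
        rw [hK]
        linarith
      linarith
    exact_mod_cast h1
  · have h1 : (Q : ℝ) ^ 2 ≤ N := by
      refine le_trans ?_ hNlow
      rw [le_div_iff₀ hW0]
      refine le_trans ?_ hLK
      calc (Q : ℝ) ^ 2 * (8 * (s + 1) * Q) = 8 * (s + 1) * (Q : ℝ) ^ 3 := by ring
        _ ≤ K * ℓ ^ 3 := by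
          apply mul_le_mul _ hQ3 (by positivity) (by linarith)
          rw [hK]
          linarith
    exact_mod_cast h1
  · rw [← hyX]
    calc (L : ℝ) ^ 2 ≤ (2 * (y ^ 10 * ℓ)) ^ 2 := by gcongr
      _ = 4 * y ^ 20 * ℓ ^ 2 := by ring
  · rw [← hyX, div_mul_eq_mul_div, div_le_iff₀ hNpos, ← hyΔ]
    have h1 : (L : ℝ) ≤ N * (8 * (s + 1) * Q) := by rwa [div_le_iff₀ hW0] at hNlow
    calc y ^ 30 * ℓ = y ^ 20 * (y ^ 10 * ℓ) := by ring
      _ ≤ y ^ 20 * (N * (8 * (s + 1) * Q)) := by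
        have := hLlow.trans h1
        have := hpos 20
        gcongr
      _ = _ := by ring
  · rw [← hyΔ]
    have := hpow (show 1 ≤ 30 by norm_num)
    rw [pow_one] at this
    nlinarith
  · rw [← hyX]
    exact one_le_pow₀ hy1

end IncFree

/-! ### The asymptotic bound -/

namespace IncFree

open Finset

/-- All colours except those of the main classes contribute to the lower-order term. Here `X` stands for
`Δ ^ (2/3)` and `ℓ` for `log Δ`. -/
theorem lower_order_le {L Q N δ : ℕ} {Δ X ℓ : ℝ} (hΔ : 0 ≤ Δ) (hX : 1 ≤ X) (hℓ : 1 ≤ ℓ)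
    (hQ : (Q : ℝ) ≤ ℓ)
    (hL : (L : ℝ) ^ 2 ≤ 4 * X * ℓ ^ 2) (hN : Δ / N * ℓ ≤ 8 * δ * Q * X) :
    ∃ D : ℕ, L ≤ D ∧ (Q : ℝ) ^ 2 * (Δ / N + 4 * (δ : ℝ)) ≤ D ∧
      2 * (L : ℝ) ^ 2 + 1 + (Q : ℝ) ^ 2 * (3 * D + L + (L : ℝ) ^ 2 + 1) +
        (L + (L : ℝ) ^ 2 + 1) ≤ (42 + 36 * δ) * (X * ℓ ^ 4) := by
  have hA0 : 0 ≤ Δ / N := by positivity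
  generalize Δ / (N : ℝ) = A at *
  have hc := (Nat.ceil_lt_add_one (show 0 ≤ (Q : ℝ) ^ 2 * (A + 4 * δ) by positivity)).le
  have hc' := Nat.le_ceil ((Q : ℝ) ^ 2 * (A + 4 * δ))
  generalize ⌈(Q : ℝ) ^ 2 * (A + 4 * δ)⌉₊ = c at *
  refine ⟨L + c, Nat.le_add_right L c, ?_, ?_⟩
  · push_cast
    have : (0 : ℝ) ≤ L := by positivity
    linarith
  have hLL : (L : ℝ) ≤ (L : ℝ) ^ 2 := by exact_mod_cast Nat.le_self_pow (by norm_num) L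
  have hQ2 : (Q : ℝ) ^ 2 ≤ ℓ ^ 2 := by gcongr
  have hQ4 : (Q : ℝ) ^ 4 ≤ ℓ ^ 4 := by gcongr
  have hℓ2 : 1 ≤ ℓ ^ 2 := one_le_pow₀ hℓ
  have hℓ24 : ℓ ^ 2 ≤ ℓ ^ 4 := pow_le_pow_right₀ hℓ (by norm_num)
  have hXℓ : ℓ ^ 4 ≤ X * ℓ ^ 4 := le_mul_of_one_le_left (by positivity) hX
  have h2L : (L : ℝ) ^ 2 ≤ 4 * (X * ℓ ^ 4) := by
    refine hL.trans ?_
    nlinarith [mul_le_mul_of_nonneg_left hℓ24 (show 0 ≤ X by linarith)]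
  have hQL : (Q : ℝ) ^ 2 * (L : ℝ) ^ 2 ≤ 4 * (X * ℓ ^ 4) := by
    calc (Q : ℝ) ^ 2 * (L : ℝ) ^ 2 ≤ ℓ ^ 2 * (4 * X * ℓ ^ 2) := by gcongr
      _ = 4 * (X * ℓ ^ 4) := by ring
  have hQL1 : (Q : ℝ) ^ 2 * (L : ℝ) ≤ (Q : ℝ) ^ 2 * (L : ℝ) ^ 2 := by gcongr
  have hQA : (Q : ℝ) ^ 4 * A ≤ 8 * δ * (X * ℓ ^ 4) := by
    have h1 : (Q : ℝ) ^ 4 * A * ℓ ≤ 8 * δ * (X * ℓ ^ 4) * ℓ := by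
      calc (Q : ℝ) ^ 4 * A * ℓ = (Q : ℝ) ^ 4 * (A * ℓ) := by ring
        _ ≤ ℓ ^ 4 * (8 * δ * Q * X) := by gcongr
        _ ≤ ℓ ^ 4 * (8 * δ * ℓ * X) := by gcongr
        _ = _ := by ring
    exact le_of_mul_le_mul_right h1 (by linarith)
  have hQδ : (Q : ℝ) ^ 4 * (4 * δ) ≤ 4 * δ * (X * ℓ ^ 4) := by
    have := mul_le_mul_of_nonneg_right (hQ4.trans hXℓ) (show (0 : ℝ) ≤ 4 * δ by positivity)
    linarith
  have hQc : (Q : ℝ) ^ 2 * c ≤ (Q : ℝ) ^ 4 * A + (Q : ℝ) ^ 4 * (4 * δ) + (Q : ℝ) ^ 2 := by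
    have := mul_le_mul_of_nonneg_left hc (show (0 : ℝ) ≤ (Q : ℝ) ^ 2 by positivity)
    linarith [this, show (Q : ℝ) ^ 2 * ((Q : ℝ) ^ 2 * (A + 4 * δ) + 1) =
      (Q : ℝ) ^ 4 * A + (Q : ℝ) ^ 4 * (4 * δ) + (Q : ℝ) ^ 2 by ring]
  push_cast
  nlinarith

/-- With `m` main classes of maximum degree at most `D'`, where `D'` is about `r * Δ / m`, at most
`(1 + 4 / (s + 1)) * Δ` main colours are used. -/
theorem main_count_le {s L Δ m : ℕ} {r η ε : ℝ} (hs : 2 ≤ s) (hr : 1 ≤ r) (hη : 0 < η)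
    (hε : 0 < ε)
    (h1 : (s : ℝ) ≤ r * ((1 - (2 * (s + 1)) ^ 2 * ε) * ((s : ℝ) - 1)))
    (h2 : 1 ≤ r * ((1 - 1 / (s : ℝ)) - ε))
    (h3 : 0 < (1 - 1 / (s : ℝ)) ^ 2 - 4 * ε / η ^ 2)
    (h4 : 1 - 1 / (s : ℝ) ≤ r * ((1 - 1 / (s : ℝ)) ^ 2 - 4 * ε / η ^ 2))
    (h5 : r + η / ((1 - 1 / (s : ℝ)) ^ 2 - 4 * ε / η ^ 2) + ε * (4 * s + 8) ≤
      1 + 4 / ((s + 1 : ℕ) : ℝ))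
    (hm : 0 < m) (hLm : (L : ℝ) ≤ ε * m) (hmΔ : (m : ℝ) ≤ ε * Δ) (hLΔ : L * m ≤ Δ)
    (hεΔ : 1 ≤ ε * Δ) :
    ∃ (D' : ℕ) (ρ τ θ β N' : ℝ), L ≤ D' ∧ 0 ≤ ρ ∧ 0 < θ ∧ 0 < N' ∧
      (s : ℝ) ≤ ρ * (m * (1 - (2 * (s + 1)) ^ 2 * ε) * ((s : ℝ) - 1)) ∧
      1 ≤ ρ * (m * (1 - 1 / (s : ℝ)) - L) ∧
      m * (Δ + ε * (Δ : ℝ) ^ 2) ≤ β * θ ^ 2 ∧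
      N' ≤ m * (1 - 1 / (s : ℝ)) ^ 2 - 2 * β ∧
      1 - 1 / (s : ℝ) ≤ ρ * N' ∧ θ ≤ τ * N' ∧
      ρ * Δ + τ + 4 * (s + 1) + 2 ≤ D' ∧
      ((m * (D' + 1) : ℕ) : ℝ) ≤ (1 + 4 / ((s + 1 : ℕ) : ℝ)) * Δ := by
  have hm0 : (0 : ℝ) < m := by exact_mod_cast hm
  have hΔ0 : (0 : ℝ) < Δ := by
    by_contra! h
    nlinarith
  generalize hn : (1 - 1 / (s : ℝ)) ^ 2 - 4 * ε / η ^ 2 = n at *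
  have hrm : r / m * m = r := by field_simp
  refine ⟨⌈r / m * Δ + η * Δ / (m * n) + 4 * (s + 1) + 2⌉₊, r / m, η * Δ / (m * n), η * Δ,
    2 * m * ε / η ^ 2, m * n, ?_, by positivity, by positivity, by positivity, ?_, ?_, ?_, ?_, ?_,
    ?_, Nat.le_ceil _, ?_⟩
  · have e1 : (L : ℝ) ≤ r / m * Δ := by
      rw [div_mul_eq_mul_div, le_div_iff₀ hm0]
      have : (L : ℝ) * m ≤ Δ := by exact_mod_cast hLΔ
      nlinarith
    have e2 : r / m * Δ ≤ r / m * Δ + η * Δ / (m * n) + 4 * (s + 1) + 2 := by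
      have : 0 ≤ η * Δ / (m * n) := by positivity
      have : (0 : ℝ) ≤ s := by positivity
      linarith
    exact_mod_cast (e1.trans e2).trans (Nat.le_ceil _)
  · refine h1.trans (le_of_eq ?_)
    field_simp
  · have e1 : r * ((1 - 1 / (s : ℝ)) - ε) = r / m * (m * (1 - 1 / (s : ℝ)) - ε * m) := by
      field_simp
    refine h2.trans (e1.le.trans ?_)
    gcongr
  · have e1 : 2 * m * ε / η ^ 2 * (η * Δ) ^ 2 = m * (2 * ε * (Δ : ℝ) ^ 2) := by
      field_simp
    rw [e1]
    apply mul_le_mul_of_nonneg_left _ hm0.le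
    nlinarith
  · rw [← hn]
    apply le_of_eq
    ring
  · refine h4.trans (le_of_eq ?_)
    field_simp
  · apply le_of_eq
    field_simp
  · have e1 := (Nat.ceil_lt_add_one
      (show 0 ≤ r / m * Δ + η * Δ / (m * n) + 4 * (s + 1) + 2 by positivity)).le
    push_cast
    calc (m : ℝ) * (⌈r / m * Δ + η * Δ / (m * n) + 4 * (s + 1) + 2⌉₊ + 1)
        ≤ m * (r / m * Δ + η * Δ / (m * n) + 4 * (s + 1) + 2 + 1 + 1) := by gcongr
      _ = r * Δ + η / n * Δ + m * (4 * s + 8) := by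
        field_simp
        ring
      _ ≤ r * Δ + η / n * Δ + (ε * Δ) * (4 * s + 8) := by gcongr
      _ = (r + η / n + ε * (4 * s + 8)) * Δ := by ring
      _ ≤ _ := by
        push_cast at h5
        gcongr

/-- The bound for all sufficiently large `Δ`, with an explicit constant in the lower-order term. -/
theorem index_le_of_large {δ : ℕ} (h2 : 2 ≤ δ) : ∃ Δ₀ : ℕ, ∀ (V : Type) [Fintype V]
    (G : SimpleGraph V) [DecidableRel G.Adj] (Δ : ℕ), (∀ v, δ ≤ G.degree v) →
    (∀ v, G.degree v ≤ Δ) → Δ₀ ≤ Δ →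
    (inclusionChromaticIndex G : ℝ) ≤ (1 + 4 / (δ : ℝ)) * Δ +
      (42 + 36 * δ) * ((Δ : ℝ) ^ ((2 : ℝ) / 3) * Real.log Δ ^ 4) := by
  classical
  rcases eq_or_lt_of_le h2 with rfl | h3
  · obtain ⟨Δ₀, h⟩ := exists_params 1 le_rfl (ε := 1 / 4) (by norm_num) le_rfl
    refine ⟨Δ₀, fun V _ G _ Δ hdeg hmax hΔ => ?_⟩
    obtain ⟨L, Q, k, T, N, hQp, p1, p2, -, -, -, -, -, p3, p4, p5, p6, p7, p8, -, p9, p10⟩ :=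
      h Δ hΔ
    haveI : Fact Q.Prime := ⟨hQp⟩
    obtain ⟨D, d1, d2, d3⟩ := lower_order_le (N := N) (δ := 2) (Δ := Δ) (Nat.cast_nonneg _)
      p10 p9 p6 p7 (by norm_num at p8 ⊢; exact p8)
    have hmain := index_le_of_params_two hdeg hmax p1 p2 p4 p5 p3 d1 d2
    have hmain' := (Nat.cast_le (α := ℝ)).2 hmain
    push_cast at hmain' d3 ⊢
    linarith
  · obtain ⟨s, rfl⟩ : ∃ s, δ = s + 1 := ⟨δ - 1, by omega⟩
    have hs : 2 ≤ s := by omega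
    obtain ⟨r, η, ε, c1, c2, c3, c4, c5, c6, c7, c8, c9⟩ := exists_constants hs
    obtain ⟨Δ₀, h⟩ := exists_params s (by omega) c3 c4
    refine ⟨Δ₀, fun V _ G _ Δ hdeg hmax hΔ => ?_⟩
    obtain ⟨L, Q, k, T, N, hQp, p1, p2, q1, q2, q3, q4, q5, p3, p4, p5, p6, p7, p8, q6, p9, p10⟩ :=
      h Δ hΔ
    haveI : Fact Q.Prime := ⟨hQp⟩
    obtain ⟨D, d1, d2, d3⟩ := lower_order_le (N := N) (δ := s + 1) (Δ := Δ) (Nat.cast_nonneg _)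
      p10 p9 p6 p7 (by push_cast at p8 ⊢; exact p8)
    obtain ⟨D', ρ, τ, θ, β, N', m1, m2, m3, m4, m5, m6, m7, m8, m9, m10, m11, m12⟩ :=
      main_count_le hs c1 c2 c3 c5 c6 c7 c8 c9 q2 q3 q4 q5 q6
    have hmain := index_le_of_params hs hdeg hmax p1 p2 p4 p5 d1 d2 m1 rfl q1 m2 m3 m4 m5 m6 m7 m8
      m9 m10 m11
    have hmain' := (Nat.cast_le (α := ℝ)).2 hmain
    have hL0 : (0 : ℝ) ≤ L + (L : ℝ) ^ 2 + 1 := by positivity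
    push_cast at hmain' d3 m12 ⊢
    linarith

end IncFree

theorem main_bound_with_constant (δ : ℕ) (h2 : 2 ≤ δ) :
    ∃ C : ℝ, 0 < C ∧ ∀ (V : Type) [Fintype V] (G : SimpleGraph V)
      [DecidableRel G.Adj] (Δ : ℕ),
      G.minDegree = δ → G.maxDegree = Δ → 2 ≤ Δ →
      (inclusionChromaticIndex G : ℝ) ≤
        (1 + 4 / (δ : ℝ)) * Δ + C * (Δ : ℝ) ^ ((2 : ℝ) / 3) * Real.log Δ ^ 4 := by
  classical
  obtain ⟨Δ₀, h⟩ := IncFree.index_le_of_large h2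
  have hlog2 : 0 < Real.log 2 := Real.log_pos (by norm_num)
  refine ⟨(42 + 36 * δ) + (2 * Δ₀ ^ 2 + 1) / Real.log 2 ^ 4, by positivity, ?_⟩
  intro V _ G _ Δ hmin hmax hΔ
  have hdeg : ∀ v, δ ≤ G.degree v := fun v => hmin ▸ G.minDegree_le_degree v
  have hdeg' : ∀ v, G.degree v ≤ Δ := fun v => hmax ▸ G.degree_le_maxDegree v
  have hΔ' : (2 : ℝ) ≤ Δ := by exact_mod_cast hΔ
  have hX : 1 ≤ (Δ : ℝ) ^ ((2 : ℝ) / 3) := Real.one_le_rpow (by linarith) (by norm_num)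
  have hlog : Real.log 2 ≤ Real.log Δ := Real.log_le_log (by norm_num) hΔ'
  have hlog0 : 0 < Real.log Δ := hlog2.trans_le hlog
  rw [mul_assoc, add_mul]
  rcases le_total Δ₀ Δ with hbig | hsmall
  · refine (h V G Δ hdeg hdeg' hbig).trans ?_
    have : 0 ≤ (2 * (Δ₀ : ℝ) ^ 2 + 1) / Real.log 2 ^ 4 *
      ((Δ : ℝ) ^ ((2 : ℝ) / 3) * Real.log Δ ^ 4) := by positivity
    linarith
  -- for small `Δ` the strong colouring bound is absorbed in the constant, as `log Δ ≥ log 2`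
  · have h1 := IncFree.inclusionChromaticIndex_le_strong Δ (fun v => h2.trans (hdeg v)) hdeg'
    have h3 : inclusionChromaticIndex G ≤ 2 * Δ₀ ^ 2 + 1 :=
      h1.trans (by gcongr)
    have h3' : (inclusionChromaticIndex G : ℝ) ≤ 2 * (Δ₀ : ℝ) ^ 2 + 1 := by exact_mod_cast h3
    have h4 : Real.log 2 ^ 4 ≤ (Δ : ℝ) ^ ((2 : ℝ) / 3) * Real.log Δ ^ 4 :=
      (pow_le_pow_left₀ hlog2.le hlog 4).trans (le_mul_of_one_le_left (by positivity) hX)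
    have h5 : 2 * (Δ₀ : ℝ) ^ 2 + 1 ≤ (2 * (Δ₀ : ℝ) ^ 2 + 1) / Real.log 2 ^ 4 *
        ((Δ : ℝ) ^ ((2 : ℝ) / 3) * Real.log Δ ^ 4) := by
      rw [div_mul_eq_mul_div, le_div_iff₀ (by positivity)]
      gcongr
    have h6 : 0 ≤ (1 + 4 / (δ : ℝ)) * Δ + (42 + 36 * δ) *
        ((Δ : ℝ) ^ ((2 : ℝ) / 3) * Real.log Δ ^ 4) := by positivity
    linarith
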